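/- arXiv:2511.08099 — 5 statements merged into one kernel-verified Lean document; each statement's English description precedes it below -/
import Mathlib

section
/- Let k ∈ {7, 8, 10, 11, 12, 13} and let a ≥ 10864 be a positive integer with k·a² + 4 = r² a perfect square. Set b = ka and let c be one of c₁⁺ = a + b + 2r, c₂⁺ = (ab+4)(a+b+2r) − 4r, c₂⁻ = (ab+4)(a+b−2r) + 4r; let s, t be the positive integers with ac + 4 = s² and bc + 4 = t². If P_l = Q_m has a solution (l, m) with m ≥ 3, then l / log(e·l) < 3.34·10¹³ · (log(8.09·c²))² when the solution is of Type 1, and l / log(e·l) < 6.63·10¹³ · (log(8.09·c²))² when the solution is of Type 2. -/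
section S1
open Finset

/-- The Pade polynomial -/
def pS {K : Type*} [CommRing K] (j M : ℕ) (y A : K) : K :=
  ∑ i ∈ range (j+1), ((2*j-i).choose j : K) * (M.choose i : K) * y^i * A^(j-i)

lemma ring_choose_neg_nat (q p : ℕ) :
    Ring.choose (-((q:ℤ)+1)) p = (-1)^p * ((q+p).choose p : ℤ) := by
  rw [Ring.choose_neg]
  have : (q:ℤ)+1+p-1 = ((q+p:ℕ):ℤ) := by push_cast; ring
  rw [this, Ring.choose_natCast]
  simp [Units.smul_def, Int.coe_negOnePow_natCast]

lemma vander (j n : ℕ) :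
    ∑ i ∈ range (j+1), (-1:ℤ)^(j-i) * ((2*j-i).choose j : ℤ) * (n.choose i : ℤ)
      = Ring.choose ((n:ℤ) - j - 1) j := by
  have h : (n:ℤ) - j - 1 = (n:ℤ) + (-((j:ℤ)+1)) := by ring
  rw [h, Ring.add_choose_eq _ (Commute.all _ _), Finset.Nat.sum_antidiagonal_eq_sum_range_succ_mk]
  apply sum_congr rfl
  intro i hi
  have hi : i ≤ j := by simpa [Nat.lt_succ_iff] using hi
  rw [ring_choose_neg_nat, Ring.choose_natCast]
  have h2 : (j + (j-i)).choose (j-i) = (2*j-i).choose j := by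
    rw [show 2*j-i = j+(j-i) by omega]
    exact (Nat.choose_symm_add).symm
  simp only [h2]
  ring

lemma vander_lo (j n : ℕ) (h : n ≤ j) :
    ∑ i ∈ range (j+1), (-1:ℤ)^(j-i) * ((2*j-i).choose j : ℤ) * (n.choose i : ℤ)
      = (-1)^j * ((2*j-n).choose j : ℤ) := by
  rw [vander]
  have : (n:ℤ) - j - 1 = -(((j-n:ℕ):ℤ)+1) := by push_cast [h]; ring
  rw [this, ring_choose_neg_nat, show j - n + j = 2*j-n by omega]

lemma vander_hi (j n : ℕ) (h : j < n) :
    ∑ i ∈ range (j+1), (-1:ℤ)^(j-i) * ((2*j-i).choose j : ℤ) * (n.choose i : ℤ)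
      = ((n-j-1).choose j : ℤ) := by
  rw [vander]
  have : (n:ℤ) - j - 1 = ((n-j-1:ℕ):ℤ) := by omega
  rw [this, Ring.choose_natCast]

/-- remainder -/
def rS {K : Type*} [CommRing K] (j M : ℕ) (y B : K) : K :=
  ∑ n ∈ range (M+1), (M.choose n : K) * ((n-j-1).choose j : K) * y^n * B^(M-n)

lemma binom_shift {K : Type*} [CommRing K] (M i : ℕ) (hi : i ≤ M) (y B : K) :
    (M.choose i : K) * y^i * (y+B)^(M-i)
      = ∑ n ∈ range (M+1), (M.choose n : K) * (n.choose i : K) * y^n * B^(M-n) := by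
  rw [add_pow, mul_sum]
  have hM : M + 1 = i + (M - i + 1) := by omega
  conv_rhs => rw [hM, Finset.sum_range_add]
  have h0 : ∑ x ∈ range i, (M.choose x : K) * (x.choose i : K) * y^x * B^(M-x) = 0 := by
    apply sum_eq_zero
    intro x hx
    have hx' : x < i := by simpa using hx
    rw [Nat.choose_eq_zero_of_lt hx']; simp
  rw [h0, zero_add]
  apply sum_congr rfl
  intro x hx
  have hx' : x ≤ M - i := by simpa [Nat.lt_succ_iff] using hx
  have h1 : (M.choose (i+x) : K) * ((i+x).choose i : K) = (M.choose i : K) * ((M-i).choose x : K) := by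
    have := @Nat.choose_mul M (i+x) i (by omega)
    rw [show i + x - i = x by omega] at this
    rw [← Nat.cast_mul, ← Nat.cast_mul, this]
  rw [h1, show M - i - x = M - (i+x) by omega, pow_add]
  ring

lemma pade_identity {K : Type*} [CommRing K] (j m : ℕ) (hj : 1 ≤ j) (A B : K) :
    A^m * pS j (m+j) (-(A-B)) A - B^m * pS j (m+j) (A-B) B = (-1)^j * rS j (m+j) (A-B) B := by
  set M := m+j with hM
  set y := A - B with hy
  have hA : A = y + B := by rw [hy]; ring
  have e1 : A^m * pS j M (-y) A = ∑ n ∈ range (M+1), (-1:K)^j * ((M.choose n : K) * y^n * B^(M-n)) *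
      ((∑ i ∈ range (j+1), (-1:ℤ)^(j-i) * ((2*j-i).choose j : ℤ) * (n.choose i : ℤ) : ℤ) : K) := by
    have e0 : A^m * pS j M (-y) A = ∑ i ∈ range (j+1), ∑ n ∈ range (M+1),
        ((2*j-i).choose j : K) * (-1)^i * ((M.choose n : K) * (n.choose i : K) * y^n * B^(M-n)) := by
      unfold pS
      rw [mul_sum]
      apply sum_congr rfl
      intro i hi
      have hi : i ≤ j := by simpa [Nat.lt_succ_iff] using hi
      rw [← mul_sum, ← binom_shift M i (by omega), ← hA, neg_pow y,
        show M - i = m + (j - i) by omega, pow_add]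
      ring
    rw [e0, sum_comm]
    apply sum_congr rfl
    intro n _
    push_cast
    rw [mul_sum]
    apply sum_congr rfl
    intro i hi
    have hi : i ≤ j := by simpa [Nat.lt_succ_iff] using hi
    have : (-1:K)^j * (-1)^(j-i) = (-1)^i := by
      rw [← pow_add, show j + (j-i) = i + 2*(j-i) by omega, pow_add, pow_mul]; simp
    rw [← this]; ring
  have e2 : B^m * pS j M y B = ∑ n ∈ range (M+1), (if n ≤ j then ((2*j-n).choose j : K) * (M.choose n : K) * y^n * B^(M-n) else 0) := by
    rw [show M + 1 = (j+1) + m by omega, sum_range_add]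
    have h0 : ∑ x ∈ range m, (if j+1+x ≤ j then ((2*j-(j+1+x)).choose j : K) * (M.choose (j+1+x) : K) * y^(j+1+x) * B^(M-(j+1+x)) else 0) = 0 := by
      apply sum_eq_zero
      intro x _
      rw [if_neg (by omega)]
    rw [h0, add_zero]
    unfold pS
    rw [mul_sum]
    apply sum_congr rfl
    intro i hi
    have hi : i ≤ j := by simpa [Nat.lt_succ_iff] using hi
    rw [if_pos hi, show M - i = m + (j - i) by omega, pow_add]
    ring
  rw [e1, e2, ← sum_sub_distrib]
  unfold rS
  rw [mul_sum]
  apply sum_congr rfl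
  intro n _
  by_cases h : n ≤ j
  · rw [if_pos h, vander_lo j n h, show n - j - 1 = 0 by omega, Nat.choose_eq_zero_of_lt (by omega : 0 < j)]
    push_cast
    have : (-1:K)^j * (-1)^j = 1 := by rw [← pow_add, ← two_mul, pow_mul]; simp
    linear_combination ((M.choose n : K) * y^n * B^(M-n)) * ((2*j-n).choose j : K) * this
  · rw [if_neg h, vander_hi j n (by omega)]
    push_cast
    ring
end S1

section S2
open Finset

lemma choose_wt (N j : ℕ) (hj : j ≤ N) (v : ℝ) (h0 : 0 ≤ v) (h1 : v ≤ 1) :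
    (N.choose j : ℝ) * (1-v)^j * v^(N-j) ≤ 1 := by
  have h := add_pow (1-v) v N
  rw [show 1 - v + v = 1 by ring, one_pow] at h
  have := Finset.single_le_sum (f := fun i => (1-v)^i * v^(N-i) * (N.choose i : ℝ))
    (s := range (N+1)) (fun i _ => by have : 0 ≤ 1 - v := by linarith
                                      positivity) (Finset.mem_range.mpr (Nat.lt_succ_of_le hj))
  calc _ = (1-v)^j * v^(N-j) * (N.choose j : ℝ) := by ring
    _ ≤ _ := this
    _ = 1 := h.symm

lemma pS_bound (j M : ℕ) (hjM : j ≤ M) (y A Y ξ v : ℝ) (hY : 0 ≤ Y) (hξ : 0 ≤ ξ)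
    (hy : |y| ≤ ξ * Y) (hA : |A| ≤ Y) (h0 : 0 < v) (h1 : v < 1) :
    |pS j M y A| ≤ Y^j * ((v*(1-v))⁻¹)^j * (1+ξ*v)^M := by
  have hv : 0 < v*(1-v) := mul_pos h0 (by linarith)
  unfold pS
  calc |∑ i ∈ range (j+1), ((2*j-i).choose j : ℝ) * (M.choose i : ℝ) * y^i * A^(j-i)|
      ≤ ∑ i ∈ range (j+1), |((2*j-i).choose j : ℝ) * (M.choose i : ℝ) * y^i * A^(j-i)| :=
        Finset.abs_sum_le_sum_abs _ _
    _ ≤ ∑ i ∈ range (j+1), Y^j * ((v*(1-v))⁻¹)^j * ((ξ*v)^i * 1^(M-i) * (M.choose i : ℝ)) := by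
        apply Finset.sum_le_sum
        intro i hi
        have hi : i ≤ j := by simpa [Nat.lt_succ_iff] using hi
        rw [abs_mul, abs_mul, abs_mul, abs_pow, abs_pow, Nat.abs_cast, Nat.abs_cast]
        have w := choose_wt (2*j-i) j (by omega) v h0.le h1.le
        rw [show 2*j-i-j = j-i by omega] at w
        have w2 : ((2*j-i).choose j : ℝ) ≤ ((v*(1-v))⁻¹)^j * v^i := by
          rw [inv_pow, inv_mul_eq_div, le_div_iff₀ (by positivity)]
          calc ((2*j-i).choose j : ℝ) * (v*(1-v))^j
              = (((2*j-i).choose j : ℝ) * (1-v)^j * v^(j-i)) * v^i := by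
                rw [mul_pow]
                have : v^j = v^(j-i)*v^i := by rw [← pow_add]; congr 1; omega
                rw [this]; ring
            _ ≤ 1 * v^i := by gcongr
            _ = v^i := one_mul _
        calc ((2*j-i).choose j : ℝ) * (M.choose i : ℝ) * |y|^i * |A|^(j-i)
            ≤ (((v*(1-v))⁻¹)^j * v^i) * (M.choose i : ℝ) * (ξ*Y)^i * Y^(j-i) := by gcongr
          _ = Y^j * ((v*(1-v))⁻¹)^j * ((ξ*v)^i * 1^(M-i) * (M.choose i : ℝ)) := by
              have : Y^j = Y^(j-i)*Y^i := by rw [← pow_add]; congr 1; omega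
              rw [this, mul_pow, mul_pow ξ v, one_pow]; ring
    _ ≤ ∑ i ∈ range (M+1), Y^j * ((v*(1-v))⁻¹)^j * ((ξ*v)^i * 1^(M-i) * (M.choose i : ℝ)) := by
        apply Finset.sum_le_sum_of_subset_of_nonneg
        · intro x hx; simp at hx ⊢; omega
        · intro i _ _; positivity
    _ = _ := by
        rw [← mul_sum, ← add_pow]; ring

lemma rS_upper (j M : ℕ) (hj : 0 < j) (y B w ζ : ℝ) (hB : 0 < B) (hζ : 0 < ζ) (hw0 : 0 < w) (hw1 : w < 1)
    (hy0 : 0 ≤ y) (hy : y ≤ w*ζ*B) :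
    rS j M y B ≤ ((1-w)⁻¹)^j * (y/(ζ*B))^(2*j+1) * ((1+ζ)*B)^M := by
  have h1w : 0 < 1 - w := by linarith
  unfold rS
  have e : ((1+ζ)*B)^M = ∑ n ∈ range (M+1), (ζ*B)^n * B^(M-n) * (M.choose n : ℝ) := by
    rw [← add_pow]; ring
  rw [e, mul_sum]
  apply Finset.sum_le_sum
  intro n _
  by_cases hn : n ≤ 2*j
  · rw [Nat.choose_eq_zero_of_lt (by omega : n - j - 1 < j)]
    simp; positivity
  · have hw' := choose_wt (n-j-1) j (by omega) w hw0.le hw1.le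
    rw [show n-j-1-j = n-(2*j+1) by omega] at hw'
    have e2 : y^n = y^(2*j+1) * y^(n-(2*j+1)) := by rw [← pow_add]; congr 1; omega
    have e3 : (ζ*B)^n = (ζ*B)^(2*j+1) * (ζ*B)^(n-(2*j+1)) := by rw [← pow_add]; congr 1; omega
    have h3 : y^(n-(2*j+1)) ≤ w^(n-(2*j+1)) * (ζ*B)^(n-(2*j+1)) := by
      rw [← mul_pow, ← mul_assoc]; gcongr
    have h4 : ((n-j-1).choose j : ℝ) * w^(n-(2*j+1)) ≤ ((1-w)⁻¹)^j := by
      rw [inv_pow, ← one_div, le_div_iff₀ (by positivity)]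
      calc _ = _ := by ring
        _ ≤ 1 := hw'
    calc (M.choose n : ℝ) * ((n-j-1).choose j : ℝ) * y^n * B^(M-n)
        ≤ (M.choose n : ℝ) * ((n-j-1).choose j : ℝ) * (y^(2*j+1) * (w^(n-(2*j+1)) * (ζ*B)^(n-(2*j+1)))) * B^(M-n) := by
          rw [e2]; gcongr
      _ = (M.choose n : ℝ) * (((n-j-1).choose j : ℝ) * w^(n-(2*j+1))) * (y^(2*j+1) * (ζ*B)^(n-(2*j+1))) * B^(M-n) := by ring
      _ ≤ (M.choose n : ℝ) * ((1-w)⁻¹)^j * (y^(2*j+1) * (ζ*B)^(n-(2*j+1))) * B^(M-n) := by gcongr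
      _ = _ := by
          rw [e3, div_pow]; field_simp

lemma rS_lower (j M : ℕ) (y B : ℝ) (hB : 0 < B) (hy0 : 0 ≤ y) (hj : 2*j+1 ≤ M) :
    y^(2*j+1) * B^(M-(2*j+1)) ≤ rS j M y B := by
  unfold rS
  have h := Finset.single_le_sum (f := fun n => (M.choose n : ℝ) * ((n-j-1).choose j : ℝ) * y^n * B^(M-n))
    (s := range (M+1)) (fun i _ => by positivity) (Finset.mem_range.mpr (Nat.lt_succ_of_le hj))
  refine le_trans ?_ h
  simp only [show 2*j+1-j-1 = j by omega, Nat.choose_self, Nat.cast_one, mul_one]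
  have : (1:ℝ) ≤ (M.choose (2*j+1) : ℝ) := by
    exact_mod_cast Nat.choose_pos hj
  have h0 : 0 ≤ y^(2*j+1) * B^(M-(2*j+1)) := by positivity
  nlinarith
end S2

section S3
def sg (b : Bool) : ℝ := if b then 1 else -1

lemma sg_sq (b : Bool) : sg b * sg b = 1 := by cases b <;> simp [sg]

lemma isInt_sg (b : Bool) : IsIntegral ℤ (sg b) := by
  cases b
  · simp only [sg]; exact (isIntegral_one).neg
  · simp only [sg]; exact isIntegral_one

lemma indep1 (k : ℤ) (κ : ℝ) (hκ : κ^2 = k) (hk : ¬ IsSquare k) (x y : ℚ)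
    (h : (x:ℝ) + y*κ = 0) : x = 0 ∧ y = 0 := by
  by_cases hy : y = 0
  · subst hy; simp at h; exact ⟨by exact_mod_cast h, rfl⟩
  · exfalso
    apply hk
    rw [← Rat.isSquare_intCast_iff]
    have hy' : (y:ℝ) ≠ 0 := by exact_mod_cast hy
    have : κ = ((-x/y : ℚ) : ℝ) := by push_cast; field_simp; linarith
    refine ⟨-x/y, ?_⟩
    rw [this] at hκ
    have : ((-x/y : ℚ))^2 = (k:ℚ) := by exact_mod_cast hκ
    rw [← this]; ring

lemma indep2 (k n : ℤ) (κ Δ : ℝ) (hκ : κ^2 = k) (hΔ : Δ^2 = n) (hk : ¬ IsSquare k)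
    (hn : ¬ IsSquare n) (hkn : ¬ IsSquare (k*n)) (x y z w : ℚ)
    (h : (x:ℝ) + y*κ + z*Δ + w*κ*Δ = 0) : x = 0 ∧ y = 0 ∧ z = 0 ∧ w = 0 := by
  by_cases hz : z = 0 ∧ w = 0
  · obtain ⟨rfl, rfl⟩ := hz
    simp at h
    obtain ⟨h1, h2⟩ := indep1 k κ hκ hk x y h
    exact ⟨h1, h2, rfl, rfl⟩
  · exfalso
    have hne : (z:ℝ) + w*κ ≠ 0 := fun h0 => hz (indep1 k κ hκ hk z w h0)
    have hne' : (z:ℝ) + (-w:ℚ)*κ ≠ 0 := fun h0 => hz (by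
      have := indep1 k κ hκ hk z (-w) h0
      exact ⟨this.1, by simpa using this.2⟩)
    have hN : ((z^2 - k*w^2 : ℚ):ℝ) ≠ 0 := by
      have := mul_ne_zero hne hne'
      push_cast at this ⊢
      intro h0; apply this
      linear_combination h0 - (w:ℝ)^2*hκ
    set N : ℚ := z^2 - k*w^2 with hNdef
    have hNd : (N:ℝ) = z^2 - k*w^2 := by rw [hNdef]; push_cast; ring
    have hD : Δ = ((-(x*z - k*y*w)/N : ℚ):ℝ) + ((-(y*z - x*w)/N : ℚ):ℝ)*κ := by
      push_cast
      field_simp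
      rw [hNd]
      linear_combination (z - w*κ)*h + ((w:ℝ)^2*Δ + w*y)*hκ
    set p : ℚ := -(x*z - k*y*w)/N
    set q : ℚ := -(y*z - x*w)/N
    have h2 : ((p^2 + k*q^2 - n : ℚ):ℝ) + ((2*p*q:ℚ):ℝ)*κ = 0 := by
      push_cast
      rw [hD] at hΔ
      linear_combination hΔ - (q:ℝ)^2*hκ
    obtain ⟨h3, h4⟩ := indep1 k κ hκ hk _ _ h2
    have h5 : p = 0 ∨ q = 0 := by simpa using h4
    rcases h5 with h5 | h5
    · apply hkn
      rw [← Rat.isSquare_intCast_iff]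
      refine ⟨k*q, ?_⟩
      rw [h5] at h3
      push_cast
      linear_combination -(k:ℚ)*h3
    · apply hn
      rw [← Rat.isSquare_intCast_iff]
      refine ⟨p, ?_⟩
      rw [h5] at h3
      linear_combination -h3

/-- the ring of conjugate vectors -/
def Good (k n : ℤ) (κ Δ : ℝ) (hκ : κ^2 = k) (hΔ : Δ^2 = n) : Subring (Bool × Bool → ℝ) where
  carrier := {v | (∀ ε, IsIntegral ℤ (v ε)) ∧ ∃ x y z w : ℚ, ∀ ε : Bool × Bool,
    v ε = x + sg ε.1 * y * κ + sg ε.2 * z * Δ + sg ε.1 * sg ε.2 * w * κ * Δ}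
  mul_mem' := by
    rintro u v ⟨hu, x, y, z, w, h⟩ ⟨hv, x', y', z', w', h'⟩
    refine ⟨fun ε => (hu ε).mul (hv ε), x*x'+k*y*y'+n*z*z'+k*n*w*w', x*y'+y*x'+n*z*w'+n*w*z',
      x*z'+z*x'+k*y*w'+k*w*y', x*w'+w*x'+y*z'+z*y', fun ε => ?_⟩
    simp only [Pi.mul_apply, h ε, h' ε]
    push_cast
    rw [← hκ, ← hΔ]
    rcases ε with ⟨b1, b2⟩
    cases b1 <;> cases b2 <;> simp only [sg] <;> norm_num <;> ring
  add_mem' := by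
    rintro u v ⟨hu, x, y, z, w, h⟩ ⟨hv, x', y', z', w', h'⟩
    refine ⟨fun ε => (hu ε).add (hv ε), x+x', y+y', z+z', w+w', fun ε => ?_⟩
    simp only [Pi.add_apply, h ε, h' ε]
    push_cast; ring
  one_mem' := ⟨fun _ => isIntegral_one, 1, 0, 0, 0, fun _ => by simp⟩
  zero_mem' := ⟨fun _ => isIntegral_zero, 0, 0, 0, 0, fun _ => by simp⟩
  neg_mem' := by
    rintro u ⟨hu, x, y, z, w, h⟩
    refine ⟨fun ε => (hu ε).neg, -x, -y, -z, -w, fun ε => ?_⟩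
    simp only [Pi.neg_apply, h ε]
    push_cast; ring

lemma good_norm (k n : ℤ) (κ Δ : ℝ) (hκ : κ^2 = k) (hΔ : Δ^2 = n) (hk : ¬ IsSquare k)
    (hn : ¬ IsSquare n) (hkn : ¬ IsSquare (k*n)) (v : Bool × Bool → ℝ)
    (hv : v ∈ Good k n κ Δ hκ hΔ) (h0 : v (true, true) ≠ 0) :
    1 ≤ |v (true,true) * v (true,false) * v (false,true) * v (false,false)| := by
  obtain ⟨hi, x, y, z, w, h⟩ := hv
  have hne : ∀ ε, v ε ≠ 0 := by
    intro ε hε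
    apply h0
    rw [h ε] at hε
    have : x = 0 ∧ y = 0 ∧ z = 0 ∧ w = 0 := by
      rcases ε with ⟨b1, b2⟩
      cases b1 <;> cases b2 <;> simp only [sg] at hε
      · have := indep2 k n κ Δ hκ hΔ hk hn hkn x (-y) (-z) w (by push_cast; norm_num at hε; linarith)
        simpa using this
      · have := indep2 k n κ Δ hκ hΔ hk hn hkn x (-y) (z) (-w) (by push_cast; norm_num at hε; linarith)
        simpa using this
      · have := indep2 k n κ Δ hκ hΔ hk hn hkn x (y) (-z) (-w) (by push_cast; norm_num at hε; linarith)
        simpa using this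
      · have := indep2 k n κ Δ hκ hΔ hk hn hkn x (y) (z) (w) (by norm_num at hε; linarith)
        simpa using this
    obtain ⟨rfl, rfl, rfl, rfl⟩ := this
    rw [h]; simp
  have hprod : v (true,true) * v (true,false) * v (false,true) * v (false,false)
      = (((x^2+k*y^2-n*(z^2+k*w^2))^2 - k*(2*x*y-2*n*z*w)^2 : ℚ) : ℝ) := by
    rw [h, h, h, h]
    simp only [sg]
    push_cast
    rw [← hκ, ← hΔ]
    norm_num
    ring
  have hint : IsIntegral ℤ (v (true,true) * v (true,false) * v (false,true) * v (false,false)) :=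
    (((hi _).mul (hi _)).mul (hi _)).mul (hi _)
  rw [hprod] at hint
  set q : ℚ := (x^2+k*y^2-n*(z^2+k*w^2))^2 - k*(2*x*y-2*n*z*w)^2
  have hq : IsIntegral ℤ q := by
    have : IsIntegral ℤ (algebraMap ℚ ℝ q) := hint
    exact (isIntegral_algebraMap_iff (algebraMap ℚ ℝ).injective).mp this
  obtain ⟨N, hN⟩ := IsIntegrallyClosed.isIntegral_iff.mp hq
  have hqN : q = (N:ℚ) := by rw [← hN]; simp
  have hne2 := mul_ne_zero (mul_ne_zero (mul_ne_zero (hne (true,true)) (hne (true,false))) (hne (false,true))) (hne (false,false))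
  rw [hprod, hqN] at hne2
  rw [hprod, hqN]
  have : N ≠ 0 := by rintro rfl; simp at hne2
  have := Int.one_le_abs this
  have : (1:ℝ) ≤ |(N:ℝ)| := by exact_mod_cast this
  simpa using this
end S3

section S4
open Finset

/-- the auxiliary algebraic integer -/
def Th {K : Type*} [CommRing K] (e j m l : ℕ) (σ η x z a : K) (κ τ τi Δ β : K) : K :=
  pS j (m+j) (-((κ+σ) - κ*β*τ^e)) (κ+σ) * ((κ+σ)^m * (κ*(x*Δ+z*a)))
  - pS j (m+j) ((κ+σ) - κ*β*τ^e) (κ*β*τ^e) * (κ^m * (2*Δ*(κ+η)) * (τ^(e*m)*τi^l))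

lemma pS_apply {ι : Type*} (j M : ℕ) (y A : ι → ℝ) (i : ι) :
    (pS j M y A) i = pS j M (y i) (A i) := by
  simp [pS, Finset.sum_apply]

lemma pS_mem {ι : Type*} (S : Subring (ι → ℝ)) (j M : ℕ) (y A : ι → ℝ) (hy : y ∈ S) (hA : A ∈ S) :
    pS j M y A ∈ S := by
  unfold pS
  apply Subring.sum_mem
  intro i _
  exact mul_mem (mul_mem (mul_mem (natCast_mem _ _) (natCast_mem _ _)) (pow_mem hy _)) (pow_mem hA _)

lemma Th_mem {ι : Type*} (S : Subring (ι → ℝ)) (e j m l : ℕ) (σ η x z a κ τ τi Δ β : ι → ℝ)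
    (h1 : σ ∈ S) (h2 : η ∈ S) (h3 : x ∈ S) (h4 : z ∈ S) (h5 : a ∈ S) (h6 : κ ∈ S) (h7 : τ ∈ S)
    (h8 : τi ∈ S) (h9 : Δ ∈ S) (h10 : β ∈ S) : Th e j m l σ η x z a κ τ τi Δ β ∈ S := by
  have hA : κ + σ ∈ S := add_mem h6 h1
  have hB : κ*β*τ^e ∈ S := mul_mem (mul_mem h6 h10) (pow_mem h7 _)
  have h2' : (2 : ι → ℝ) ∈ S := ofNat_mem S 2
  unfold Th
  refine sub_mem (mul_mem (pS_mem _ _ _ _ _ (neg_mem (sub_mem hA hB)) hA)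
    (mul_mem (pow_mem hA _) (mul_mem h6 (add_mem (mul_mem h3 h9) (mul_mem h4 h5)))))
    (mul_mem (pS_mem _ _ _ _ _ (sub_mem hA hB) hB)
      (mul_mem (mul_mem (pow_mem h6 _) (mul_mem (mul_mem h2' h9) (add_mem h6 h2)))
        (mul_mem (pow_mem h7 _) (pow_mem h8 _))))

lemma Th_apply {ι : Type*} (e j m l : ℕ) (σ η x z a κ τ τi Δ β : ι → ℝ) (i : ι) :
    (Th e j m l σ η x z a κ τ τi Δ β) i
      = Th e j m l (σ i) (η i) (x i) (z i) (a i) (κ i) (τ i) (τi i) (Δ i) (β i) := by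
  simp [Th, pS_apply]

lemma isInt_of_quad (r : ℤ) (x : ℝ) (h : x^2 - r*x + 1 = 0) : IsIntegral ℤ x := by
  refine ⟨Polynomial.X^2 - Polynomial.C r * Polynomial.X + Polynomial.C 1, ?_, ?_⟩
  · monicity!
  · rw [← Polynomial.aeval_def]
    simp
    exact h

lemma isInt_of_sq (n : ℤ) (x : ℝ) (h : x^2 = n) : IsIntegral ℤ x := by
  have : IsIntegral ℤ (x^2) := by rw [h]; exact isIntegral_algebraMap (A := ℝ) (R := ℤ) (x := n)
  exact IsIntegral.of_pow (by norm_num) this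

lemma Th_norm (k n r s a σ η x z : ℤ) (κ Δ : ℝ) (hκ : κ^2 = k) (hΔ : Δ^2 = n) (hk : ¬ IsSquare k)
    (hn : ¬ IsSquare n) (hkn : ¬ IsSquare (k*n)) (hr : k*a^2+4 = r^2) (hs : n + 4 = s^2)
    (e j m l : ℕ)
    (h0 : Th e j m l (σ:ℝ) η x z a κ ((r-a*κ)/2) ((r+a*κ)/2) Δ ((s+Δ)/2) ≠ 0) :
    1 ≤ |Th e j m l (σ:ℝ) η x z a κ ((r-a*κ)/2) ((r+a*κ)/2) Δ ((s+Δ)/2)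
      * Th e j m l (σ:ℝ) η x z a κ ((r-a*κ)/2) ((r+a*κ)/2) (-Δ) ((s-Δ)/2)
      * Th e j m l (σ:ℝ) η x z a (-κ) ((r+a*κ)/2) ((r-a*κ)/2) Δ ((s+Δ)/2)
      * Th e j m l (σ:ℝ) η x z a (-κ) ((r+a*κ)/2) ((r-a*κ)/2) (-Δ) ((s-Δ)/2)| := by
  set S := Good k n κ Δ hκ hΔ
  have hrR : (k:ℝ)*a^2+4 = r^2 := by exact_mod_cast hr
  have hsR : (n:ℝ)+4 = s^2 := by exact_mod_cast hs
  let κv : Bool × Bool → ℝ := fun ε => sg ε.1 * κ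
  let τv : Bool × Bool → ℝ := fun ε => (r - a*(sg ε.1 * κ))/2
  let τw : Bool × Bool → ℝ := fun ε => (r + a*(sg ε.1 * κ))/2
  let Δv : Bool × Bool → ℝ := fun ε => sg ε.2 * Δ
  let βv : Bool × Bool → ℝ := fun ε => (s + sg ε.2 * Δ)/2
  have hI : ∀ q : ℤ, ((q : ℤ) : Bool × Bool → ℝ) ∈ S := fun q => intCast_mem S q
  have m1 : κv ∈ S := ⟨fun ε => (isInt_sg _).mul (isInt_of_sq k κ hκ), 0, 1, 0, 0, fun ε => by simp [κv]⟩
  have m2 : Δv ∈ S := ⟨fun ε => (isInt_sg _).mul (isInt_of_sq n Δ hΔ), 0, 0, 1, 0, fun ε => by simp [Δv]⟩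
  have m3 : τv ∈ S := ⟨fun ε => isInt_of_quad r _ (by
      have := sg_sq ε.1
      simp only [τv]
      linear_combination (1/4:ℝ)*a^2*κ^2*this + (1/4:ℝ)*a^2*hκ + (1/4:ℝ)*hrR), r/2, -a/2, 0, 0, fun ε => by simp [τv]; ring⟩
  have m4 : τw ∈ S := ⟨fun ε => isInt_of_quad r _ (by
      have := sg_sq ε.1
      simp only [τw]
      linear_combination (1/4:ℝ)*a^2*κ^2*this + (1/4:ℝ)*a^2*hκ + (1/4:ℝ)*hrR), r/2, a/2, 0, 0, fun ε => by simp [τw]; ring⟩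
  have m5 : βv ∈ S := ⟨fun ε => isInt_of_quad s _ (by
      have := sg_sq ε.2
      simp only [βv]
      linear_combination (1/4:ℝ)*Δ^2*this + (1/4:ℝ)*hΔ + (1/4:ℝ)*hsR), s/2, 0, 1/2, 0, fun ε => by simp [βv]; ring⟩
  have hmem := Th_mem S e j m l _ _ _ _ _ _ _ _ _ _ (hI σ) (hI η) (hI x) (hI z) (hI a) m1 m3 m4 m2 m5
  have hfin := good_norm k n κ Δ hκ hΔ hk hn hkn _ hmem
  simp only [Th_apply, κv, τv, τw, Δv, βv, sg, Pi.intCast_apply, if_true, one_mul, Bool.false_eq_true, if_false, neg_one_mul, mul_neg, sub_neg_eq_add, ← sub_eq_add_neg] at hfin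
  exact hfin h0
end S4

section S5
lemma geom (k U U' X G H L : ℝ) (hL : L = 1000001/1000000) (hk7 : 7 ≤ k) (hk13 : k ≤ 13)
    (hU : 0 < U) (hU' : 0 < U') (hUU : U*U' = k-1) (hX : 0 < X)
    (hX2 : k*X ≤ 6.54e-10*U^2) (hH : 0 < H) (hHG : H < G) (hGH : G*H = k*X)
    (hsum : G + H = U + U'*X) :
    G < U ∧ U ≤ L*G ∧ X ≤ U*(U-G) ∧ U*(U-G) ≤ L*X ∧ U*H ≤ L*(k*X) ∧ H < U ∧ U'*X < G := by
  have hG : 0 < G := hH.trans hHG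
  have hprod : (U-G)*(U-H) = X := by
    linear_combination - U*hsum + hGH - X*hUU
  have hUX : U'*X*U ≤ 6.54e-10*U^2 := by nlinarith
  have hUX' : U'*X ≤ 6.54e-10*U := by
    by_contra h; push Not at h; nlinarith
  have hG2 : U < 2*G := by nlinarith [mul_pos hU' hX]
  have hHs : H ≤ 2*6.54e-10*U := by
    by_contra h; push Not at h
    nlinarith [mul_lt_mul'' hG2 h hU.le (by positivity)]
  have hHU : H < U := by nlinarith
  have hGU : G < U := by
    by_contra h; push Not at h
    have : (U-G)*(U-H) ≤ 0 := mul_nonpos_of_nonpos_of_nonneg (by linarith) (by linarith)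
    linarith
  have hy : 0 < U - G := by linarith
  have h3 : X ≤ U*(U-G) := by nlinarith
  have h4 : U*(U-G) ≤ L*X := by
    have : (U-G)*(U*(1-2*6.54e-10)) ≤ X := by
      rw [← hprod]
      apply mul_le_mul_of_nonneg_left _ hy.le
      linarith
    have h1 : 0 ≤ U*(U-G) := by positivity
    rw [hL]
    nlinarith
  have h2 : U ≤ L*G := by
    have hXs : L*X ≤ 1e-9*U^2 := by rw [hL]; nlinarith
    have : U - G ≤ 1e-9*U := by
      by_contra h; push Not at h
      nlinarith
    rw [hL]; linarith
  refine ⟨hGU, h2, h3, h4, ?_, hHU, ?_⟩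
  · calc U*H ≤ (L*G)*H := by gcongr
      _ = L*(k*X) := by rw [mul_assoc, hGH]
  · linarith

lemma numA (k z L : ℝ) (hL : L = 1000001/1000000) (hk7 : 7 ≤ k) (hk13 : k ≤ 13) (hz : 0 < z)
    (hkz : k*z ≤ 6.54e-10) :
    ((16/3)^2)^3 * ((5/4)^2)^10 * (L*k)^7 * (L*(k+1/2))^10 * 4^3 * ((10000/9999)^3 * ((L^2/(3/2))^2*z^2)^3 * (5/2)^10)
      ≤ 1/2 * z^3 := by
  have h1 : (k*z)^3 ≤ (6.54e-10)^3 := by gcongr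
  have h2 : k^4 ≤ 13^4 := by gcongr
  have h3 : (k+1/2)^10 ≤ (13+1/2)^10 := by gcongr
  have h4 : k^4 * ((k*z)^3 * (k+1/2)^10) ≤ 13^4 * ((6.54e-10)^3 * (13+1/2)^10) := by gcongr
  have : 0 < z^3 := by positivity
  calc _ = (((16/3)^2)^3 * ((5/4)^2)^10 * L^7*L^10*4^3*(10000/9999)^3*((L^2/(3/2))^2)^3*(5/2)^10) * (k^4 * ((k*z)^3 * (k+1/2)^10)) * z^3 := by ring
    _ ≤ (((16/3)^2)^3 * ((5/4)^2)^10 * L^7*L^10*4^3*(10000/9999)^3*((L^2/(3/2))^2)^3*(5/2)^10) * (13^4 * ((6.54e-10)^3 * (13+1/2)^10)) * z^3 := by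
        have : 0 < L := by rw [hL]; norm_num
        gcongr
    _ ≤ _ := by
        gcongr
        rw [hL]; norm_num

lemma numB (k z L : ℝ) (hL : L = 1000001/1000000) (hk7 : 7 ≤ k) (hk13 : k ≤ 13) (hz : 0 < z)
    (hkz : k*z ≤ 6.54e-10) :
    ((16/3)^2)^3 * ((5/4)^2)^10 * (L*k)^7 * (L*(k+1/2))^10 * 4^3 * (4^3 * L^10 * (L*k*z)^7)
      ≤ 1/2 * z^3 := by
  have h1 : (k*z)^4 ≤ (6.54e-10)^4 := by gcongr
  have h2 : k^10 ≤ 13^10 := by gcongr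
  have h3 : (k+1/2)^10 ≤ (13+1/2)^10 := by gcongr
  have h4 : k^10 * ((k*z)^4 * (k+1/2)^10) ≤ 13^10 * ((6.54e-10)^4 * (13+1/2)^10) := by gcongr
  have : 0 < z^3 := by positivity
  calc _ = (((16/3)^2)^3 * ((5/4)^2)^10 * L^7*L^10*4^3*4^3*L^10*L^7) * (k^10 * ((k*z)^4 * (k+1/2)^10)) * z^3 := by ring
    _ ≤ (((16/3)^2)^3 * ((5/4)^2)^10 * L^7*L^10*4^3*4^3*L^10*L^7) * (13^10 * ((6.54e-10)^4 * (13+1/2)^10)) * z^3 := by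
        have : 0 < L := by rw [hL]; norm_num
        gcongr
    _ ≤ _ := by
        gcongr
        rw [hL]; norm_num

lemma numC (k z L : ℝ) (hL : L = 1000001/1000000) (hk7 : 7 ≤ k) (hk13 : k ≤ 13) (hz : 0 < z)
    (hkz : k*z ≤ 6.54e-10) :
    4^3 * L^20 * (L*k*z)^7 ≤ 1/2 * z^6 := by
  have h2 : k^6 ≤ 13^6 := by gcongr
  have h4 : k^6 * (k*z) ≤ 13^6 * 6.54e-10 := by gcongr
  have : 0 < z^6 := by positivity
  calc _ = (4^3*L^20*L^7) * (k^6 * (k*z)) * z^6 := by ring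
    _ ≤ (4^3*L^20*L^7) * (13^6 * 6.54e-10) * z^6 := by
        have : 0 < L := by rw [hL]; norm_num
        gcongr
    _ ≤ _ := by
        gcongr
        rw [hL]; norm_num

lemma shapeA (p1 p2 p3 p4 p5 q1 q2 q3 : ℝ) (n ρ : ℕ) :
    p1^(3*n) * p2^(10*n+ρ) * p3^(7*n+ρ) * p4^(10*n+ρ) * p5^(3*n) * (q1^(3*n) * q2^(3*n) * q3^(10*n+ρ))
     = (p1^3 * p2^10 * p3^7 * p4^10 * p5^3 * (q1^3 * q2^3 * q3^10))^n * (p2*p3*p4*q3)^ρ := by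
  ring

lemma shapeB (p1 p2 p3 p4 p5 q1 q2 q3 : ℝ) (n ρ : ℕ) :
    p1^(3*n) * p2^(10*n+ρ) * p3^(7*n+ρ) * p4^(10*n+ρ) * p5^(3*n) * (q1^(3*n) * q2^(10*n+ρ) * q3^(7*n+ρ))
     = (p1^3 * p2^10 * p3^7 * p4^10 * p5^3 * (q1^3 * q2^10 * q3^7))^n * (p2*p3*p4*q2*q3)^ρ := by
  ring

lemma finalNum (k z L Z : ℝ) (n ρ : ℕ) (hρ : ρ ≤ 6) (hL : L = 1000001/1000000) (hk7 : 7 ≤ k) (hk13 : k ≤ 13) (hz : 0 < z)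
    (hkz : k*z ≤ 6.54e-10) (hZ : 10000 ≤ Z) (hn : Z^9 < 2^n) :
    8 * Z^4 * (((16/3)^2)^(3*n) * ((5/4)^2)^(10*n+ρ) * (L*k)^(7*n+ρ) * (L*(k+1/2))^(10*n+ρ) * 4^(3*n)
      * ((10000/9999)^(3*n) * ((L^2/(3/2))^2*z^2)^(3*n) * (5/2)^(10*n+ρ) + 2*(4^(3*n) * L^(10*n+ρ) * (L*k*z)^(7*n+ρ)))) < z^(3*n) := by
  have hL0 : 0 < L := by rw [hL]; norm_num
  have hA : ((16/3)^2)^(3*n) * ((5/4)^2)^(10*n+ρ) * (L*k)^(7*n+ρ) * (L*(k+1/2))^(10*n+ρ) * 4^(3*n)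
      * ((10000/9999)^(3*n) * ((L^2/(3/2))^2*z^2)^(3*n) * (5/2)^(10*n+ρ)) ≤ (1/2*z^3)^n * 700^6 := by
    rw [shapeA]
    have hb : (5/4)^2 * (L*k) * (L*(k+1/2)) * (5/2) ≤ 700 := by
      calc (5/4)^2 * (L*k) * (L*(k+1/2)) * (5/2) ≤ (5/4)^2 * (L*13) * (L*(13+1/2)) * (5/2) := by gcongr
        _ ≤ 700 := by rw [hL]; norm_num
    have := numA k z L hL hk7 hk13 hz hkz
    calc _ ≤ (1/2*z^3)^n * 700^ρ := by gcongr
      _ ≤ _ := by gcongr; norm_num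
  have hB : ((16/3)^2)^(3*n) * ((5/4)^2)^(10*n+ρ) * (L*k)^(7*n+ρ) * (L*(k+1/2))^(10*n+ρ) * 4^(3*n)
      * (4^(3*n) * L^(10*n+ρ) * (L*k*z)^(7*n+ρ)) ≤ (1/2*z^3)^n * 700^6 := by
    rw [shapeB]
    have hb : (5/4)^2 * (L*k) * (L*(k+1/2)) * L * (L*k*z) ≤ 700 := by
      calc (5/4)^2 * (L*k) * (L*(k+1/2)) * L * (L*k*z) = (5/4)^2 * (L*k) * (L*(k+1/2)) * L * (L*(k*z)) := by ring
        _ ≤ (5/4)^2 * (L*13) * (L*(13+1/2)) * L * (L*6.54e-10) := by gcongr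
        _ ≤ 700 := by rw [hL]; norm_num
    have := numB k z L hL hk7 hk13 hz hkz
    calc _ ≤ (1/2*z^3)^n * 700^ρ := by gcongr
      _ ≤ _ := by gcongr; norm_num
  rw [mul_add]
  have hz3 : 0 < z^(3*n) := by positivity
  have e : (1/2*z^3)^n = z^(3*n) / 2^n := by rw [mul_pow, ← pow_mul]; field_simp; simp
  rw [e] at hA hB
  have hcomb : 8*Z^4*(3*(z^(3*n) / 2^n * 700^6)) < z^(3*n) := by
    have h24 : (8*3*700^6 : ℝ) ≤ Z^5 := by
      calc (8*3*700^6 : ℝ) ≤ 10000^5 := by norm_num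
        _ ≤ Z^5 := by gcongr
    have h9 : 8*3*700^6 * Z^4 < 2^n := by
      calc 8*3*700^6 * Z^4 ≤ Z^5*Z^4 := by gcongr
        _ = Z^9 := by ring
        _ < _ := hn
    have h2n : (0:ℝ) < 2^n := by positivity
    calc 8*Z^4*(3*(z^(3*n) / 2^n * 700^6)) = (8*3*700^6 * Z^4) / 2^n * z^(3*n) := by ring
      _ < 1 * z^(3*n) := by
        apply mul_lt_mul_of_pos_right _ hz3
        rw [div_lt_one h2n]; exact h9
      _ = _ := one_mul _
  refine lt_of_le_of_lt ?_ hcomb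
  gcongr
  linarith

lemma shapeC (p L q : ℝ) (n ρ : ℕ) :
    p^(3*n) * L^(10*n+ρ) * q^(7*n+ρ) * L^(10*n+ρ) = (p^3*L^20*q^7)^n * (L*L*q)^ρ := by
  ring

lemma nonvanNum (k z L Z : ℝ) (n ρ : ℕ) (hL : L = 1000001/1000000) (hk7 : 7 ≤ k) (hk13 : k ≤ 13) (hz : 0 < z)
    (hkz : k*z ≤ 6.54e-10) (hZ : 10000 ≤ Z) (hn : Z^9 < 2^n) (hzZ : 1 ≤ z*Z) :
    2 * Z^2 * (4^(3*n) * L^(10*n+ρ) * (L*k*z)^(7*n+ρ) * L^(10*n+ρ)) < z^(2*(3*n)+1) := by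
  have hL0 : 0 < L := by rw [hL]; norm_num
  have e : (4:ℝ)^(3*n) * L^(10*n+ρ) * (L*k*z)^(7*n+ρ) * L^(10*n+ρ) = (4^3*L^20*(L*k*z)^7)^n * (L*L*(L*k*z))^ρ := shapeC 4 L (L*k*z) n ρ
  have h1 : (L*L*(L*k*z))^ρ ≤ 1 := by
    apply pow_le_one₀ (by positivity)
    calc L*L*(L*k*z) = L*L*L*(k*z) := by ring
      _ ≤ L*L*L*6.54e-10 := by gcongr
      _ ≤ 1 := by rw [hL]; norm_num
  have h2 : (4^3*L^20*(L*k*z)^7)^n ≤ (1/2*z^6)^n := by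
    have := numC k z L hL hk7 hk13 hz hkz
    gcongr
  have h3 : 2*Z^3 < 2^n := by
    refine lt_of_le_of_lt ?_ hn
    calc 2*Z^3 ≤ Z^6*Z^3 := by
          gcongr
          calc (2:ℝ) ≤ 10000^6 := by norm_num
            _ ≤ Z^6 := by gcongr
      _ = Z^9 := by ring
  rw [e]
  have e2 : (1/2*z^6)^n = z^(2*(3*n)) / 2^n := by rw [mul_pow, ← pow_mul, show 6*n = 2*(3*n) by ring]; field_simp; simp
  have hz3 : 0 < z^(2*(3*n)) := by positivity
  have h2n : (0:ℝ) < 2^n := by positivity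
  calc 2*Z^2*((4^3*L^20*(L*k*z)^7)^n * (L*L*(L*k*z))^ρ) ≤ 2*Z^2*((1/2*z^6)^n * 1) := by gcongr
    _ = (2*Z^2/2^n) * z^(2*(3*n)) := by rw [e2]; ring
    _ < z * z^(2*(3*n)) := by
        apply mul_lt_mul_of_pos_right _ hz3
        rw [div_lt_iff₀ h2n]
        calc 2*Z^2 ≤ 2*Z^2*(z*Z) := by nlinarith [sq_nonneg Z]
          _ = z*(2*Z^3) := by ring
          _ < z*2^n := by gcongr
    _ = _ := by ring
end S5

section S6
/-- two-term bound for an off-diagonal place -/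
lemma place_bound (j M : ℕ) (hjM : j ≤ M) (A B Y ξ v W1 W2 C : ℝ) (hY : 0 ≤ Y) (hξ : 0 ≤ ξ)
    (hy : |A-B| ≤ ξ*Y) (hA : |A| ≤ Y) (hB : |B| ≤ Y) (h0 : 0 < v) (h1 : v < 1)
    (hW1 : |W1| ≤ C) (hW2 : |W2| ≤ C) :
    |pS j M (-(A-B)) A * W1 - pS j M (A-B) B * W2|
      ≤ 2*C*(Y^j * ((v*(1-v))⁻¹)^j * (1+ξ*v)^M) := by
  have hC : 0 ≤ C := (abs_nonneg _).trans hW1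
  have b1 := pS_bound j M hjM (-(A-B)) A Y ξ v hY hξ (by rwa [abs_neg]) hA h0 h1
  have b2 := pS_bound j M hjM (A-B) B Y ξ v hY hξ hy hB h0 h1
  set N := Y^j * ((v*(1-v))⁻¹)^j * (1+ξ*v)^M
  have hN : 0 ≤ N := (abs_nonneg _).trans b1
  calc |pS j M (-(A-B)) A * W1 - pS j M (A-B) B * W2|
      ≤ |pS j M (-(A-B)) A * W1| + |pS j M (A-B) B * W2| := abs_sub _ _
    _ ≤ N*C + N*C := by
        rw [abs_mul, abs_mul]; gcongr
    _ = 2*C*N := by ring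

/-- main place, upper bound and nonvanishing -/
lemma place_main (k U X G H L Z z Bh V : ℝ) (n ρ : ℕ) (hn1 : 1 ≤ n)
    (hL : L = 1000001/1000000) (hk7 : 7 ≤ k) (hk13 : k ≤ 13)
    (hU : 0 < U) (hX : 0 < X) (hz : 0 < z) (hzX : X = z*U^2)
    (hkz : k*z ≤ 6.54e-10) (hG : 0 < G) (hH : 0 < H) (hGU : G < U) (hUG : U ≤ L*G)
    (hy1 : X ≤ U*(U-G)) (hy2 : U*(U-G) ≤ L*X) (hUH : U*H ≤ L*(k*X))
    (hZ : 10000 ≤ Z) (hn : Z^9 < 2^n) (hzZ : 1 ≤ z*Z)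
    (hBZ : Bh ≤ Z) (hBZ2 : 1 ≤ Bh*Z) (hV : |V| ≤ 2*Z*H^(7*n+ρ)) :
    let T := Bh*((-1)^(3*n) * rS (3*n) (10*n+ρ) (U-G) G) + pS (3*n) (10*n+ρ) (U-G) G * V
    T ≠ 0 ∧ |T| ≤ U^(10*n+ρ) * (Z * ((10000/9999)^(3*n) * ((L^2/(3/2))^2*z^2)^(3*n) * (5/2)^(10*n+ρ)
        + 2*(4^(3*n) * L^(10*n+ρ) * (L*k*z)^(7*n+ρ)))) := by
  intro T
  have hL0 : 0 < L := by rw [hL]; norm_num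
  have hZ0 : 0 < Z := by linarith
  have hB0 : 0 < Bh := by
    by_contra h; push Not at h; nlinarith
  set j := 3*n with hj
  set M := 10*n+ρ with hM
  set m := 7*n+ρ with hm
  have hMm : M = m + j := by omega
  have hy0 : 0 < U - G := by linarith
  have hzs : z ≤ 1e-10 := by nlinarith
  have hyU : U - G ≤ L*z*U := by
    have : U*(U-G) ≤ U*(L*z*U) := by
      calc _ ≤ L*X := hy2
        _ = U*(L*z*U) := by rw [hzX]; ring
    exact le_of_mul_le_mul_left this hU
  have hyU2 : z*U ≤ U - G := by
    have : U*(z*U) ≤ U*(U-G) := by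
      calc _ = X := by rw [hzX]; ring
        _ ≤ _ := hy1
    exact le_of_mul_le_mul_left this hU
  have hHU : H ≤ L*k*z*U := by
    have : U*H ≤ U*(L*k*z*U) := by
      calc _ ≤ L*(k*X) := hUH
        _ = U*(L*k*z*U) := by rw [hzX]; ring
    exact le_of_mul_le_mul_left this hU
  have hpS : |pS j M (U-G) G| ≤ U^j * 4^j * L^M := by
    have h := pS_bound j M (by omega) (U-G) G U (L*z) (1/2) hU.le (by positivity)
      (by rw [abs_of_pos hy0]; exact hyU) (by rw [abs_of_pos hG]; exact hGU.le) (by norm_num) (by norm_num)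
    refine h.trans ?_
    have e1 : ((1/2*(1-1/2):ℝ))⁻¹ = 4 := by norm_num
    have e2 : 1 + L*z*(1/2) ≤ L := by rw [hL]; nlinarith
    rw [e1]
    gcongr
  have hpV : |pS j M (U-G) G * V| ≤ U^M * (2*Z*(4^j*L^M*(L*k*z)^m)) := by
    rw [abs_mul]
    calc |pS j M (U-G) G| * |V| ≤ (U^j*4^j*L^M) * (2*Z*(L*k*z*U)^m) := by
          gcongr
          refine hV.trans ?_
          gcongr
      _ = _ := by rw [hMm, mul_pow (L*k*z) U, pow_add U]; ring
  have hRlow : U^M * (z^(2*j+1) / L^M) ≤ rS j M (U-G) G := by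
    refine le_trans ?_ (rS_lower j M (U-G) G hG hy0.le (by omega))
    have h1 : U/L ≤ G := by rw [div_le_iff₀ hL0]; linarith
    have hL1 : 1 ≤ L := by rw [hL]; norm_num
    have h2 : z^(2*j+1) / L^M ≤ z^(2*j+1) / L^(M-(2*j+1)) := by
      gcongr
      omega
    calc U^M * (z^(2*j+1) / L^M) ≤ U^M * (z^(2*j+1) / L^(M-(2*j+1))) := by gcongr
      _ = (z*U)^(2*j+1) * (U/L)^(M-(2*j+1)) := by
          have : U^M = U^(2*j+1) * U^(M-(2*j+1)) := by rw [← pow_add]; congr 1; omega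
          rw [this, mul_pow, div_pow]; ring
      _ ≤ _ := by gcongr
  have hR0 : 0 ≤ rS j M (U-G) G := le_trans (by positivity) hRlow
  have hRup : rS j M (U-G) G ≤ U^M * ((10000/9999)^j * ((L^2/(3/2))^2*z^2)^j * (5/2)^M) := by
    have hyw : U - G ≤ (1/10000)*(3/2)*G := by
      calc U - G ≤ L*z*U := hyU
        _ ≤ L*z*(L*G) := by gcongr
        _ ≤ L*1e-10*(L*G) := by gcongr
        _ ≤ _ := by rw [hL]; nlinarith
    refine (rS_upper j M (by omega) (U-G) G (1/10000) (3/2) hG (by norm_num) (by norm_num) (by norm_num) hy0.le hyw).trans ?_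
    have h1 : (U-G)/(3/2*G) ≤ L^2/(3/2)*z := by
      rw [div_le_iff₀ (by positivity)]
      calc U - G ≤ L*z*U := hyU
        _ ≤ L*z*(L*G) := by gcongr
        _ = _ := by ring
    have h2 : L^2/(3/2)*z ≤ 1 := by rw [hL]; nlinarith
    have h3 : ((U-G)/(3/2*G))^(2*j+1) ≤ ((L^2/(3/2))^2*z^2)^j := by
      calc ((U-G)/(3/2*G))^(2*j+1) ≤ (L^2/(3/2)*z)^(2*j+1) := by
            have : 0 ≤ (U-G)/(3/2*G) := by positivity
            gcongr
        _ ≤ (L^2/(3/2)*z)^(2*j) := pow_le_pow_of_le_one (by positivity) h2 (by omega)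
        _ = _ := by rw [pow_mul, mul_pow]
    have e1 : ((1 - 1/10000 : ℝ))⁻¹ = 10000/9999 := by norm_num
    have e2 : (1+3/2:ℝ) = 5/2 := by norm_num
    rw [e1, e2]
    calc _ ≤ (10000/9999)^j * ((L^2/(3/2))^2*z^2)^j * ((5/2)*U)^M := by gcongr
      _ = _ := by rw [mul_pow (5/2) U]; ring
  have habs : |Bh*((-1)^j * rS j M (U-G) G)| = Bh * rS j M (U-G) G := by
    rw [abs_mul, abs_mul, abs_pow, abs_neg, abs_one, one_pow, one_mul, abs_of_pos hB0, abs_of_nonneg hR0]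
  constructor
  · intro hT
    have hT' : Bh*((-1)^j * rS j M (U-G) G) = -(pS j M (U-G) G * V) := by
      simp only [T] at hT; linarith
    have h1 : Bh * rS j M (U-G) G ≤ U^M * (2*Z*(4^j*L^M*(L*k*z)^m)) := by
      rw [← habs, hT', abs_neg]; exact hpV
    have h2 : Bh * (U^M * (z^(2*j+1) / L^M)) ≤ U^M * (2*Z*(4^j*L^M*(L*k*z)^m)) := by
      refine le_trans ?_ h1
      gcongr
    have h3 := nonvanNum k z L Z n ρ hL hk7 hk13 hz hkz hZ hn hzZ
    rw [← hj, ← hM, ← hm] at h3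
    have hLM : 0 < L^M := by positivity
    have h4 : Bh * z^(2*j+1) ≤ 2*Z*(4^j*L^M*(L*k*z)^m*L^M) := by
      have : U^M * (Bh * (z^(2*j+1) / L^M)) ≤ U^M * (2*Z*(4^j*L^M*(L*k*z)^m)) := by
        calc _ = Bh * (U^M * (z^(2*j+1) / L^M)) := by ring
          _ ≤ _ := h2
      have := le_of_mul_le_mul_left this (by positivity)
      calc Bh * z^(2*j+1) = Bh * (z^(2*j+1) / L^M) * L^M := by field_simp
        _ ≤ 2*Z*(4^j*L^M*(L*k*z)^m) * L^M := by gcongr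
        _ = _ := by ring
    have h5 : z^(2*j+1) ≤ 2*Z^2*(4^j*L^M*(L*k*z)^m*L^M) := by
      calc z^(2*j+1) ≤ (Bh*Z)*z^(2*j+1) := le_mul_of_one_le_left (by positivity) hBZ2
        _ = Z*(Bh * z^(2*j+1)) := by ring
        _ ≤ Z*(2*Z*(4^j*L^M*(L*k*z)^m*L^M)) := by gcongr
        _ = _ := by ring
    linarith
  · calc |T| ≤ |Bh*((-1)^j * rS j M (U-G) G)| + |pS j M (U-G) G * V| := abs_add_le _ _
      _ ≤ Z*(U^M * ((10000/9999)^j * ((L^2/(3/2))^2*z^2)^j * (5/2)^M)) + U^M * (2*Z*(4^j*L^M*(L*k*z)^m)) := by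
          rw [habs]; gcongr
      _ = _ := by ring
end S6

section S7
lemma posR (x y : ℝ) (hx : 0 < x) (h : x*y = 1) : 0 < y := by
  by_contra h2; push Not at h2
  have : x*y ≤ 0 := mul_nonpos_of_nonneg_of_nonpos hx.le h2
  linarith

lemma alg3 (Z q U zz p v : ℝ) (m j : ℕ) (hU : 0 < U) (hz : 0 < zz) :
    2*(Z*(q/U)^m)*((U/(zz*U^2))^j*p^j*v^(m+j))*(zz^j*U^(m+j)) = 2*Z*(q^m*(p^j*v^(m+j))) := by
  have e1 : U/(zz*U^2) = 1/(zz*U) := by field_simp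
  rw [e1, div_pow, div_pow, one_pow, mul_pow, pow_add U]
  field_simp

lemma alg4 (Z L k U f p : ℝ) (m j : ℕ) (hU : 0 < U) (hk : 0 < k) (hf : k*f = p) :
    2*(Z*(L*k/U)^m)*((L*k/U)^j*4^j*f^(m+j))*(U^(m+j)) = 2*Z*((L*p)^(m+j)*4^j) := by
  rw [← hf]
  calc _ = 2*Z*(((L*k/U*U)*f)^(m+j)*4^j) := by rw [mul_pow, mul_pow, pow_add (L*k/U)]; ring
    _ = _ := by
      have : L*k/U*U*f = L*(k*f) := by field_simp
      rw [this]

lemma alg5 (Z S p q R W F : ℝ) (j M : ℕ) :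
    Z*S*(2*Z*(p^j*q^M))*(2*Z*(R*(p^j*q^M)))*(2*Z*(W*F)) = 8*Z^4*((p^2)^j*(q^2)^M*R*W*F*S) := by
  ring

lemma combine (t1 t2 t3 t4 W q E1 E2 E3 E4 : ℝ) (hW : 0 < W) (hq : 0 < q)
    (h1 : |t1| ≤ W*E1) (h2 : |t2| ≤ W*E2) (h3 : |t3| * (q*W) ≤ E3) (h4 : |t4| * W ≤ E4)
    (h : 1 ≤ |t1*t2*t3*t4|) : q ≤ E1*E2*E3*E4 := by
  have n1 : 0 ≤ W*E1 := (abs_nonneg _).trans h1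
  have n2 : 0 ≤ W*E2 := (abs_nonneg _).trans h2
  have n3 : 0 ≤ E3 := le_trans (by positivity) h3
  have hh : |t1| * |t2| * (|t3| * (q*W))*(|t4| * W) ≤ (W*E1)*(W*E2)*E3*E4 := by gcongr
  rw [abs_mul, abs_mul, abs_mul] at h
  have : W^2*q ≤ W^2*(E1*E2*E3*E4) := by
    calc W^2*q ≤ W^2*q*(|t1| * |t2| * |t3| * |t4|) := le_mul_of_one_le_right (by positivity) h
      _ = |t1| * |t2| * (|t3| * (q*W))*(|t4| * W) := by ring
      _ ≤ _ := hh
      _ = _ := by ring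
  exact le_of_mul_le_mul_left this (by positivity)

set_option maxHeartbeats 4000000 in
lemma core (k nn r s a σ η x z : ℤ) (κ Δ τ τi β βi Z zz : ℝ) (e n ρ l : ℕ) (hn1 : 1 ≤ n) (hρ : ρ ≤ 6)
    (hκ0 : 0 < κ) (hΔ0 : 0 < Δ)
    (hκ : κ^2 = k) (hΔ : Δ^2 = nn) (hk : ¬ IsSquare k)
    (hnn : ¬ IsSquare nn) (hkn : ¬ IsSquare (k*nn)) (hr : k*a^2+4 = r^2) (hs : nn + 4 = s^2)
    (hs0 : 0 < s)
    (hτ : τ = (r-a*κ)/2) (hτi : τi = (r+a*κ)/2) (hβ : β = (s+Δ)/2) (hβi : βi = (s-Δ)/2)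
    (hτ0 : 0 < τ) (hσ : σ^2 = 1) (hη : η^2 = 1) (hk7 : 7 ≤ k) (hk13 : k ≤ 13)
    (hrel : κ*s*τ^e = (κ+σ) + (κ-σ)*(τ^e)^2)
    (hzz : (τ^e)^2 = zz*(κ+σ)^2)
    (hkz : k*zz ≤ 6.54e-10) (hZ : 10000 ≤ Z) (hn : Z^9 < 2^n) (hzZ : 1 ≤ zz*Z)
    (Bh Bs Ah As : ℝ) (hBh : Bh = κ*(x*Δ+z*a)) (hBs : Bs = κ*(x*Δ-z*a))
    (hAh : Ah = 2*Δ*(κ+η)) (hAs : As = 2*Δ*(κ-η)) (hBh0 : 0 < Bh) (hBs0 : 0 < Bs)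
    (hBB : Bh + Bs ≤ Z) (hBZ : 1 ≤ Bh*Z) (hAA : As*(Ah+As) ≤ Z*Bh)
    (heq : Ah*τi^l + As*τ^l = Bh*β^(7*n+ρ) + Bs*βi^(7*n+ρ)) (hτ1 : τ < 1) : False := by
  have hk7R : (7:ℝ) ≤ k := by exact_mod_cast hk7
  have hk13R : (k:ℝ) ≤ 13 := by exact_mod_cast hk13
  have hrR : (k:ℝ)*a^2+4 = r^2 := by exact_mod_cast hr
  have hsR : (nn:ℝ)+4 = s^2 := by exact_mod_cast hs
  have hs0R : (0:ℝ) < s := by exact_mod_cast hs0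
  have hττ : τ*τi = 1 := by rw [hτ, hτi]; linear_combination (-1/4:ℝ)*a^2*hκ - (1/4:ℝ)*hrR
  have hββ : β*βi = 1 := by rw [hβ, hβi]; linear_combination (-1/4:ℝ)*hΔ - (1/4:ℝ)*hsR
  have hτi0 : 0 < τi := posR τ τi hτ0 hττ
  have hβ0 : 0 < β := by rw [hβ]; linarith
  have hβi0 : 0 < βi := posR β βi hβ0 hββ
  have hββi : βi < β := by rw [hβ, hβi]; linarith
  have hβ1 : 1 ≤ β := by
    by_contra h; push Not at h
    have : β*βi < 1 * 1 := mul_lt_mul'' h (hββi.trans h) hβ0.le hβi0.le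
    linarith
  have hκ2 : 2 < κ := by
    by_contra h; push Not at h
    have : κ^2 ≤ 2^2 := by gcongr
    linarith
  have hσR : ((σ:ℝ))^2 = 1 := by exact_mod_cast hσ
  have hηR : ((η:ℝ))^2 = 1 := by exact_mod_cast hη
  have hσ1 : |(σ:ℝ)| ≤ 1 := by rw [← sq_le_one_iff_abs_le_one]; linarith
  have hη1 : |(η:ℝ)| ≤ 1 := by rw [← sq_le_one_iff_abs_le_one]; linarith
  rw [abs_le] at hσ1 hη1
  have hAh0 : 0 < Ah := by rw [hAh]; have : 0 < κ + η := by linarith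
                           positivity
  have hAs0 : 0 < As := by rw [hAs]; have : 0 < κ - η := by linarith
                           positivity
  set T := τ^e with hT
  set Ti := τi^e with hTi
  have hT0 : 0 < T := by positivity
  have hTi0 : 0 < Ti := by positivity
  have hTT : T*Ti = 1 := by rw [hT, hTi, ← mul_pow, hττ, one_pow]
  set U := κ + σ with hUdef
  set U' := κ - σ with hU'def
  have hU : 0 < U := by linarith
  have hU' : 0 < U' := by linarith
  have hUU : U*U' = k - 1 := by rw [hUdef, hU'def]; linear_combination hκ - hσR
  set X := T^2 with hX
  have hX0 : 0 < X := by positivity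
  have hzz0 : 0 < zz := by
    by_contra h; push Not at h
    have : zz*U^2 ≤ 0 := mul_nonpos_of_nonpos_of_nonneg h (sq_nonneg U)
    linarith
  obtain ⟨L, hL⟩ : ∃ L : ℝ, L = 1000001/1000000 := ⟨_, rfl⟩
  have hL0 : 0 < L := by rw [hL]; norm_num
  set G := κ*β*T with hG
  set H := κ*βi*T with hH
  have hG0 : 0 < G := by positivity
  have hH0 : 0 < H := by positivity
  have hGH : G*H = k*X := by rw [hG, hH, hX]; linear_combination κ^2*T^2*hββ + T^2*hκ
  have hHG : H < G := by rw [hG, hH]; gcongr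
  have hsum : G + H = U + U'*X := by
    rw [← hrel, hG, hH, hβ, hβi]; ring
  obtain ⟨g1, g2, g3, g4, g5, g6, g7⟩ := geom k U U' X G H L hL hk7R hk13R hU hU' hUU hX0
    (by rw [hzz, ← mul_assoc]; gcongr) hH0 hHG hGH hsum
  set m := 7*n+ρ with hm
  have hτm : τ^(e*m) = T^m := by rw [pow_mul]
  have hτim : τi^(e*m) = Ti^m := by rw [pow_mul]
  have hβm : 1 ≤ β^m := one_le_pow₀ hβ1
  have hβββ : β^m * βi^m = 1 := by rw [← mul_pow, hββ, one_pow]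
  have hτττ : τi^l * τ^l = 1 := by rw [← mul_pow, mul_comm, hττ, one_pow]
  have hβile : βi^m ≤ β^m := by gcongr
  have hZ0 : 0 < Z := by linarith
  have hAl : Ah*τi^l ≤ Z*β^m := by
    have : 0 < As*τ^l := by positivity
    calc Ah*τi^l ≤ Bh*β^m + Bs*βi^m := by linarith
      _ ≤ Bh*β^m + Bs*β^m := by gcongr
      _ = (Bh+Bs)*β^m := by ring
      _ ≤ _ := by gcongr
  have hAsl : As*τ^l ≤ Z*βi^m := by
    have h1 : Bh*β^m ≤ (Ah+As)*τi^l := by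
      have : 0 < Bs*βi^m := by positivity
      have h2 : τ^l ≤ τi^l := by
        have : τ ≤ τi := by
          by_contra h; push Not at h
          have : τ*τi < 1*1 := mul_lt_mul'' hτ1 (h.trans hτ1) hτ0.le hτi0.le
          linarith
        gcongr
      have h3 : As*τ^l ≤ As*τi^l := by gcongr
      linarith
    have h2 : Bh*τ^l ≤ (Ah+As)*βi^m := by
      calc Bh*τ^l = (Bh*β^m)*(τ^l*βi^m) := by linear_combination -Bh*τ^l*hβββ
        _ ≤ ((Ah+As)*τi^l)*(τ^l*βi^m) := by gcongr
        _ = _ := by linear_combination (Ah+As)*βi^m*hτττ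
    have h3 : Bh*(As*τ^l) ≤ Bh*(Z*βi^m) := by
      calc Bh*(As*τ^l) = As*(Bh*τ^l) := by ring
        _ ≤ As*((Ah+As)*βi^m) := by gcongr
        _ = (As*(Ah+As))*βi^m := by ring
        _ ≤ (Z*Bh)*βi^m := by gcongr
        _ = _ := by ring
    exact le_of_mul_le_mul_left h3 hBh0
  have hBhZ : Bh ≤ Z := by linarith
  have hBsZ : Bs ≤ Z := by linarith
  set j := 3*n with hj
  have hM : m + j = 10*n+ρ := by omega
  -- place 1
  set V := κ^m*T^m*(As*τ^l - Bs*βi^m) with hV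
  have hVb : |V| ≤ 2*Z*H^m := by
    rw [hV, abs_mul, abs_of_pos (by positivity : 0 < κ^m*T^m)]
    have : |As*τ^l - Bs*βi^m| ≤ 2*(Z*βi^m) := by
      have h1 : 0 < As*τ^l := by positivity
      have h2 : 0 < Bs*βi^m := by positivity
      have h3 : Bs*βi^m ≤ Z*βi^m := by gcongr
      rw [abs_le]; constructor <;> linarith
    calc κ^m*T^m*|As*τ^l - Bs*βi^m| ≤ κ^m*T^m*(2*(Z*βi^m)) := by gcongr
      _ = _ := by rw [hH, mul_pow, mul_pow]; ring
  have key1 := place_main k U X G H L Z zz Bh V n ρ hn1 hL hk7R hk13R hU hX0 hzz0 hzz hkz hG0 hH0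
    g1 g2 g3 g4 g5 hZ hn hzZ hBhZ hBZ hVb
  have hTh1 : Th e j m l (σ:ℝ) η x z a κ τ τi Δ β =
      Bh*((-1)^(3*n) * rS (3*n) (10*n+ρ) (U-G) G) + pS (3*n) (10*n+ρ) (U-G) G * V := by
    unfold Th
    rw [← hT, ← hUdef, ← hG, ← hBh, ← hAh, hτm, ← hj, ← hM]
    have hp := pade_identity j m (by omega) U G
    rw [← hp, hV]
    have hGm : G^m = κ^m*β^m*T^m := by rw [hG, mul_pow, mul_pow]
    rw [hGm]
    linear_combination -(pS j (m+j) (U-G) G)*κ^m*T^m*heq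
  rw [← hTh1] at key1
  obtain ⟨hne, hb1⟩ := key1
  -- place 2
  have hb2 : |Th e j m l (σ:ℝ) η x z a κ τ τi (-Δ) βi| ≤ U^(10*n+ρ) * (2*Z*((16/3)^j*(5/4)^(10*n+ρ))) := by
    unfold Th
    rw [← hT, ← hUdef, ← hH, hτm]
    have h := place_bound j (m+j) (by omega) U H U 1 (1/4) (U^m*(κ*(x*(-Δ)+z*a)))
      (κ^m*(2*(-Δ)*(κ+η))*(T^m*τi^l)) (Z*U^m) hU.le (by norm_num)
      (by rw [abs_of_pos (by linarith)]; linarith) (by rw [abs_of_pos hU])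
      (by rw [abs_of_pos hH0]; linarith) (by norm_num) (by norm_num)
      (by
        have : U^m*(κ*(x*(-Δ)+z*a)) = -(U^m*Bs) := by rw [hBs]; ring
        rw [this, abs_neg, abs_of_pos (by positivity), mul_comm]
        gcongr)
      (by
        have : κ^m*(2*(-Δ)*(κ+η))*(T^m*τi^l) = -(κ^m*T^m*(Ah*τi^l)) := by rw [hAh]; ring
        rw [this, abs_neg, abs_of_pos (by positivity)]
        calc κ^m*T^m*(Ah*τi^l) ≤ κ^m*T^m*(Z*β^m) := by gcongr
          _ = Z*G^m := by rw [hG, mul_pow, mul_pow]; ring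
          _ ≤ Z*U^m := by gcongr)
    refine h.trans (le_of_eq ?_)
    rw [hM, ← hM, pow_add U]
    norm_num
    ring
  -- W bounds for places 3, 4
  have hkG : k/G ≤ L*k/U := by
    rw [div_le_div_iff₀ hG0 hU]
    calc (k:ℝ)*U ≤ k*(L*G) := by gcongr
      _ = _ := by ring
  have hU'k : U' ≤ L*k/U := by
    rw [le_div_iff₀ hU, mul_comm, hUU, hL]; linarith
  have hkGe : κ*Ti*βi = k/G := by
    rw [eq_div_iff hG0.ne', hG]
    linear_combination κ^2*(T*Ti)*hββ + κ^2*hTT + hκ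
  have hW2 : κ^m*As*(Ti^m*τ^l) ≤ Z*(L*k/U)^m := by
    calc κ^m*As*(Ti^m*τ^l) = κ^m*Ti^m*(As*τ^l) := by ring
      _ ≤ κ^m*Ti^m*(Z*βi^m) := by gcongr
      _ = Z*(k/G)^m := by rw [← hkGe, mul_pow, mul_pow]; ring
      _ ≤ _ := by gcongr
  have hGX : κ*β*Ti = G/X := by
    rw [eq_div_iff hX0.ne', hG, hX]
    linear_combination κ*β*T*hTT
  -- place 3
  have hb3 : |Th e j m l (σ:ℝ) η x z a (-κ) τi τ Δ β| * (zz^j*U^(10*n+ρ)) ≤ 2*Z*((L*k)^m*((16/3)^j*(5/4)^(10*n+ρ))) := by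
    unfold Th
    rw [← hTi, hτim]
    have h := place_bound j (m+j) (by omega) (-κ+σ) (-κ*β*Ti) (U/X) 1 (1/4) ((-κ+σ)^m*(-κ*(x*Δ+z*a)))
      ((-κ)^m*(2*Δ*(-κ+η))*(Ti^m*τ^l)) (Z*(L*k/U)^m) (by positivity) (by norm_num)
      (by
        have : -κ+σ - (-κ*β*Ti) = G/X - U' := by rw [← hGX, hU'def]; ring
        rw [this, abs_of_pos (by rw [sub_pos, lt_div_iff₀ hX0]; exact g7), one_mul]
        have : G/X ≤ U/X := by gcongr
        linarith)
      (by
        have : (-κ+σ:ℝ) = -U' := by rw [hU'def]; ring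
        rw [this, abs_neg, abs_of_pos hU', le_div_iff₀ hX0]; linarith)
      (by
        have : -κ*β*Ti = -(G/X) := by rw [← hGX]; ring
        rw [this, abs_neg, abs_of_pos (by positivity)]
        gcongr) (by norm_num) (by norm_num)
      (by
        have : (-κ+σ:ℝ)^m*(-κ*(x*Δ+z*a)) = -((-U')^m*Bh) := by rw [hBh, hU'def]; ring
        rw [this, abs_neg, abs_mul, abs_pow, abs_neg, abs_of_pos hU', abs_of_pos hBh0, mul_comm]
        gcongr)
      (by
        have : (-κ)^m*(2*Δ*(-κ+η))*(Ti^m*τ^l) = -((-κ)^m*As*(Ti^m*τ^l)) := by rw [hAs]; ring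
        rw [this, abs_neg, abs_mul, abs_mul, abs_pow, abs_neg, abs_of_pos hκ0, abs_of_pos hAs0,
          abs_of_pos (by positivity : 0 < Ti^m*τ^l)]
        exact hW2)
    calc _ ≤ _ := mul_le_mul_of_nonneg_right h (by positivity)
      _ = _ := by
        rw [← hM, hzz]
        have e2 : ((1/4*(1-1/4):ℝ))⁻¹ = 16/3 := by norm_num
        have e3 : (1+1*(1/4):ℝ) = 5/4 := by norm_num
        rw [e2, e3]
        exact alg3 _ _ _ _ _ _ _ _ hU hzz0
  -- place 4
  have hb4 : |Th e j m l (σ:ℝ) η x z a (-κ) τi τ (-Δ) βi| * U^(10*n+ρ) ≤ 2*Z*((L*(k+1/2))^(10*n+ρ)*4^j) := by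
    unfold Th
    rw [← hTi, hτim]
    have hBe : -κ*βi*Ti = -(k/G) := by rw [← hkGe]; ring
    have hye : (-κ+σ:ℝ) - (-κ*βi*Ti) = (U-G)/X := by
      rw [hBe, eq_div_iff hX0.ne']
      have : k/G*X = H := by rw [div_mul_eq_mul_div, div_eq_iff hG0.ne', ← hGH]; ring
      have h2 : U - G = H - U'*X := by linarith
      rw [h2, ← this, hU'def]; ring
    have h := place_bound j (m+j) (by omega) (-κ+σ) (-κ*βi*Ti) (L*k/U) (1/k) (1/2) ((-κ+σ)^m*(-κ*(x*(-Δ)+z*a)))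
      ((-κ)^m*(2*(-Δ)*(-κ+η))*(Ti^m*τ^l)) (Z*(L*k/U)^m) (by positivity) (by positivity)
      (by
        rw [hye, abs_of_pos (div_pos (by linarith) hX0)]
        have : 1/(k:ℝ)*(L*k/U) = L/U := by field_simp
        rw [this, div_le_div_iff₀ hX0 hU]; linarith)
      (by
        have : (-κ+σ:ℝ) = -U' := by rw [hU'def]; ring
        rw [this, abs_neg, abs_of_pos hU']; exact hU'k)
      (by
        rw [hBe, abs_neg, abs_of_pos (by positivity)]
        exact hkG) (by norm_num) (by norm_num)
      (by
        have : (-κ+σ:ℝ)^m*(-κ*(x*(-Δ)+z*a)) = ((-U')^m*Bs) := by rw [hBs, hU'def]; ring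
        rw [this, abs_mul, abs_pow, abs_neg, abs_of_pos hU', abs_of_pos hBs0, mul_comm]
        gcongr)
      (by
        have : (-κ)^m*(2*(-Δ)*(-κ+η))*(Ti^m*τ^l) = ((-κ)^m*As*(Ti^m*τ^l)) := by rw [hAs]; ring
        rw [this, abs_mul, abs_mul, abs_pow, abs_neg, abs_of_pos hκ0, abs_of_pos hAs0,
          abs_of_pos (by positivity : 0 < Ti^m*τ^l)]
        exact hW2)
    calc _ ≤ _ := mul_le_mul_of_nonneg_right h (by positivity)
      _ = _ := by
        rw [← hM]
        have e2 : ((1/2*(1-1/2):ℝ))⁻¹ = 4 := by norm_num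
        rw [e2]
        exact alg4 _ _ _ _ _ _ _ _ hU (by linarith) (by field_simp)
  rw [hτ, hτi, hβ] at hne
  have hfin := Th_norm k nn r s a σ η x z κ Δ hκ hΔ hk hnn hkn hr hs e j m l hne
  rw [← hτ, ← hτi, ← hβ, ← hβi] at hfin
  have hc := combine _ _ _ _ (U^(10*n+ρ)) (zz^j) _ _ _ _ (by positivity) (by positivity) hb1 hb2 hb3 hb4 hfin
  have hlast := finalNum k zz L Z n ρ hρ hL hk7R hk13R hzz0 hkz hZ hn
  refine absurd hc (not_le.mpr (lt_of_le_of_lt (le_of_eq ?_) hlast))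
  exact alg5 _ _ _ _ _ _ _ _ _
end S7

section S8
lemma recsol (f : ℕ → ℤ) (r : ℤ) (hrec : ∀ i, f (i+2) = r*f (i+1) - f i) (C α γ p q : ℝ)
    (hpq : p + q = r) (hpq1 : p*q = 1) (h0 : C*f 0 = α + γ) (h1 : C*f 1 = α*p + γ*q) :
    ∀ i, C*f i = α*p^i + γ*q^i := by
  have key : ∀ i, C*f i = α*p^i + γ*q^i ∧ C*f (i+1) = α*p^(i+1) + γ*q^(i+1) := by
    intro i
    induction i with
    | zero => exact ⟨by simpa using h0, by simpa using h1⟩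
    | succ i ih =>
      refine ⟨ih.2, ?_⟩
      rw [show i + 1 + 1 = i + 2 by ring, hrec i]
      push_cast
      have e1 : p^(i+2) = r*p^(i+1) - p^i := by
        rw [← hpq]; linear_combination (-p^i)*hpq1
      have e2 : q^(i+2) = r*q^(i+1) - q^i := by
        rw [← hpq]; linear_combination (-q^i)*hpq1
      rw [e1, e2]
      linear_combination (r:ℝ)*ih.2 - ih.1
  exact fun i => (key i).1

lemma nonsq_of (N s : ℤ) (hN : 4 ≤ N) (hs : N + 4 = s^2) : ¬ IsSquare N := by
  rintro ⟨w, hw⟩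
  have h1 : N = |w|^2 := by rw [sq_abs, hw]; ring
  have h2 : s^2 = |s|^2 := (sq_abs s).symm
  have hw0 := abs_nonneg w
  have hs0 := abs_nonneg s
  generalize |w| = w' at *
  generalize |s| = s' at *
  have hw2 : 2 ≤ w' := by nlinarith
  have h3 : w' < s' := by nlinarith
  have h4 : s' < w' + 1 := by nlinarith
  omega

lemma setup (k a r b c s : ℤ)
    (hk7 : 7 ≤ k) (hk13 : k ≤ 13) (ha2 : 10864 ≤ a)
    (hr : 0 < r) (hr2 : k * a ^ 2 + 4 = r ^ 2) (hb : b = k * a)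
    (hc : c = a + b + 2 * r ∨ c = (a * b + 4) * (a + b + 2 * r) - 4 * r ∨
          c = (a * b + 4) * (a + b - 2 * r) + 4 * r)
    (hs : 0 < s) (hs2 : a * c + 4 = s ^ 2) :
    (b < c ∧ r < c) ∧ ∃ e : ℕ, ∃ σ : ℤ, σ^2 = 1 ∧
      ((e = 1 ∧ σ = 1 ∧ s = r + a) ∨ (e = 2 ∧ s = r^2 + σ*(r*a) - 2)) := by
  have hra : 2*a < r := by nlinarith
  have hab : a*b + 4 = r^2 := by rw [hb, ← hr2]; ring
  have hsum : 1 ≤ a + b - 2*r := by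
    have : (2*r)^2 < (a+b)^2 := by
      have : (a+b)^2 - (2*r)^2 = (b-a)^2 - 16 := by rw [mul_pow, ← hab]; ring
      have : 4 < b - a := by nlinarith
      nlinarith
    have hp : 0 < a + b := by nlinarith
    have := lt_of_pow_lt_pow_left₀ 2 hp.le this
    omega
  have hbr : b < r^2 := by nlinarith
  have hrr : r < r^2 := by nlinarith
  rcases hc with hc | hc | hc
  · refine ⟨⟨by omega, by nlinarith⟩, 1, 1, by norm_num, Or.inl ⟨rfl, rfl, ?_⟩⟩
    have : s^2 = (r+a)^2 := by rw [← hs2, hc]; linear_combination hab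
    exact (pow_left_inj₀ hs.le (by omega) (by norm_num)).mp this
  · rw [hab] at hc
    have hc2 : r^2 ≤ c := by
      rw [hc]; nlinarith [mul_pos hr hr]
    refine ⟨⟨by omega, by omega⟩, 2, 1, by norm_num, Or.inr ⟨rfl, ?_⟩⟩
    have : s^2 = (r^2 + 1*(r*a) - 2)^2 := by rw [← hs2, hc]; linear_combination r^2*hab
    exact (pow_left_inj₀ hs.le (by nlinarith) (by norm_num)).mp this
  · rw [hab] at hc
    have hc2 : r^2 ≤ c := by
      rw [hc]; nlinarith [mul_pos hr hr]
    refine ⟨⟨by omega, by omega⟩, 2, -1, by norm_num, Or.inr ⟨rfl, ?_⟩⟩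
    have : s^2 = (r^2 + (-1)*(r*a) - 2)^2 := by rw [← hs2, hc]; linear_combination r^2*hab
    exact (pow_left_inj₀ hs.le (by nlinarith) (by norm_num)).mp this

/-- relation and smallness -/
lemma setup2 (k a r s σ : ℤ) (e : ℕ) (κ τ τi : ℝ) (hκ0 : 0 < κ) (hκ : κ^2 = k)
    (hk7 : 7 ≤ k) (hk13 : k ≤ 13) (ha2 : 10864 ≤ a)
    (hr : 0 < r) (hr2 : k * a ^ 2 + 4 = r ^ 2)
    (hτ : τ = (r-a*κ)/2) (hτi : τi = (r+a*κ)/2) (hσ : σ^2 = 1)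
    (hes : (e = 1 ∧ σ = 1 ∧ s = r + a) ∨ (e = 2 ∧ s = r^2 + σ*(r*a) - 2)) :
    τ*τi = 1 ∧ 10864 ≤ τi ∧ τi ≤ r ∧ κ*s*τ^e = (κ+σ) + (κ-σ)*(τ^e)^2 ∧
    (k:ℝ)*(τ^e)^2 ≤ 6.54e-10*(κ+σ)^2 ∧ (1:ℝ) ≤ τ^e * r^2 ∧ (s:ℝ) ≤ τi^3 ∧ 2.645 ≤ κ ∧ κ ≤ 4 := by
  have hk7R : (7:ℝ) ≤ k := by exact_mod_cast hk7
  have hk13R : (k:ℝ) ≤ 13 := by exact_mod_cast hk13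
  have ha2R : (10864:ℝ) ≤ a := by exact_mod_cast ha2
  have hrR : (0:ℝ) < r := by exact_mod_cast hr
  have hr2R : (k:ℝ)*a^2+4 = r^2 := by exact_mod_cast hr2
  have hσR : ((σ:ℝ))^2 = 1 := by exact_mod_cast hσ
  have hσ1 : |(σ:ℝ)| ≤ 1 := by rw [← sq_le_one_iff_abs_le_one]; linarith
  rw [abs_le] at hσ1
  have hκ1 : 2.645 ≤ κ := by
    by_contra h; push Not at h
    have : κ^2 < 2.645^2 := by gcongr
    norm_num at this; linarith
  have hκ4 : κ ≤ 4 := by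
    by_contra h; push Not at h
    have : 4^2 < κ^2 := by gcongr
    norm_num at this; linarith
  have hττ : τ*τi = 1 := by rw [hτ, hτi]; linear_combination (-1/4:ℝ)*a^2*hκ - (1/4:ℝ)*hr2R
  have hak : 0 < a*κ := by positivity
  have hakr : a*κ < r := by
    have : (a*κ)^2 < r^2 := by rw [mul_pow, hκ, ← hr2R]; linarith
    exact lt_of_pow_lt_pow_left₀ 2 hrR.le this
  have hτ0 : 0 < τ := by rw [hτ]; linarith
  have hτi1 : a*κ ≤ τi := by rw [hτi]; linarith
  have hτi2 : τi ≤ r := by rw [hτi]; linarith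
  have hbig : 10864*2.645 ≤ τi := le_trans (by gcongr) hτi1
  have hτi0 : 0 < τi := by linarith
  have hkτ : k*τ^2 ≤ 1/10864^2 := by
    have h1 : a*κ*τ ≤ 1 := by
      calc a*κ*τ ≤ τi*τ := by gcongr
        _ = 1 := by rw [mul_comm, hττ]
    have h2 : 10864*(κ*τ) ≤ 1 := by
      calc 10864*(κ*τ) ≤ a*(κ*τ) := by gcongr
        _ ≤ 1 := by linarith
    rw [← hκ, ← mul_pow, le_div_iff₀ (by norm_num), ← mul_pow]
    apply pow_le_one₀ (by positivity) (by linarith)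
  have hτ1 : τ ≤ 1/10864 := by
    rw [le_div_iff₀ (by norm_num)]
    calc τ*10864 ≤ τ*τi := by gcongr; linarith
      _ = 1 := hττ
  have hτr : 1 ≤ τ*r := by rw [← hττ]; gcongr
  have hss : κ*s = (κ+σ)*τi^e + (κ-σ)*τ^e := by
    rcases hes with ⟨rfl, rfl, rfl⟩ | ⟨rfl, rfl⟩
    · rw [hτ, hτi]; push_cast; ring
    · rw [hτ, hτi]; push_cast
      linear_combination (-κ/2)*hr2R + (-(1/2:ℝ)*a^2*κ)*hκ
  have hTT : τ^e*τi^e = 1 := by rw [← mul_pow, hττ, one_pow]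
  have he : e = 1 ∨ e = 2 := by rcases hes with h | h <;> simp [h.1]
  have he2 : τi^e ≤ τi^2 := by
    apply pow_le_pow_right₀ (by linarith)
    omega
  have hτe : τ^e ≤ τi^2 := by
    calc τ^e ≤ 1 := pow_le_one₀ hτ0.le (by linarith)
      _ ≤ τi^2 := one_le_pow₀ (by linarith)
  refine ⟨hττ, by linarith, hτi2, ?_, ?_, ?_, ?_, hκ1, hκ4⟩
  · linear_combination τ^e*hss + (κ+σ)*hTT
  · rcases hes with ⟨rfl, rfl, rfl⟩ | ⟨rfl, rfl⟩
    · rw [pow_one]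
      calc (k:ℝ)*τ^2 ≤ 1/10864^2 := hkτ
        _ ≤ 6.54e-10*(2.645+1)^2 := by norm_num
        _ ≤ 6.54e-10*(κ+(1:ℤ))^2 := by push_cast; gcongr
    · calc (k:ℝ)*(τ^2)^2 = (k*τ^2)*τ^2 := by ring
        _ ≤ 1/10864^2*(1/10864)^2 := by gcongr
        _ ≤ 6.54e-10*1^2 := by norm_num
        _ ≤ 6.54e-10*(κ+σ)^2 := by gcongr; linarith
  · rcases he with rfl | rfl
    · have h1 : (1:ℝ) ≤ r := by linarith
      calc (1:ℝ) ≤ τ*r := hτr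
        _ ≤ τ*r*r := le_mul_of_one_le_right (by positivity) h1
        _ = _ := by ring
    · rw [← mul_pow]; exact one_le_pow₀ hτr
  · have h1 : κ*s ≤ κ*(2*τi^2) := by
      rw [hss]
      have : 0 ≤ κ + σ := by linarith
      have : 0 ≤ κ - σ := by linarith
      calc (κ+σ)*τi^e + (κ-σ)*τ^e ≤ (κ+σ)*τi^2 + (κ-σ)*τi^2 := by gcongr
        _ = _ := by ring
    have h2 := le_of_mul_le_mul_left h1 hκ0
    calc (s:ℝ) ≤ 2*τi^2 := h2
      _ ≤ τi*τi^2 := by gcongr; linarith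
      _ = _ := by ring
end S8


lemma nonsqk (k : ℤ) (hk7 : 7 ≤ k) (hk13 : k ≤ 13) (hk9 : k ≠ 9) : ¬ IsSquare k := by
  rintro ⟨w, hw⟩
  have h1 : w < 4 := by nlinarith
  have h2 : -4 < w := by nlinarith
  interval_cases w <;> omega

set_option maxHeartbeats 4000000 in
lemma finalLem (k a r b c s t : ℤ)
    (hk7 : 7 ≤ k) (hk13 : k ≤ 13) (hk9 : k ≠ 9) (ha2 : 10864 ≤ a)
    (hr : 0 < r) (hr2 : k * a ^ 2 + 4 = r ^ 2) (hb : b = k * a)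
    (hc : c = a + b + 2 * r ∨ c = (a * b + 4) * (a + b + 2 * r) - 4 * r ∨
          c = (a * b + 4) * (a + b - 2 * r) + 4 * r)
    (hs : 0 < s) (hs2 : a * c + 4 = s ^ 2) (ht2 : b * c + 4 = t ^ 2)
    (η x z : ℤ) (hη : η^2 = 1) (hx0 : 0 < x) (hxc : x ≤ c) (hxz : x^2*c - z^2*a = 4*(c-a))
    (P Q : ℕ → ℤ)
    (hP0 : P 0 = 2) (hP1 : 2 * P 1 = r * 2 + a * (2*η))
    (hPrec : ∀ i : ℕ, P (i + 2) = r * P (i + 1) - P i)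
    (hQ0 : Q 0 = x) (hQ1 : 2 * Q 1 = s * x + a * z)
    (hQrec : ∀ i : ℕ, Q (i + 2) = s * Q (i + 1) - Q i)
    (l m : ℕ) (heq : P l = Q m) :
    (l : ℝ) / Real.log (Real.exp 1 * (l : ℝ)) <
        3.34 * 10 ^ 13 * (Real.log (8.09 * (c : ℝ) ^ 2)) ^ 2 := by
  obtain ⟨⟨hbc, hrc⟩, e, σ, hσ, hes⟩ := setup k a r b c s hk7 hk13 ha2 hr hr2 hb hc hs hs2
  have hac7 : 7*a < c := by nlinarith
  have h4ac : 4 ≤ a*c := by nlinarith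
  have h4kac : 4 ≤ k*(a*c) := by nlinarith
  have hkR : (0:ℝ) < k := by exact_mod_cast (by omega : (0:ℤ) < k)
  have haR : (10864:ℝ) ≤ a := by exact_mod_cast ha2
  have hcaR : 7*(a:ℝ) < c := by exact_mod_cast hac7
  have hcR : (76048:ℝ) ≤ c := by linarith
  obtain ⟨κ, hκdef⟩ : ∃ κ, κ = Real.sqrt k := ⟨_, rfl⟩
  have hκ0 : 0 < κ := by rw [hκdef]; positivity
  have hκ : κ^2 = k := by rw [hκdef]; exact Real.sq_sqrt hkR.le
  obtain ⟨Δ, hΔdef⟩ : ∃ Δ, Δ = Real.sqrt ((a:ℝ)*c) := ⟨_, rfl⟩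
  have hacp : (0:ℝ) < a*c := by nlinarith
  have hΔ0 : 0 < Δ := by rw [hΔdef]; positivity
  have hΔ : Δ^2 = a*c := by rw [hΔdef]; exact Real.sq_sqrt hacp.le
  obtain ⟨τ, hτ⟩ : ∃ τ, τ = (r-a*κ)/2 := ⟨_, rfl⟩
  obtain ⟨τi, hτi⟩ : ∃ τi, τi = (r+a*κ)/2 := ⟨_, rfl⟩
  obtain ⟨β, hβ⟩ : ∃ β, β = (s+Δ)/2 := ⟨_, rfl⟩
  obtain ⟨βi, hβi⟩ : ∃ βi, βi = (s-Δ)/2 := ⟨_, rfl⟩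
  obtain ⟨hττ, hτi1, hτir, hrel, hkz, hτr, hsτ, hκl, hκu⟩ :=
    setup2 k a r s σ e κ τ τi hκ0 hκ hk7 hk13 ha2 hr hr2 hτ hτi hσ hes
  have hτ0 : 0 < τ := by
    by_contra h
    have := mul_nonpos_of_nonpos_of_nonneg (not_lt.mp h) (show 0 ≤ τi by linarith)
    linarith
  have hτ1 : τ < 1 := by
    by_contra h
    have := mul_le_mul (not_lt.mp h) hτi1 (by norm_num) hτ0.le
    linarith
  have hs2R : (a:ℝ)*c + 4 = s^2 := by exact_mod_cast hs2
  have hsR : (0:ℝ) < s := by exact_mod_cast hs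
  have hΔs : Δ < s := lt_of_pow_lt_pow_left₀ 2 hsR.le (by rw [hΔ]; linarith)
  have hββ : β*βi = 1 := by rw [hβ, hβi]; linear_combination (-1/4:ℝ)*hΔ - (1/4:ℝ)*hs2R
  have hβs : β ≤ s := by rw [hβ]; linarith
  have hβi0 : 0 < βi := by rw [hβi]; linarith
  have hβ0 : 0 < β := by rw [hβ]; linarith
  have hββi : βi ≤ β := by rw [hβ, hβi]; linarith
  have hΔa : (a:ℝ) < Δ := lt_of_pow_lt_pow_left₀ 2 hΔ0.le (by rw [hΔ, sq]; gcongr <;> linarith)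
  have hΔc : Δ < c := lt_of_pow_lt_pow_left₀ 2 (by linarith) (by rw [hΔ, sq]; gcongr <;> linarith)
  have hηR : (η:ℝ)^2 = 1 := by exact_mod_cast hη
  have hσR : (σ:ℝ)^2 = 1 := by exact_mod_cast hσ
  have hη1 : -1 ≤ (η:ℝ) ∧ (η:ℝ) ≤ 1 := abs_le.mp (by rw [← sq_le_one_iff_abs_le_one]; linarith)
  have hσ1 : -1 ≤ (σ:ℝ) ∧ (σ:ℝ) ≤ 1 := abs_le.mp (by rw [← sq_le_one_iff_abs_le_one]; linarith)
  have hr2R : (k:ℝ)*a^2+4 = r^2 := by exact_mod_cast hr2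
  obtain ⟨Bh, hBh⟩ : ∃ Bh, Bh = κ*(x*Δ+z*a) := ⟨_, rfl⟩
  obtain ⟨Bs, hBs⟩ : ∃ Bs, Bs = κ*(x*Δ-z*a) := ⟨_, rfl⟩
  obtain ⟨Ah, hAh⟩ : ∃ Ah, Ah = 2*Δ*(κ+η) := ⟨_, rfl⟩
  obtain ⟨As, hAs⟩ : ∃ As, As = 2*Δ*(κ-η) := ⟨_, rfl⟩
  have hx0R : (1:ℝ) ≤ x := by exact_mod_cast hx0
  have hxcR : (x:ℝ) ≤ c := by exact_mod_cast hxc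
  have hxzR : (x:ℝ)^2*c - z^2*a = 4*(c-a) := by exact_mod_cast hxz
  have hBB1 : Bh*Bs = k*(a*(4*(c-a))) := by
    rw [hBh, hBs, ← hxzR, ← hκ]; linear_combination κ^2*x^2*hΔ
  have hBBsum : Bh + Bs = 2*κ*(x*Δ) := by rw [hBh, hBs]; ring
  have hk7R : (7:ℝ) ≤ k := by exact_mod_cast hk7
  have hBB1' : 1 ≤ Bh*Bs := by
    rw [hBB1]
    have h1 : (1:ℝ) ≤ a*(4*(c-a)) := one_le_mul_of_one_le_of_one_le (by linarith) (by linarith)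
    exact one_le_mul_of_one_le_of_one_le (by linarith) h1
  have hxΔ : 0 < x*Δ := by positivity
  have hxΔ2 : x*Δ ≤ c*c := by gcongr
  have hsum0 : 0 < Bh + Bs := by rw [hBBsum]; positivity
  have hcc1 := mul_le_mul hcR hcR (by norm_num) (by linarith)
  have hcc0 : 0 ≤ (c:ℝ)*c := mul_self_nonneg _
  have hc3' : 76048*((c:ℝ)*c) ≤ c^3 := by
    rw [show (c:ℝ)^3 = c*(c*c) by ring]; exact mul_le_mul_of_nonneg_right hcR hcc0
  have hc3 : 8*((c:ℝ)*c) ≤ c^3 := by linarith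
  have hsumc : Bh + Bs ≤ c^3 := by
    rw [hBBsum]
    calc 2*κ*(x*Δ) ≤ 2*4*(c*c) := by gcongr
      _ ≤ c^3 := by linarith
  have hBh0 : 0 < Bh := by
    by_contra h
    push Not at h
    have : 0 < Bs := by linarith
    have := mul_nonpos_of_nonpos_of_nonneg h this.le
    linarith
  have hBs0 : 0 < Bs := by
    by_contra h
    push Not at h
    have := mul_nonpos_of_nonneg_of_nonpos hBh0.le h
    linarith
  have hBhc : 1 ≤ Bh*c^3 := by
    calc 1 ≤ Bh*Bs := hBB1'
      _ ≤ Bh*c^3 := by gcongr; linarith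
  have hc36 : (c:ℝ)^3*c^3 = c^6 := by ring
  have hc31 : (1:ℝ) ≤ c^3 := one_le_pow₀ (by linarith)
  have hAh1 : 1 ≤ Ah := by rw [hAh]; exact one_le_mul_of_one_le_of_one_le (by linarith) (by linarith)
  have hAs0 : 0 ≤ As := by rw [hAs]; exact mul_nonneg (by linarith) (by linarith)
  have hAAc : As*(Ah+As) ≤ c^3 := by
    have h1 : Ah + As = 4*Δ*κ := by rw [hAh, hAs]; ring
    have h2 : As ≤ 2*c*5 := by
      rw [hAs]; gcongr <;> linarith
    rw [h1]
    calc As*(4*Δ*κ) ≤ (2*c*5)*(4*c*4) := by gcongr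
      _ = 160*(c*c) := by ring
      _ ≤ c^3 := by linarith
  have hPs := recsol P r hPrec κ (κ+η) (κ-η) τi τ (by rw [hτ, hτi]; ring) (by linarith)
    (by rw [hP0]; push_cast; ring)
    (by
      have : (2:ℝ)*P 1 = r*2+a*(2*η) := by exact_mod_cast hP1
      rw [hτ, hτi]; linear_combination (κ/2)*this)
  have hQs := recsol Q s hQrec (2*Δ) (x*Δ+z*a) (x*Δ-z*a) β βi (by rw [hβ, hβi]; ring) hββ
    (by rw [hQ0]; ring)
    (by
      have : (2:ℝ)*Q 1 = s*x+a*z := by exact_mod_cast hQ1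
      rw [hβ, hβi]; linear_combination Δ*this)
  have hmain : Ah*τi^l + As*τ^l = Bh*β^m + Bs*βi^m := by
    have h1 := hPs l
    have h2 := hQs m
    have h3 : (P l:ℝ) = Q m := by rw [heq]
    rw [hAh, hAs, hBh, hBs]
    linear_combination (-2*Δ)*h1 + κ*h2 + 2*Δ*κ*h3
  -- analytic part
  by_contra hcon
  push Not at hcon
  obtain ⟨L, hL⟩ : ∃ L, L = Real.log c := ⟨_, rfl⟩
  have hc0 : (0:ℝ) < c := by linarith
  have hL1 : 1 ≤ L := by
    rw [hL, Real.le_log_iff_exp_le hc0]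
    linarith [Real.exp_one_lt_d9]
  have hL2 : L ≤ Real.log (8.09*(c:ℝ)^2) := by
    rw [hL]; apply Real.log_le_log hc0
    have := mul_le_mul_of_nonneg_right hcR hc0.le
    rw [sq]; linarith
  have hLL : L ≤ Real.log (8.09*(c:ℝ)^2)^2 := hL2.trans (le_self_pow₀ (hL1.trans hL2) (by norm_num))
  have hl0 : 1 ≤ l := by
    rcases Nat.eq_zero_or_pos l with h | h
    · subst h
      simp only [Nat.cast_zero, zero_div] at hcon
      linarith
    · exact h
  have hl1 : (1:ℝ) ≤ l := by exact_mod_cast hl0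
  have hlog : 1 ≤ Real.log (Real.exp 1 * l) := by
    rw [Real.log_mul (Real.exp_pos 1).ne' (by linarith), Real.log_exp]
    linarith [Real.log_nonneg hl1]
  have hlbig : 3.34e13*L ≤ l := by
    have : (l:ℝ)/Real.log (Real.exp 1 * l) ≤ l := div_le_self (by linarith) hlog
    norm_num at hcon ⊢
    linarith
  have hup : τi^l ≤ c^3*(τi^3)^m := by
    have h1 : τi^l ≤ Ah*τi^l := le_mul_of_one_le_left (by positivity) hAh1
    have h2 : 0 ≤ As*τ^l := mul_nonneg hAs0 (by positivity)
    have h3 : βi^m ≤ β^m := by gcongr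
    calc τi^l ≤ Ah*τi^l + As*τ^l := by linarith
      _ = Bh*β^m + Bs*βi^m := hmain
      _ ≤ Bh*β^m + Bs*β^m := by gcongr
      _ = (Bh+Bs)*β^m := by ring
      _ ≤ c^3*(τi^3)^m := by gcongr; linarith
  have hlm : (l:ℝ) ≤ 3*L + 3*m := by
    have h0 : (0:ℝ) < τi := by linarith
    have h1 := Real.log_le_log (by positivity) hup
    rw [Real.log_mul (by positivity) (by positivity), Real.log_pow, Real.log_pow, Real.log_pow,
      Real.log_pow, ← hL] at h1
    push_cast at h1
    have h2 : 1 ≤ Real.log τi := by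
      rw [Real.le_log_iff_exp_le h0]
      linarith [Real.exp_one_lt_d9]
    have h3 : (l:ℝ)*Real.log τi ≤ (3*L+3*m)*Real.log τi := by
      have := le_mul_of_one_le_right (show 0 ≤ 3*L by linarith) h2
      linarith
    exact le_of_mul_le_mul_right h3 (by linarith)
  have hmbig : 1e12*L ≤ m := by
    norm_num at hlbig ⊢; linarith
  obtain ⟨n, hn⟩ : ∃ n, n = m/7 := ⟨_, rfl⟩
  obtain ⟨ρ, hρ⟩ : ∃ ρ, ρ = m%7 := ⟨_, rfl⟩
  have hm7 : m = 7*n+ρ := by omega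
  have hρ6 : ρ ≤ 6 := by omega
  have hnbig : 1e10*L ≤ n := by
    have h1 : (m:ℝ) = 7*n+ρ := by exact_mod_cast hm7
    have h2 : (ρ:ℝ) ≤ 6 := by exact_mod_cast hρ6
    norm_num at hmbig ⊢; linarith
  have hn1 : 1 ≤ n := by
    have : (1:ℝ) ≤ n := by norm_num at hnbig; linarith
    exact_mod_cast this
  have hpow : ((c:ℝ)^6)^9 < 2^n := by
    rw [← Real.log_lt_log_iff (by positivity) (by positivity), Real.log_pow, Real.log_pow,
      Real.log_pow, ← hL]
    have := Real.log_two_gt_d9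
    push_cast
    norm_num at hnbig
    have h3 : (n:ℝ)*0.5 ≤ n*Real.log 2 := by gcongr; linarith
    linarith
  have hκσ : 0 < κ+σ := by linarith
  have hκσ5 : κ+σ ≤ 5 := by linarith
  have hrcR : (r:ℝ) ≤ c := by exact_mod_cast hrc.le
  have hr0R : (0:ℝ) < r := by exact_mod_cast hr
  obtain ⟨zz, hzz⟩ : ∃ zz, zz = (τ^e)^2/(κ+σ)^2 := ⟨_, rfl⟩
  have hzz1 : (τ^e)^2 = zz*(κ+σ)^2 := by rw [hzz]; field_simp
  have hzz0 : 0 ≤ zz := by rw [hzz]; positivity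
  have hkzz : k*zz ≤ 6.54e-10 := by
    rw [hzz1] at hkz
    have h2 : 0 < (κ+σ)^2 := by positivity
    rw [← mul_assoc] at hkz
    exact le_of_mul_le_mul_right hkz h2
  have hzzZ : 1 ≤ zz*c^6 := by
    have h1 : 1 ≤ τ^e*c^2 := hτr.trans (by gcongr)
    have h2 : 1 ≤ (τ^e*c^2)^2 := one_le_pow₀ h1
    calc 1 ≤ (τ^e*c^2)^2 := h2
      _ = zz*(κ+σ)^2*c^4 := by rw [mul_pow, hzz1]; ring
      _ ≤ zz*5^2*c^4 := by gcongr
      _ = zz*(25*c^4) := by ring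
      _ ≤ zz*(c^2*c^4) := by gcongr; rw [sq]; linarith
      _ = zz*c^6 := by ring
  have hc6 : (c:ℝ)^3 ≤ c^6 := by rw [← hc36]; exact le_mul_of_one_le_left (by linarith) hc31
  have hknsq := nonsqk k hk7 hk13 hk9
  refine core k (a*c) r s a σ η x z κ Δ τ τi β βi (c^6) zz e n ρ l hn1 hρ6 hκ0 hΔ0 hκ
    (by rw [hΔ]; push_cast; ring) hknsq (nonsq_of _ s h4ac hs2)
    (nonsq_of _ t h4kac
      (by rw [← ht2, hb]; ring)) hr2 hs2 hs
    hτ hτi hβ hβi hτ0 hσ hη hk7 hk13 hrel hzz1 hkzz (by linarith [hc6, hc3]) hpow hzzZ Bh Bs Ah As hBh hBs hAh hAs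
    hBh0 hBs0 (by linarith) (hBhc.trans (by gcongr)) ?_ (by rw [← hm7]; exact hmain) hτ1
  calc As*(Ah+As) ≤ c^3 := hAAc
    _ ≤ c^3*(Bh*c^3) := le_mul_of_one_le_right (by linarith) hBhc
    _ = c^6*Bh := by ring

/-- For `k ∈ {7,8,10,11,12,13}`, `a ≥ 10864`, `b = ka` and `c ∈ {c₁⁺, c₂⁺, c₂⁻}`: if
`P_l = Q_m` has a solution `(l, m)` with `m ≥ 3`, then
`l / log(e·l) < 3.34·10¹³·(log(8.09·c²))²` for solutions of Type 1, and
`l / log(e·l) < 6.63·10¹³·(log(8.09·c²))²` for solutions of Type 2. -/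
theorem matveev_upper_bound_c1_plus_c2
    (k a r b c s t : ℤ)
    (hk : k ∈ ({7, 8, 10, 11, 12, 13} : Set ℤ)) (ha : 0 < a) (ha2 : 10864 ≤ a)
    (hr : 0 < r) (hr2 : k * a ^ 2 + 4 = r ^ 2) (hb : b = k * a)
    (hc : c = a + b + 2 * r ∨ c = (a * b + 4) * (a + b + 2 * r) - 4 * r ∨
          c = (a * b + 4) * (a + b - 2 * r) + 4 * r)
    (hs : 0 < s) (hs2 : a * c + 4 = s ^ 2) (ht : 0 < t) (ht2 : b * c + 4 = t ^ 2)
    (x₂ y₂ x₀ z₀ : ℤ)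
    (hx₂ : x₂ = 2) (hy₂ : y₂ = 2 ∨ y₂ = -2)
    (P Q : ℕ → ℤ)
    (hP0 : P 0 = x₂) (hP1 : 2 * P 1 = r * x₂ + a * y₂)
    (hPrec : ∀ i : ℕ, P (i + 2) = r * P (i + 1) - P i)
    (hQ0 : Q 0 = x₀) (hQ1 : 2 * Q 1 = s * x₀ + a * z₀)
    (hQrec : ∀ i : ℕ, Q (i + 2) = s * Q (i + 1) - Q i)
    (l m : ℕ) (hm : 3 ≤ m) (heq : P l = Q m) :
    ((x₀ = 2 ∧ (z₀ = 2 ∨ z₀ = -2)) →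
      (l : ℝ) / Real.log (Real.exp 1 * (l : ℝ)) <
        3.34 * 10 ^ 13 * (Real.log (8.09 * (c : ℝ) ^ 2)) ^ 2) ∧
    ((x₀ = r ∧ (z₀ = t ∨ z₀ = -t)) →
      (l : ℝ) / Real.log (Real.exp 1 * (l : ℝ)) <
        6.63 * 10 ^ 13 * (Real.log (8.09 * (c : ℝ) ^ 2)) ^ 2) := by
  have hk' : 7 ≤ k ∧ k ≤ 13 ∧ k ≠ 9 := by
    simp only [Set.mem_insert_iff, Set.mem_singleton_iff] at hk
    omega
  obtain ⟨hk7, hk13, hk9⟩ := hk'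
  obtain ⟨⟨hbc, hrc⟩, -⟩ := setup k a r b c s hk7 hk13 ha2 hr hr2 hb hc hs hs2
  obtain ⟨η, hη, hyη⟩ : ∃ η : ℤ, η^2 = 1 ∧ y₂ = 2*η := by
    rcases hy₂ with h | h
    · exact ⟨1, by norm_num, by omega⟩
    · exact ⟨-1, by norm_num, by omega⟩
  subst hx₂ hyη
  have key : 0 < x₀ → x₀ ≤ c → x₀^2*c - z₀^2*a = 4*(c-a) → _ := fun h1 h2 h3 =>
    finalLem k a r b c s t hk7 hk13 hk9 ha2 hr hr2 hb hc hs hs2 ht2 η x₀ z₀ hη h1 h2 h3 P Q hP0 hP1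
      hPrec hQ0 hQ1 hQrec l m heq
  have hc2 : 2 ≤ c := by nlinarith
  constructor
  · rintro ⟨hx, hz⟩
    apply key (by omega) (by omega)
    rcases hz with h | h <;> rw [hx, h] <;> ring
  · rintro ⟨hx, hz⟩
    have h4 := key (by omega) (by omega) (by
      have hz2 : z₀^2 = t^2 := by rcases hz with h | h <;> rw [h] <;> ring
      rw [hx, hz2, ← hr2, ← ht2, hb]; ring)
    refine h4.trans_le ?_
    gcongr
    norm_num
end

section
/- Let k ∈ {7, 8, 10, 11, 12, 13} and let a be a positive integer with k·a² + 4 = r² a perfect square. Set b = ka, c = a + b − 2r and s = r − a, and assume a < c < b. Consider a solution of Type 1, i.e. (x₂, y₂) = (2, ±2) and (x₀, z₀) = (2, ±2). If P_l = Q_m for even integers l, m with 1 ≤ l ≤ m, then either (l, m) = (2, 2) or m ≥ (1/4)·(−2 + √(4 + √a)). -/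
theorem aux_cong (a x g u : ℤ) (T : ℕ → ℤ) (hx : a ^ 2 ∣ x - a * u)
    (h0 : T 0 = 2) (h1 : a ^ 2 ∣ T 1 - (2 + a * u + a * g))
    (hrec : ∀ n, T (n + 2) = (2 + x) * T (n + 1) - T n) (n : ℕ) :
    a ^ 2 ∣ T n - (2 + a * u * n ^ 2 + a * g * n) ∧
    a ^ 2 ∣ T (n + 1) - (2 + a * u * (n + 1) ^ 2 + a * g * (n + 1)) := by
  induction n with
  | zero => simpa [h0] using h1
  | succ n ih =>
    obtain ⟨⟨p, hp⟩, ⟨q, hq⟩⟩ := ih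
    obtain ⟨w, hw⟩ := hx
    refine ⟨⟨q, by push_cast; exact hq⟩, ?_⟩
    have e0 : T n = 2 + a * u * n ^ 2 + a * g * n + a ^ 2 * p := by linarith
    have e1 : T (n + 1) = 2 + a * u * (n + 1) ^ 2 + a * g * (n + 1) + a ^ 2 * q := by linarith
    have ex : x = a * u + a ^ 2 * w := by linarith
    rw [hrec n, e0, e1, ex]
    push_cast
    refine ⟨(2 + a * u + a ^ 2 * w) * q - p + w * (2 + a * u * (n + 1) ^ 2 + a * g * (n + 1))
      + u * (u * (n + 1) ^ 2 + g * (n + 1)), ?_⟩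
    ring

theorem aux_even (r : ℤ) (P : ℕ → ℤ) (h : ∀ i : ℕ, P (i + 2) = r * P (i + 1) - P i) (n : ℕ) :
    P (2 * (n + 2)) = (r ^ 2 - 2) * P (2 * (n + 1)) - P (2 * n) := by
  have h1 := h (2 * n)
  have h2 := h (2 * n + 1)
  have h3 := h (2 * n + 2)
  have e : 2 * (n + 2) = 2 * n + 2 + 2 := by ring
  have e' : 2 * (n + 1) = 2 * n + 2 := by ring
  rw [e, e', h3]
  have h2' : P (2 * n + 2 + 1) = r * P (2 * n + 2) - P (2 * n + 1) := h2
  rw [h2']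
  linear_combination h1

theorem aux_sqrt (a j : ℝ) (hj1 : 1 ≤ j) (hR : a ≤ 8 * j ^ 2 + 8 * j) :
    Real.sqrt (4 + Real.sqrt a) ≤ 8 * j + 2 := by
  have s1 : Real.sqrt a ≤ 8 * j ^ 2 + 8 * j :=
    Real.sqrt_le_iff.2 ⟨by positivity, hR.trans (le_self_pow₀ (by linarith [sq_nonneg j]) (by norm_num))⟩
  exact Real.sqrt_le_iff.2 ⟨by positivity, by linarith [sq_nonneg j, (by ring : (8 * j + 2) ^ 2 = 64 * j ^ 2 + 32 * j + 4)]⟩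

/-- For `k ∈ {7,8,10,11,12,13}`, `b = ka`, `c = c₁⁻ = a + b − 2r`, `s = r − a`, with a
solution of Type 1: if `P_l = Q_m` for even `l, m` with `1 ≤ l ≤ m`, then `(l, m) = (2, 2)`
or `m ≥ (1/4)·(−2 + √(4 + √a))`. -/
theorem lower_bound_on_m_c1_minus
    (k a r b c s : ℤ)
    (hk : k ∈ ({7, 8, 10, 11, 12, 13} : Set ℤ)) (ha : 0 < a) (hr : 0 < r)
    (hr2 : k * a ^ 2 + 4 = r ^ 2) (hb : b = k * a)
    (hc : c = a + b - 2 * r) (hs : s = r - a) (hac : a < c) (hcb : c < b)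
    (x₂ y₂ x₀ z₀ : ℤ)
    (hx₂ : x₂ = 2) (hy₂ : y₂ = 2 ∨ y₂ = -2) (hx₀ : x₀ = 2) (hz₀ : z₀ = 2 ∨ z₀ = -2)
    (P Q : ℕ → ℤ)
    (hP0 : P 0 = x₂) (hP1 : 2 * P 1 = r * x₂ + a * y₂)
    (hPrec : ∀ i : ℕ, P (i + 2) = r * P (i + 1) - P i)
    (hQ0 : Q 0 = x₀) (hQ1 : 2 * Q 1 = s * x₀ + a * z₀)
    (hQrec : ∀ i : ℕ, Q (i + 2) = s * Q (i + 1) - Q i)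
    (l m : ℕ) (hleven : Even l) (hmeven : Even m) (hl : 1 ≤ l) (hlm : l ≤ m)
    (heq : P l = Q m) :
    (l = 2 ∧ m = 2) ∨
      (m : ℝ) ≥ (1 / 4) * (-2 + Real.sqrt (4 + Real.sqrt (a : ℝ))) := by
  obtain ⟨e, he, hy⟩ : ∃ e : ℤ, (e = 1 ∨ e = -1) ∧ y₂ = 2 * e := by
    rcases hy₂ with h | h
    · exact ⟨1, by simp, by simp [h]⟩
    · exact ⟨-1, by simp, by simp [h]⟩
  obtain ⟨f, hf, hz⟩ : ∃ f : ℤ, (f = 1 ∨ f = -1) ∧ z₀ = 2 * f := by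
    rcases hz₀ with h | h
    · exact ⟨1, by simp, by simp [h]⟩
    · exact ⟨-1, by simp, by simp [h]⟩
  obtain ⟨i, hi⟩ := hleven.two_dvd
  obtain ⟨j, hj⟩ := hmeven.two_dvd
  subst hi hj hx₂ hx₀ hy hz
  have P1 : P 1 = r + a * e := by linarith
  have Q1 : Q 1 = s + a * f := by linarith
  have P2 := hPrec 0
  have Q2 := hQrec 0
  simp only [zero_add, P1, Q1, hP0, hQ0] at P2 Q2
  have hPi := (aux_cong a (r ^ 2 - 4) (e * r) 0 (fun n => P (2 * n))
    ⟨k, by rw [← hr2]; ring⟩ hP0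
    ⟨k, by simp only [mul_one]; rw [P2]; linear_combination -hr2⟩
    (fun n => by rw [aux_even r P hPrec n]; ring) i).1
  have hQj := (aux_cong a (s ^ 2 - 4) (f * r) (-2 * r) (fun n => Q (2 * n))
    ⟨k + 1, by rw [hs]; linear_combination -hr2⟩ hQ0
    ⟨k + 1 - f, by simp only [mul_one]; rw [Q2, hs]; linear_combination -hr2⟩
    (fun n => by rw [aux_even s Q hQrec n]; ring) j).1
  simp only [heq] at hPi hQj
  have hd : a ^ 2 ∣ a * (r * (e * i + 2 * j ^ 2 - f * j)) := by
    have := dvd_sub hQj hPi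
    ring_nf at this ⊢
    exact this
  have hd2 : a ∣ r * (e * i + 2 * j ^ 2 - f * j) := by
    rw [sq] at hd
    exact (mul_dvd_mul_iff_left ha.ne').1 hd
  have hd3 : a ∣ 4 * (e * i + 2 * j ^ 2 - f * j) := by
    obtain ⟨w, hw⟩ := hd2
    exact ⟨r * w - k * a * (e * i + 2 * j ^ 2 - f * j), by
      linear_combination r * hw + (e * i + 2 * j ^ 2 - f * j) * hr2⟩
  have hi1 : (1 : ℤ) ≤ i := by omega
  have hij : (i : ℤ) ≤ j := by omega
  by_cases hD : (e * i + 2 * j ^ 2 - f * j : ℤ) = 0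
  · left
    have : (j : ℤ) ≤ 1 := by
      rcases he with rfl | rfl <;> rcases hf with rfl | rfl <;> nlinarith
    omega
  · right
    have hDpos : (0 : ℤ) < e * i + 2 * j ^ 2 - f * j := by
      refine lt_of_le_of_ne ?_ (Ne.symm hD)
      rcases he with rfl | rfl <;> rcases hf with rfl | rfl <;> nlinarith
    have hle := Int.le_of_dvd (by linarith) hd3
    have hle2 : a ≤ 8 * j ^ 2 + 8 * j := by
      rcases he with rfl | rfl <;> rcases hf with rfl | rfl <;> nlinarith
    have hj1 : (1 : ℝ) ≤ j := by exact_mod_cast hi1.trans hij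
    have hR : (a : ℝ) ≤ 8 * j ^ 2 + 8 * j := by exact_mod_cast hle2
    have s2 := aux_sqrt a j hj1 hR
    push_cast
    linarith
end

section
/- Let k ∈ {7, 8, 10, 11, 12, 13} and let a be a positive integer with k·a² + 4 = r² a perfect square. Set b = ka and let c be one of c₁⁺ = a + b + 2r, c₂⁺ = (ab+4)(a+b+2r) − 4r, c₂⁻ = (ab+4)(a+b−2r) + 4r; let s, t be the positive integers with ac + 4 = s² and bc + 4 = t². Consider a solution of Type 1, i.e. (x₂, y₂) = (2, ±2) and (x₀, z₀) = (2, ±2). If P_l = Q_m for even integers l, m with 1 ≤ m ≤ l, then either (l, m) = (2, 2) or l ≥ (1/12)·(−2 + √(4 + 3√a)). -/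
theorem aux_congr (a D r e : ℤ) (X : ℕ → ℤ) (h : r ^ 2 = a * D + 4) (h0 : X 0 = 2)
    (h1 : X 1 = r + a * e) (hrec : ∀ i, X (i + 2) = r * X (i + 1) - X i) (n : ℕ) :
    (a ^ 2 ∣ X (2 * n) - (2 + a * (D * n ^ 2 + e * r * n))) ∧
    (a ^ 2 ∣ X (2 * (n + 1)) - (2 + a * (D * (n + 1) ^ 2 + e * r * (n + 1)))) := by
  induction n with
  | zero =>
    refine ⟨by simp [h0], ?_⟩
    have : X 2 = r * X 1 - X 0 := hrec 0
    simp only [zero_add, mul_one, this, h1, h0]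
    refine ⟨0, ?_⟩
    push_cast
    linear_combination h
  | succ n ih =>
    obtain ⟨⟨u, hu⟩, ⟨v, hv⟩⟩ := ih
    refine ⟨by push_cast; exact ⟨v, hv⟩, ?_⟩
    have e1 : X (2 * (n + 1 + 1)) = r * X (2 * n + 3) - X (2 * n + 2) := hrec (2 * n + 2)
    have e2 : X (2 * n + 3) = r * X (2 * n + 2) - X (2 * n + 1) := hrec (2 * n + 1)
    have e3 : X (2 * n + 2) = r * X (2 * n + 1) - X (2 * n) := hrec (2 * n)
    have e4 : X (2 * (n + 1)) = X (2 * n + 2) := rfl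
    rw [e4] at hv
    have e5 : X (2 * (n + 1 + 1)) = (a * D + 2) * X (2 * n + 2) - X (2 * n) := by
      rw [e1, e2]
      linear_combination X (2 * n + 2) * h + e3
    rw [e5]
    refine ⟨(a * D + 2) * v - u + D * (D * (n + 1) ^ 2 + e * r * (n + 1)), ?_⟩
    push_cast
    linear_combination (a * D + 2) * hv - hu

theorem aux_low (r : ℤ) (X : ℕ → ℤ) (hr : 4 ≤ r) (h0 : X 0 = 2) (h1 : r ≤ 2 * X 1)
    (hrec : ∀ i, X (i + 2) = r * X (i + 1) - X i) (n : ℕ) :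
    0 < X n ∧ X n ≤ X (n + 1) ∧ r ^ (n + 1) ≤ 2 ^ (n + 1) * X (n + 1) := by
  induction n with
  | zero => refine ⟨by omega, by simp; omega, by simpa using h1⟩
  | succ n ih =>
    obtain ⟨i1, i2, i3⟩ := ih
    have h2 : r * X (n + 1) ≤ 2 * X (n + 2) := by
      rw [hrec n]; nlinarith
    refine ⟨by omega, ?_, ?_⟩
    · show X (n + 1) ≤ X (n + 2)
      nlinarith
    · show r ^ (n + 2) ≤ 2 ^ (n + 2) * X (n + 2)
      calc r ^ (n + 2) = r * r ^ (n + 1) := by ring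
        _ ≤ r * (2 ^ (n + 1) * X (n + 1)) := by gcongr
        _ = 2 ^ (n + 1) * (r * X (n + 1)) := by ring
        _ ≤ 2 ^ (n + 1) * (2 * X (n + 2)) := by gcongr
        _ = _ := by ring

theorem aux_up (s M : ℤ) (X : ℕ → ℤ) (hs : 2 ≤ s) (hM : s ≤ M) (h0 : X 0 = 2) (h1 : 2 ≤ X 1)
    (h1' : X 1 ≤ M) (hrec : ∀ i, X (i + 2) = s * X (i + 1) - X i) (n : ℕ) :
    0 < X n ∧ X n ≤ X (n + 1) ∧ X (n + 1) ≤ M ^ (n + 1) := by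
  induction n with
  | zero => refine ⟨by omega, by simp; omega, by simpa using h1'⟩
  | succ n ih =>
    obtain ⟨i1, i2, i3⟩ := ih
    refine ⟨by omega, ?_, ?_⟩
    · show X (n + 1) ≤ X (n + 2)
      rw [hrec n]; nlinarith
    · show X (n + 2) ≤ M ^ (n + 2)
      calc X (n + 2) ≤ s * X (n + 1) := by rw [hrec n]; omega
        _ ≤ M * M ^ (n + 1) := by gcongr; omega; omega
        _ = _ := by ring

theorem aux_growth (r s : ℤ) (P Q : ℕ → ℤ) (hr : 100 ≤ r) (hs : 2 ≤ s) (hsM : s ≤ 2 * r ^ 2)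
    (hP0 : P 0 = 2) (hP1 : r ≤ 2 * P 1)
    (hPrec : ∀ i, P (i + 2) = r * P (i + 1) - P i)
    (hQ0 : Q 0 = 2) (hQ1 : 2 ≤ Q 1) (hQ1' : Q 1 ≤ 2 * r ^ 2)
    (hQrec : ∀ i, Q (i + 2) = s * Q (i + 1) - Q i) (n p : ℕ) (hp : 1 ≤ p) (hn : 3 * p ≤ n)
    (h : P (2 * n) = Q (2 * p)) : False := by
  have hmono : Monotone P := monotone_nat_of_le_succ
    (fun i => (aux_low r P (by omega) hP0 hP1 hPrec i).2.1)
  have h1 : P (6 * p) ≤ P (2 * n) := hmono (by omega)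
  have h2 := (aux_low r P (by omega) hP0 hP1 hPrec (6 * p - 1)).2.2
  have h3 := (aux_up s (2 * r ^ 2) Q hs hsM hQ0 hQ1 hQ1' hQrec (2 * p - 1)).2.2
  rw [show 6 * p - 1 + 1 = 6 * p by omega] at h2
  rw [show 2 * p - 1 + 1 = 2 * p by omega] at h3
  have h4 : r ^ (6 * p) ≤ 2 ^ (6 * p) * (2 * r ^ 2) ^ (2 * p) :=
    h2.trans (by gcongr; omega)
  have h5 : (2 ^ 8 * r ^ 4) ^ p < (r ^ 6) ^ p := by
    apply pow_lt_pow_left₀ _ (by positivity) (by omega)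
    have : r ^ 6 = r ^ 2 * r ^ 4 := by ring
    rw [this]
    gcongr
    nlinarith
  have h6 : 2 ^ (6 * p) * (2 * r ^ 2) ^ (2 * p) = (2 ^ 8 * r ^ 4) ^ p := by
    rw [pow_mul, pow_mul, ← mul_pow]; congr 1; ring
  rw [h6, pow_mul] at h4
  omega

theorem aux_small (a x B : ℤ) (hd : a ∣ x) (h1 : |x| ≤ B) (h2 : B < a) : x = 0 :=
  Int.eq_zero_of_abs_lt_dvd hd (by omega)

/-- case of the smaller third element -/
theorem aux_c1 (a k r c s e e' : ℤ) (n p : ℕ) (hr2 : k * a ^ 2 + 4 = r ^ 2)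
    (he : e = 1 ∨ e = -1) (he' : e' = 1 ∨ e' = -1)
    (hc : a ∣ c - 2 * r) (hs : a ∣ s - r) (hp : 1 ≤ p) (hpn : p ≤ n)
    (hbig : (100 * (n : ℤ) ^ 2) < a)
    (h : a ∣ e * r * n - c * p ^ 2 - e' * s * p) :
    (n = 1 ∧ p = 1) ∨ 3 * p ≤ n := by
  obtain ⟨u, hu⟩ := hc
  obtain ⟨v, hv⟩ := hs
  obtain ⟨w, hw⟩ := h
  have hd : a ∣ 4 * (e * n - 2 * p ^ 2 - e' * p) := by
    refine ⟨r * w + r * u * p ^ 2 + e' * r * v * p - k * a * (e * n - 2 * p ^ 2 - e' * p), ?_⟩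
    linear_combination r * hw + r * p ^ 2 * hu + e' * r * p * hv
      + (e * n - 2 * p ^ 2 - e' * p) * hr2
  have hp' : (1 : ℤ) ≤ p := by exact_mod_cast hp
  have hpn' : (p : ℤ) ≤ n := by exact_mod_cast hpn
  have hz := aux_small _ _ (100 * (n : ℤ) ^ 2) hd (by
    rw [abs_le]
    rcases he with rfl | rfl <;> rcases he' with rfl | rfl <;> constructor <;> nlinarith) hbig
  have key : 3 * (p : ℤ) ≤ n ∨ (n = (1 : ℤ) ∧ p = (1 : ℤ)) := by
    rcases hp.lt_or_eq with h2 | h2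
    · left
      have h2' : (2 : ℤ) ≤ p := by exact_mod_cast h2
      rcases he with rfl | rfl <;> rcases he' with rfl | rfl <;> nlinarith
    · have hp1 : (p : ℤ) = 1 := by exact_mod_cast h2.symm
      rw [hp1] at hz ⊢
      rcases he with rfl | rfl <;> rcases he' with rfl | rfl <;> omega
  omega

/-- case of the larger third element -/
theorem aux_c2 (a k r c s e e' d : ℤ) (n p : ℕ) (hr2 : k * a ^ 2 + 4 = r ^ 2)
    (he : e = 1 ∨ e = -1) (he' : e' = 1 ∨ e' = -1) (hdd : d = 1 ∨ d = -1)
    (hc : a ∣ c - 4 * d * r) (hs : a ∣ s - 2) (hp : 1 ≤ p) (hpn : p ≤ n)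
    (hbig : (1000 * ((n : ℤ) ^ 2) ^ 2) < a)
    (h : a ∣ e * r * n - c * p ^ 2 - e' * s * p) :
    3 * p ≤ n := by
  have hd1 : a ∣ 4 * (e * n - 4 * d * p ^ 2) - 2 * e' * r * p := by
    obtain ⟨u, hu⟩ := hc
    obtain ⟨v, hv⟩ := hs
    obtain ⟨w, hw⟩ := h
    refine ⟨r * w + r * u * p ^ 2 + e' * r * v * p - k * a * (e * n - 4 * d * p ^ 2), ?_⟩
    linear_combination r * hw + r * p ^ 2 * hu + e' * r * p * hv
      + (e * n - 4 * d * p ^ 2) * hr2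
  have hee : e' ^ 2 = 1 := by rcases he' with rfl | rfl <;> norm_num
  have hd : a ∣ 16 * ((e * n - 4 * d * p ^ 2) ^ 2 - p ^ 2) := by
    obtain ⟨w, hw⟩ := hd1
    refine ⟨w * (4 * (e * n - 4 * d * p ^ 2) + 2 * e' * r * p) + 4 * k * a * p ^ 2, ?_⟩
    linear_combination (4 * (e * n - 4 * d * p ^ 2) + 2 * e' * r * p) * hw
      + 4 * r ^ 2 * p ^ 2 * hee - 4 * p ^ 2 * hr2
  have hp' : (1 : ℤ) ≤ p := by exact_mod_cast hp
  have hpn' : (p : ℤ) ≤ n := by exact_mod_cast hpn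
  have hb1 : |e * n - 4 * d * p ^ 2| ≤ 5 * (n : ℤ) ^ 2 := by
    rw [abs_le]
    rcases he with rfl | rfl <;> rcases hdd with rfl | rfl <;> constructor <;> nlinarith
  have hb2 : (e * n - 4 * d * p ^ 2) ^ 2 ≤ (5 * (n : ℤ) ^ 2) ^ 2 := by
    rw [sq_le_sq]; rwa [abs_of_nonneg (a := 5 * (n : ℤ) ^ 2) (by positivity)]
  have hb3 : (p : ℤ) ^ 2 ≤ ((n : ℤ) ^ 2) ^ 2 := by
    have : (p : ℤ) ≤ (n : ℤ) ^ 2 := by nlinarith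
    gcongr
  have hz := aux_small _ _ (1000 * ((n : ℤ) ^ 2) ^ 2) hd (by
    rw [abs_le]
    constructor <;> nlinarith [sq_nonneg (e * n - 4 * d * (p : ℤ) ^ 2), sq_nonneg (p : ℤ)]) hbig
  have hz2 : (e * n - 4 * d * (p : ℤ) ^ 2) ^ 2 = (p : ℤ) ^ 2 := by linarith
  have key : 3 * (p : ℤ) ≤ n := by
    rcases sq_eq_sq_iff_eq_or_eq_neg.mp hz2 with h3 | h3 <;>
    rcases he with rfl | rfl <;> rcases hdd with rfl | rfl <;> nlinarith
  exact_mod_cast key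

theorem aux_sb (a r s : ℤ) (ha : 1000 < a) (hra : 2 * a < r)
    (h : s = r + a ∨ ∃ d : ℤ, (d = 1 ∨ d = -1) ∧ s = r * (r + d * a) - 2) :
    r + a ≤ s ∧ s + a ≤ 2 * r ^ 2 := by
  have h1 : 0 < r * (r - 2 * a) := mul_pos (by linarith) (by linarith)
  have h2 : 0 < r * (a - 1000) := mul_pos (by linarith) (by linarith)
  rcases h with h | ⟨d, hd | hd, h⟩ <;> subst h
  · constructor <;> linarith
  · subst hd; constructor <;> linarith
  · subst hd; constructor <;> linarith

set_option maxHeartbeats 2000000 in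
/-- For `k ∈ {7,8,10,11,12,13}`, `b = ka` and `c ∈ {c₁⁺, c₂⁺, c₂⁻}`, with a solution of
Type 1: if `P_l = Q_m` for even `l, m` with `1 ≤ m ≤ l`, then `(l, m) = (2, 2)` or
`l ≥ (1/12)·(−2 + √(4 + 3√a))`. -/
theorem lower_bound_on_l_c1_plus_c2
    (k a r b c s t : ℤ)
    (hk : k ∈ ({7, 8, 10, 11, 12, 13} : Set ℤ)) (ha : 0 < a) (hr : 0 < r)
    (hr2 : k * a ^ 2 + 4 = r ^ 2) (hb : b = k * a)
    (hc : c = a + b + 2 * r ∨ c = (a * b + 4) * (a + b + 2 * r) - 4 * r ∨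
          c = (a * b + 4) * (a + b - 2 * r) + 4 * r)
    (hs : 0 < s) (hs2 : a * c + 4 = s ^ 2) (ht : 0 < t) (ht2 : b * c + 4 = t ^ 2)
    (x₂ y₂ x₀ z₀ : ℤ)
    (hx₂ : x₂ = 2) (hy₂ : y₂ = 2 ∨ y₂ = -2) (hx₀ : x₀ = 2) (hz₀ : z₀ = 2 ∨ z₀ = -2)
    (P Q : ℕ → ℤ)
    (hP0 : P 0 = x₂) (hP1 : 2 * P 1 = r * x₂ + a * y₂)
    (hPrec : ∀ i : ℕ, P (i + 2) = r * P (i + 1) - P i)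
    (hQ0 : Q 0 = x₀) (hQ1 : 2 * Q 1 = s * x₀ + a * z₀)
    (hQrec : ∀ i : ℕ, Q (i + 2) = s * Q (i + 1) - Q i)
    (l m : ℕ) (hleven : Even l) (hmeven : Even m) (hm : 1 ≤ m) (hml : m ≤ l)
    (heq : P l = Q m) :
    (l = 2 ∧ m = 2) ∨
      (l : ℝ) ≥ (1 / 12) * (-2 + Real.sqrt (4 + 3 * Real.sqrt (a : ℝ))) := by
  have hy : ∃ e : ℤ, (e = 1 ∨ e = -1) ∧ y₂ = 2 * e := by
    rcases hy₂ with h | h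
    · exact ⟨1, by simp, by omega⟩
    · exact ⟨-1, by simp, by omega⟩
  have hz : ∃ e : ℤ, (e = 1 ∨ e = -1) ∧ z₀ = 2 * e := by
    rcases hz₀ with h | h
    · exact ⟨1, by simp, by omega⟩
    · exact ⟨-1, by simp, by omega⟩
  obtain ⟨e, he, rfl⟩ := hy
  obtain ⟨e', he', rfl⟩ := hz
  obtain ⟨n, rfl⟩ := hleven
  obtain ⟨p, rfl⟩ := hmeven
  rw [← two_mul] at *
  rw [← two_mul] at *
  subst hx₂ hx₀
  by_contra hcon
  push Not at hcon
  obtain ⟨hne, hlt⟩ := hcon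
  have hp : 1 ≤ p := by omega
  have hpn : p ≤ n := by omega
  have hp' : (1 : ℤ) ≤ p := by exact_mod_cast hp
  have hpn' : (p : ℤ) ≤ n := by exact_mod_cast hpn
  have hbig : (192 * (n : ℤ) ^ 2) ^ 2 < a := by
    have hn0 : (0 : ℝ) ≤ n := by positivity
    have haR : (0 : ℝ) ≤ (a : ℝ) := by exact_mod_cast ha.le
    have g1 : 24 * (n : ℝ) + 2 < Real.sqrt (4 + 3 * Real.sqrt (a : ℝ)) := by
      push_cast at hlt; linarith
    have g2 := (Real.lt_sqrt (by positivity)).mp g1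
    have g3 : 192 * (n : ℝ) ^ 2 < Real.sqrt (a : ℝ) := by nlinarith
    have g4 := (Real.lt_sqrt (by positivity)).mp g3
    exact_mod_cast g4
  have hn2 : (1 : ℤ) ≤ (n : ℤ) ^ 2 := by nlinarith
  have hB2 : 1000 * ((n : ℤ) ^ 2) ^ 2 < a := by
    have : 0 ≤ ((n : ℤ) ^ 2) ^ 2 := by positivity
    linarith
  have hB1 : 100 * (n : ℤ) ^ 2 < a := by
    have : (n : ℤ) ^ 2 ≤ ((n : ℤ) ^ 2) ^ 2 := le_self_pow₀ hn2 two_ne_zero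
    linarith
  have hk7 : 7 ≤ k := by
    simp only [Set.mem_insert_iff, Set.mem_singleton_iff] at hk; omega
  have hra : 2 * a < r := by
    by_contra hh
    push Not at hh
    nlinarith
  have ha1000 : 1000 < a := by nlinarith
  have hP1' : P 1 = r + a * e := by linarith
  have hQ1' : Q 1 = s + a * e' := by linarith
  have hae : -a ≤ a * e ∧ a * e ≤ a := by rcases he with rfl | rfl <;> constructor <;> linarith
  have hae' : -a ≤ a * e' ∧ a * e' ≤ a := by
    rcases he' with rfl | rfl <;> constructor <;> linarith
  have cP := (aux_congr a b r e P (by rw [hb]; linarith) hP0 hP1' hPrec n).1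
  have cQ := (aux_congr a c s e' Q (by linarith) hQ0 hQ1' hQrec p).1
  have hdiv : a ∣ e * r * n - c * p ^ 2 - e' * s * p := by
    rw [heq] at cP
    obtain ⟨u, hu⟩ := cP
    obtain ⟨v, hv⟩ := cQ
    refine ⟨v - u - k * n ^ 2, ?_⟩
    apply mul_left_cancel₀ ha.ne'
    rw [hb] at hu
    linear_combination hv - hu
  have hsc : (s = r + a ∧ c = a + b + 2 * r) ∨
      ∃ d : ℤ, (d = 1 ∨ d = -1) ∧ s = r * (r + d * a) - 2 ∧
        c = (a * b + 4) * (a + b + d * 2 * r) - d * 4 * r := by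
    rcases hc with h | h | h
    · left
      refine ⟨?_, h⟩
      have : s ^ 2 = (r + a) ^ 2 := by rw [← hs2, h, hb]; linear_combination hr2
      exact (pow_left_inj₀ hs.le (by linarith) two_ne_zero).mp this
    · right
      refine ⟨1, by simp, ?_, by rw [h]; ring⟩
      have : s ^ 2 = (r * (r + 1 * a) - 2) ^ 2 := by
        rw [← hs2, h, hb, show a * (k * a) + 4 = r ^ 2 by linarith]
        linear_combination r ^ 2 * hr2
      exact (pow_left_inj₀ hs.le (by nlinarith) two_ne_zero).mp this
    · right
      refine ⟨-1, by simp, ?_, by rw [h]; ring⟩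
      have : s ^ 2 = (r * (r + (-1) * a) - 2) ^ 2 := by
        rw [← hs2, h, hb, show a * (k * a) + 4 = r ^ 2 by linarith]
        linear_combination r ^ 2 * hr2
      exact (pow_left_inj₀ hs.le (by nlinarith) two_ne_zero).mp this
  have hsb : r + a ≤ s ∧ s + a ≤ 2 * r ^ 2 := by
    refine aux_sb a r s ha1000 hra ?_
    rcases hsc with ⟨h, -⟩ | ⟨d, hd, h, -⟩
    · exact Or.inl h
    · exact Or.inr ⟨d, hd, h⟩
  have h3 : 3 * p ≤ n := by
    rcases hsc with ⟨h, h'⟩ | ⟨d, hd, h, h'⟩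
    · have := aux_c1 a k r c s e e' n p hr2 he he' ⟨1 + k, by rw [h', hb]; ring⟩
        ⟨1, by rw [h]; ring⟩ hp hpn hB1 hdiv
      rcases this with h4 | h4
      · exact absurd (by omega) (hne (by omega))
      · exact h4
    · refine aux_c2 a k r c s e e' d n p hr2 he he' hd
        ⟨b * (a + b + d * 2 * r) + 4 * (1 + k), by rw [h', hb]; ring⟩
        ⟨k * a + r * d, by rw [h]; linear_combination -hr2⟩ hp hpn hB2 hdiv
  exact aux_growth r s P Q (by linarith) (by linarith) (by linarith) hP0 (by linarith) hPrec hQ0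
    (by linarith) (by linarith) hQrec n p hp h3 heq
end

section
/- Let k ∈ {7, 8, 10, 11, 12, 13} and let a be a positive integer with k·a² + 4 = r² a perfect square. Set b = ka and let c be one of c₂⁺ = (ab+4)(a+b+2r) − 4r, c₂⁻ = (ab+4)(a+b−2r) + 4r; let s, t be the positive integers with ac + 4 = s² and bc + 4 = t². Consider a solution of Type 2, i.e. (x₂, y₂) = (2, ±2) and (x₀, z₀) = (r, ±t). If P_l = Q_m for some integers l and odd m with m ≥ 3, then m > C_k·a, where C₇ = (14 − 5√7.1)/4, C₈ = (6√8 − 16)/4, C₁₀ = (20 − 6√10.1)/4, C₁₁ = (7√11 − 22)/4, C₁₂ = (7√12 − 24)/4, C₁₃ = (26 − 7√13.1)/4. -/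
lemma auxP (r a : ℤ) (P : ℕ → ℤ) (h0 : P 0 = 2) (h1 : r ∣ P 1 - a ∨ r ∣ P 1 + a)
    (hrec : ∀ i : ℕ, P (i + 2) = r * P (i + 1) - P i) (i : ℕ) :
    (r ∣ P (2 * i) - 2 ∨ r ∣ P (2 * i) + 2) ∧ (r ∣ P (2 * i + 1) - a ∨ r ∣ P (2 * i + 1) + a) := by
  induction i with
  | zero => exact ⟨Or.inl (by simp [h0]), by simpa using h1⟩
  | succ j ih =>
    have e1 : P (2 * (j + 1)) = r * P (2 * j + 1) - P (2 * j) := hrec (2 * j)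
    have e2 : P (2 * (j + 1) + 1) = r * P (2 * j + 2) - P (2 * j + 1) := hrec (2 * j + 1)
    rw [e1, e2]
    refine ⟨?_, ?_⟩
    · rcases ih.1 with ⟨q, h⟩ | ⟨q, h⟩
      · exact Or.inr ⟨P (2 * j + 1) - q, by linear_combination -h⟩
      · exact Or.inl ⟨P (2 * j + 1) - q, by linear_combination -h⟩
    · rcases ih.2 with ⟨q, h⟩ | ⟨q, h⟩
      · exact Or.inr ⟨P (2 * j + 2) - q, by linear_combination -h⟩
      · exact Or.inl ⟨P (2 * j + 2) - q, by linear_combination -h⟩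

lemma auxQ (r s e : ℤ) (Q : ℕ → ℤ) (he : e * e = 1) (hs : r ∣ s - 2 * e) (h0 : r ∣ Q 0)
    (hrec : ∀ i : ℕ, Q (i + 2) = s * Q (i + 1) - Q i) (i : ℕ) :
    r ∣ Q i - e ^ (i + 1) * i * Q 1 ∧ r ∣ Q (i + 1) - e ^ (i + 2) * (i + 1) * Q 1 := by
  induction i with
  | zero =>
    refine ⟨by simpa using h0, ?_⟩
    have : e ^ 2 = 1 := by rw [sq, he]
    simp [this]
  | succ j ih =>
    obtain ⟨⟨u, hu⟩, ⟨v, hv⟩⟩ := ih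
    obtain ⟨w, hw⟩ := hs
    refine ⟨⟨v, ?_⟩, ⟨w * Q (j + 1) + 2 * e * v - u, ?_⟩⟩
    · push_cast; linear_combination hv
    · rw [hrec j]
      push_cast
      have e3 : e ^ (j + 1 + 2) = e ^ (j + 1) := by rw [pow_add, sq, he, mul_one]
      have e2 : e ^ (j + 2) = e ^ (j + 1) * e := pow_succ _ _
      rw [e2] at hv
      rw [e3]
      linear_combination hw * Q (j + 1) + 2 * e * hv - hu + 2 * (j + 1) * Q 1 * e ^ (j + 1) * he

lemma auxQ' (r s a e : ℤ) (Q : ℕ → ℤ) (he : e = 1 ∨ e = -1) (hs : r ∣ s - 2 * e) (h0 : r ∣ Q 0)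
    (h1 : r ∣ Q 1 - a ∨ r ∣ Q 1 + a)
    (hrec : ∀ i : ℕ, Q (i + 2) = s * Q (i + 1) - Q i) (i : ℕ) :
    r ∣ Q i - i * a ∨ r ∣ Q i + i * a := by
  have he2 : e * e = 1 := by rcases he with h | h <;> simp [h]
  obtain ⟨u, hu⟩ := (auxQ r s e Q he2 hs h0 hrec i).1
  have : e ^ (i + 1) = 1 ∨ e ^ (i + 1) = -1 := by
    rcases he with h | h
    · left; simp [h]
    · rw [h]; exact neg_one_pow_eq_or ℤ _
  rcases this with h | h <;> rw [h] at hu <;> rcases h1 with ⟨v, hv⟩ | ⟨v, hv⟩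
  · exact Or.inl ⟨u + i * v, by linear_combination hu + i * hv⟩
  · exact Or.inr ⟨u + i * v, by linear_combination hu + i * hv⟩
  · exact Or.inr ⟨u - i * v, by linear_combination hu - i * hv⟩
  · exact Or.inl ⟨u - i * v, by linear_combination hu - i * hv⟩

/-- the key congruences -/
lemma auxMain (a r b c s t : ℤ) (hr : 0 < r)
    (hr2 : a * b + 4 = r ^ 2)
    (hc : c = (a * b + 4) * (a + b + 2 * r) - 4 * r ∨
          c = (a * b + 4) * (a + b - 2 * r) + 4 * r)
    (hs2 : a * c + 4 = s ^ 2) (ht2 : b * c + 4 = t ^ 2)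
    (y₂ z₀ : ℤ)
    (hy₂ : y₂ = 2 ∨ y₂ = -2) (hz₀ : z₀ = t ∨ z₀ = -t)
    (P Q : ℕ → ℤ)
    (hP0 : P 0 = 2) (hP1 : 2 * P 1 = r * 2 + a * y₂)
    (hPrec : ∀ i : ℕ, P (i + 2) = r * P (i + 1) - P i)
    (hQ0 : Q 0 = r) (hQ1 : 2 * Q 1 = s * r + a * z₀)
    (hQrec : ∀ i : ℕ, Q (i + 2) = s * Q (i + 1) - Q i)
    (l m : ℕ) (heq : P l = Q m) :
    (r ∣ 4 * m - 4 ∨ r ∣ 4 * m + 4) ∨ (r ∣ 4 * m - 2 * b ∨ r ∣ 4 * m + 2 * b) := by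
  have p1 : r ∣ P 1 - a ∨ r ∣ P 1 + a := by
    rcases hy₂ with rfl | rfl
    · exact Or.inl ⟨1, by linarith⟩
    · exact Or.inr ⟨1, by linarith⟩
  have hd : ∃ d : ℤ, (d = 1 ∨ d = -1) ∧ c = r ^ 2 * (a + b + 2 * d * r) - 4 * d * r := by
    rw [hr2] at hc
    rcases hc with h | h
    · exact ⟨1, Or.inl rfl, by rw [h]; ring⟩
    · exact ⟨-1, Or.inr rfl, by rw [h]; ring⟩
  obtain ⟨d, hd1, hcd⟩ := hd
  have hdd : d * d = 1 := by rcases hd1 with h | h <;> simp [h]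
  have hsf : s ^ 2 = (r ^ 2 + d * a * r - 2) ^ 2 := by
    rw [← hs2, hcd]
    linear_combination (r^2 + 0) * hr2 - a^2*r^2 * hdd + 2*d*a*r*0
  have htf : t ^ 2 = (r ^ 2 + d * b * r - 2) ^ 2 := by
    rw [← ht2, hcd]
    linear_combination (r^2 + 0) * hr2 - b^2*r^2 * hdd
  rw [sq_eq_sq_iff_eq_or_eq_neg] at hsf htf
  have hz : z₀ = (r ^ 2 + d * b * r - 2) ∨ z₀ = -(r ^ 2 + d * b * r - 2) := by
    rcases hz₀ with rfl | rfl
    · exact htf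
    · rcases htf with h | h
      · right; rw [h]
      · left; rw [h]; ring
  have key : a * (r ^ 2 + d * b * r - 2) = a * r^2 + d * r * (r^2 - 4) - 2 * a := by
    linear_combination d * r * hr2
  have q1 : r ∣ Q 1 - a ∨ r ∣ Q 1 + a := by
    rcases hd1 with rfl | rfl <;> rcases hsf with h | h <;> rcases hz with h' | h' <;>
      rw [h, h'] at hQ1
    · exact Or.inr ⟨r^2 + a*r - 3, by linarith⟩
    · exact Or.inl ⟨1, by linarith⟩
    · exact Or.inr ⟨-1, by linarith⟩
    · exact Or.inl ⟨-(r^2 + a*r - 3), by linarith⟩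
    · exact Or.inr ⟨1, by linarith⟩
    · exact Or.inl ⟨r^2 - a*r - 3, by linarith⟩
    · exact Or.inr ⟨-(r^2 - a*r - 3), by linarith⟩
    · exact Or.inl ⟨-1, by linarith⟩
  have hQ : r ∣ Q m - m * a ∨ r ∣ Q m + m * a := by
    rcases hsf with h | h
    · exact auxQ' r s a (-1) Q (Or.inr rfl) ⟨r + d * a, by rw [h]; ring⟩ (by rw [hQ0]) q1 hQrec m
    · exact auxQ' r s a 1 Q (Or.inl rfl) ⟨-(r + d * a), by rw [h]; ring⟩ (by rw [hQ0]) q1 hQrec m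
  rw [← heq] at hQ
  rcases Nat.even_or_odd' l with ⟨i, hi | hi⟩
  · right
    have hP := (auxP r a P hP0 p1 hPrec i).1
    rw [← hi] at hP
    rcases hP with ⟨u, hu⟩ | ⟨u, hu⟩ <;> rcases hQ with ⟨v, hv⟩ | ⟨v, hv⟩
    · right; exact ⟨m * r + b * (v - u), by linear_combination m * hr2 + b * (hv - hu)⟩
    · left; exact ⟨m * r - b * (v - u), by linear_combination m * hr2 - b * (hv - hu)⟩
    · left; exact ⟨m * r + b * (v - u), by linear_combination m * hr2 + b * (hv - hu)⟩
    · right; exact ⟨m * r - b * (v - u), by linear_combination m * hr2 - b * (hv - hu)⟩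
  · left
    have hP := (auxP r a P hP0 p1 hPrec i).2
    rw [← hi] at hP
    rcases hP with ⟨u, hu⟩ | ⟨u, hu⟩ <;> rcases hQ with ⟨v, hv⟩ | ⟨v, hv⟩
    · left; exact ⟨(m-1) * r + b * (v - u), by linear_combination (m-1) * hr2 + b * (hv - hu)⟩
    · right; exact ⟨(m+1) * r - b * (v - u), by linear_combination (m+1) * hr2 - b * (hv - hu)⟩
    · right; exact ⟨(m+1) * r + b * (v - u), by linear_combination (m+1) * hr2 + b * (hv - hu)⟩
    · left; exact ⟨(m-1) * r - b * (v - u), by linear_combination (m-1) * hr2 - b * (hv - hu)⟩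

lemma auxFin (k a r b : ℤ) (m : ℕ) (n : ℤ) (hr : 0 < r) (hm : 3 ≤ m) (hb : b = k * a)
    (h1 : n * r < 2 * (k * a)) (h2 : 2 * (k * a) < (n + 1) * r)
    (H : (r ∣ 4 * m - 4 ∨ r ∣ 4 * m + 4) ∨ (r ∣ 4 * m - 2 * b ∨ r ∣ 4 * m + 2 * b)) :
    3 * r ≤ 16 * m ∨ 2 * (k * a) - n * r ≤ 4 * m ∨ (n + 1) * r - 2 * (k * a) ≤ 4 * m := by
  subst hb
  have hm' : (3 : ℤ) ≤ m := by exact_mod_cast hm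
  rcases H with (h | h) | (⟨q, h⟩ | ⟨q, h⟩)
  · have := Int.le_of_dvd (by linarith) h
    left; linarith
  · have := Int.le_of_dvd (by linarith) h
    left; linarith
  · right; left
    have : -(n + 1) < q := by
      by_contra hq
      push Not at hq
      nlinarith
    have : -n ≤ q := by omega
    nlinarith
  · right; right
    have : n < q := by
      by_contra hq
      push Not at hq
      nlinarith
    have : n + 1 ≤ q := by omega
    nlinarith

/-- real form: `10 ≤ a`, rational bounds `p < √k`, `√(k+1/10) < p'`. -/
lemma auxReal (k a r b : ℤ) (m : ℕ) (n : ℤ) (p p' C : ℝ) (ha : 10 ≤ a) (hr : 0 < r) (hm : 3 ≤ m)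
    (hb : b = k * a) (hr2 : k * a ^ 2 + 4 = r ^ 2)
    (hp : 0 < p) (hp' : 0 < p') (hpk : p ^ 2 ≤ k) (hpk' : (k : ℝ) + 1 / 10 ≤ p' ^ 2)
    (hn : 0 ≤ n) (h1 : n * p' ≤ 2 * k) (h2 : 2 * k ≤ (n + 1) * p)
    (hC1 : 16 * C ≤ 3 * p)
    (hC2 : 4 * C * a < 2 * (k * a) - n * r) (hC3 : 4 * C * a < (n + 1) * r - 2 * (k * a))
    (H : (r ∣ 4 * m - 4 ∨ r ∣ 4 * m + 4) ∨ (r ∣ 4 * m - 2 * b ∨ r ∣ 4 * m + 2 * b)) :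
    (m : ℝ) > C * a := by
  have hR : (k : ℝ) * a ^ 2 + 4 = r ^ 2 := by exact_mod_cast hr2
  have hA : (10 : ℝ) ≤ a := by exact_mod_cast ha
  have hr' : (0 : ℝ) < r := by exact_mod_cast hr
  have b1 : p * a < r := by
    apply lt_of_pow_lt_pow_left₀ 2 hr'.le
    nlinarith [mul_le_mul_of_nonneg_right hpk (sq_nonneg (a : ℝ))]
  have b2 : (r : ℝ) < p' * a := by
    apply lt_of_pow_lt_pow_left₀ 2 (by positivity)
    nlinarith [mul_le_mul_of_nonneg_right hpk' (sq_nonneg (a : ℝ))]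
  have hn' : (0 : ℝ) ≤ n := by exact_mod_cast hn
  have kpos : (0:ℝ) < k := by nlinarith
  have g1 : (n : ℝ) * r < 2 * (k * a) := by
    rcases hn'.eq_or_lt with h | h
    · rw [← h]; have : (0:ℝ) < k * a := by positivity
      linarith
    · nlinarith
  have g2 : 2 * ((k : ℝ) * a) < (n + 1) * r := by nlinarith
  have := auxFin k a r b m n hr hm hb (by exact_mod_cast g1) (by exact_mod_cast g2) H
  rcases this with h | h | h
  · have h : (3 : ℝ) * r ≤ 16 * m := by exact_mod_cast h
    nlinarith
  · have h : 2 * ((k : ℝ) * a) - n * r ≤ 4 * m := by exact_mod_cast h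
    linarith
  · have h : ((n : ℝ) + 1) * r - 2 * (k * a) ≤ 4 * m := by exact_mod_cast h
    linarith

lemma auxR1 (k a r : ℤ) (q : ℝ) (ha : 10 ≤ a) (hr : 0 < r) (hr2 : k * a ^ 2 + 4 = r ^ 2)
    (hq : q = k + 1 / 10) : (r : ℝ) < Real.sqrt q * a := by
  have hR : (k : ℝ) * a ^ 2 + 4 = r ^ 2 := by exact_mod_cast hr2
  have hA : (10 : ℝ) ≤ a := by exact_mod_cast ha
  have hr' : (0 : ℝ) < r := by exact_mod_cast hr
  have hq0 : 0 ≤ q := by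
    by_contra hh
    push Not at hh
    nlinarith [mul_pos (neg_pos.2 hh) (show (0:ℝ) < a^2 by positivity)]
  apply lt_of_pow_lt_pow_left₀ 2 (by positivity)
  rw [mul_pow, Real.sq_sqrt hq0, hq]
  nlinarith

lemma auxR2 (k a r : ℤ) (q : ℝ) (ha : 10 ≤ a) (hr : 0 < r) (hr2 : k * a ^ 2 + 4 = r ^ 2)
    (hq : q = k) (hk : 0 ≤ k) : Real.sqrt q * a < r := by
  have hR : (k : ℝ) * a ^ 2 + 4 = r ^ 2 := by exact_mod_cast hr2
  have hr' : (0 : ℝ) < r := by exact_mod_cast hr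
  have hk' : (0 : ℝ) ≤ k := by exact_mod_cast hk
  apply lt_of_pow_lt_pow_left₀ 2 hr'.le
  rw [mul_pow, Real.sq_sqrt (by rw [hq]; exact hk'), hq]
  linarith


/-- For `k ∈ {7,8,10,11,12,13}`, `b = ka` and `c ∈ {c₂⁺, c₂⁻}`, with a solution of Type 2
(`x₂ = 2`, `y₂ = ±2`, `x₀ = r`, `z₀ = ±t`): if `P_l = Q_m` for some `l` and odd `m ≥ 3`,
then `m > C_k·a` with the listed constants `C_k`. -/
theorem lower_bound_on_m_type2_c2
    (k a r b c s t : ℤ)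
    (hk : k ∈ ({7, 8, 10, 11, 12, 13} : Set ℤ)) (ha : 0 < a) (hr : 0 < r)
    (hr2 : k * a ^ 2 + 4 = r ^ 2) (hb : b = k * a)
    (hc : c = (a * b + 4) * (a + b + 2 * r) - 4 * r ∨
          c = (a * b + 4) * (a + b - 2 * r) + 4 * r)
    (hs : 0 < s) (hs2 : a * c + 4 = s ^ 2) (ht : 0 < t) (ht2 : b * c + 4 = t ^ 2)
    (x₂ y₂ x₀ z₀ : ℤ)
    (hx₂ : x₂ = 2) (hy₂ : y₂ = 2 ∨ y₂ = -2) (hx₀ : x₀ = r) (hz₀ : z₀ = t ∨ z₀ = -t)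
    (P Q : ℕ → ℤ)
    (hP0 : P 0 = x₂) (hP1 : 2 * P 1 = r * x₂ + a * y₂)
    (hPrec : ∀ i : ℕ, P (i + 2) = r * P (i + 1) - P i)
    (hQ0 : Q 0 = x₀) (hQ1 : 2 * Q 1 = s * x₀ + a * z₀)
    (hQrec : ∀ i : ℕ, Q (i + 2) = s * Q (i + 1) - Q i)
    (l m : ℕ) (hmodd : Odd m) (hm : 3 ≤ m) (heq : P l = Q m) :
    (k = 7 → (m : ℝ) > (14 - 5 * Real.sqrt 7.1) / 4 * (a : ℝ)) ∧
    (k = 8 → (m : ℝ) > (6 * Real.sqrt 8 - 16) / 4 * (a : ℝ)) ∧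
    (k = 10 → (m : ℝ) > (20 - 6 * Real.sqrt 10.1) / 4 * (a : ℝ)) ∧
    (k = 11 → (m : ℝ) > (7 * Real.sqrt 11 - 22) / 4 * (a : ℝ)) ∧
    (k = 12 → (m : ℝ) > (7 * Real.sqrt 12 - 24) / 4 * (a : ℝ)) ∧
    (k = 13 → (m : ℝ) > (26 - 7 * Real.sqrt 13.1) / 4 * (a : ℝ)) := by
  subst hx₂ hx₀
  have hH := auxMain a x₀ b c s t hr (by rw [← hr2, hb]; ring) hc hs2 ht2 y₂ z₀ hy₂ hz₀ P Q hP0 hP1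
    hPrec hQ0 hQ1 hQrec l m heq
  have hm3 : (3 : ℝ) ≤ m := by exact_mod_cast hm
  have ha0 : (0 : ℝ) < a := by exact_mod_cast ha
  have small : ∀ C : ℝ, C < 1 / 3 → a < 10 → (m : ℝ) > C * a := by
    intro C hC h
    have : (a : ℝ) ≤ 9 := by exact_mod_cast (by omega : a ≤ 9)
    nlinarith
  have s7 : (2.664 : ℝ) < √7.1 := Real.lt_sqrt_of_sq_lt (by norm_num)
  have s8 : √8 < (2.829 : ℝ) := (Real.sqrt_lt' (by norm_num)).2 (by norm_num)
  have s10 : (3.178 : ℝ) < √10.1 := Real.lt_sqrt_of_sq_lt (by norm_num)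
  have s11 : √11 < (3.317 : ℝ) := (Real.sqrt_lt' (by norm_num)).2 (by norm_num)
  have s12 : √12 < (3.4642 : ℝ) := (Real.sqrt_lt' (by norm_num)).2 (by norm_num)
  have s13 : (3.619 : ℝ) < √13.1 := Real.lt_sqrt_of_sq_lt (by norm_num)
  refine ⟨?_, ?_, ?_, ?_, ?_, ?_⟩ <;> rintro rfl <;> rcases lt_or_ge a 10 with h10 | h10
  · exact small _ (by linarith) h10
  · have u1 := auxR1 7 a x₀ 7.1 h10 hr hr2 (by norm_num)
    have u2 := auxR2 7 a x₀ 7 h10 hr hr2 (by norm_num) (by norm_num)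
    have u3 : (2.64 : ℝ) < √7 := Real.lt_sqrt_of_sq_lt (by norm_num)
    refine auxReal 7 a x₀ b m 5 2.64 2.665 _ h10 hr hm hb hr2 (by norm_num) (by norm_num)
      (by norm_num) (by norm_num) (by norm_num) (by norm_num) (by norm_num) ?_ ?_ ?_ hH
    · linarith
    · push_cast; nlinarith
    · push_cast; nlinarith
  · exact small _ (by linarith) h10
  · have u1 := auxR1 8 a x₀ 8.1 h10 hr hr2 (by norm_num)
    have u2 := auxR2 8 a x₀ 8 h10 hr hr2 (by norm_num) (by norm_num)
    have u3 : √8.1 < (2.85 : ℝ) := (Real.sqrt_lt' (by norm_num)).2 (by norm_num)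
    refine auxReal 8 a x₀ b m 5 2.82 2.85 _ h10 hr hm hb hr2 (by norm_num) (by norm_num)
      (by norm_num) (by norm_num) (by norm_num) (by norm_num) (by norm_num) ?_ ?_ ?_ hH
    · linarith
    · push_cast; nlinarith
    · push_cast; nlinarith
  · exact small _ (by linarith) h10
  · have u1 := auxR1 10 a x₀ 10.1 h10 hr hr2 (by norm_num)
    have u2 := auxR2 10 a x₀ 10 h10 hr hr2 (by norm_num) (by norm_num)
    have u3 : (3.16 : ℝ) < √10 := Real.lt_sqrt_of_sq_lt (by norm_num)
    refine auxReal 10 a x₀ b m 6 3.16 3.18 _ h10 hr hm hb hr2 (by norm_num) (by norm_num)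
      (by norm_num) (by norm_num) (by norm_num) (by norm_num) (by norm_num) ?_ ?_ ?_ hH
    · linarith
    · push_cast; nlinarith
    · push_cast; nlinarith
  · exact small _ (by linarith) h10
  · have u1 := auxR1 11 a x₀ 11.1 h10 hr hr2 (by norm_num)
    have u2 := auxR2 11 a x₀ 11 h10 hr hr2 (by norm_num) (by norm_num)
    have u3 : √11.1 < (3.34 : ℝ) := (Real.sqrt_lt' (by norm_num)).2 (by norm_num)
    refine auxReal 11 a x₀ b m 6 3.31 3.34 _ h10 hr hm hb hr2 (by norm_num) (by norm_num)
      (by norm_num) (by norm_num) (by norm_num) (by norm_num) (by norm_num) ?_ ?_ ?_ hH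
    · linarith
    · push_cast; nlinarith
    · push_cast; nlinarith
  · exact small _ (by linarith) h10
  · have u1 := auxR1 12 a x₀ 12.1 h10 hr hr2 (by norm_num)
    have u2 := auxR2 12 a x₀ 12 h10 hr hr2 (by norm_num) (by norm_num)
    have u3 : √12.1 < (3.48 : ℝ) := (Real.sqrt_lt' (by norm_num)).2 (by norm_num)
    refine auxReal 12 a x₀ b m 6 3.46 3.48 _ h10 hr hm hb hr2 (by norm_num) (by norm_num)
      (by norm_num) (by norm_num) (by norm_num) (by norm_num) (by norm_num) ?_ ?_ ?_ hH
    · linarith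
    · push_cast; nlinarith
    · push_cast; nlinarith
  · exact small _ (by linarith) h10
  · have u1 := auxR1 13 a x₀ 13.1 h10 hr hr2 (by norm_num)
    have u2 := auxR2 13 a x₀ 13 h10 hr hr2 (by norm_num) (by norm_num)
    have u3 : (3.6 : ℝ) < √13 := Real.lt_sqrt_of_sq_lt (by norm_num)
    refine auxReal 13 a x₀ b m 7 3.6 3.62 _ h10 hr hm hb hr2 (by norm_num) (by norm_num)
      (by norm_num) (by norm_num) (by norm_num) (by norm_num) (by norm_num) ?_ ?_ ?_ hH
    · linarith
    · push_cast; nlinarith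
    · push_cast; nlinarith
end

section
/- Let k ∈ {7, 8, 10, 11, 12, 13} and let a be a positive integer with k·a² + 4 = r² a perfect square and b = ka > 10⁵. Let c = (a²b² + 6ab + 9)(a + b ± 2r) ∓ 4r(ab + 3) for one fixed choice of sign (c = c₃^±), and let s, t be the positive integers with ac + 4 = s² and bc + 4 = t². (i) If z₀ = z₁ ∈ {2, −2} and x₀ = y₁ = 2, and v_{2m} = w_{2n} for some integers m and n with n > 2, then m > 0.495·b^{−1/2}·c^{1/2}. (ii) If z₀ = ε·t and z₁ = ε·s for some ε ∈ {+1, −1} and x₀ = y₁ = r, and v_{2m+1} = w_{2n+1} for some integers m and n with n > 2, then m² > 0.0625·b^{−1}·c^{1/2}. -/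
theorem le_of_sq_le_sq_aux (x y : ℤ) (hy : 0 ≤ y) (h : x ^ 2 ≤ y ^ 2) : x ≤ y :=
  le_trans (le_abs_self x) (abs_le_of_sq_le_sq h hy)

theorem aux_growth_s19 (s t : ℤ) (v w : ℕ → ℤ) (hs : 2 ≤ s) (hst : s + 2 ≤ t)
    (hvrec : ∀ i : ℕ, v (i + 2) = s * v (i + 1) - v i)
    (hwrec : ∀ i : ℕ, w (i + 2) = t * w (i + 1) - w i)
    (hv1 : |v 0| ≤ v 1) (hw1 : |w 0| ≤ w 1) (hw1' : 0 < w 1) (hvw : v 1 ≤ w 2) :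
    ∀ j k : ℕ, j + 2 ≤ k → 3 ≤ k → v j < w k := by
  have hv1a := abs_le.mp hv1
  have hw1a := abs_le.mp hw1
  have V : ∀ i : ℕ, 0 ≤ v (i + 1) ∧ v i ≤ v (i + 1) ∧ - v (i + 1) ≤ v i := by
    intro i
    induction i with
    | zero => exact ⟨le_trans (abs_nonneg _) hv1, hv1a.2, hv1a.1⟩
    | succ i ih =>
      have := hvrec i
      have h2 : v (i + 1) ≤ v (i + 2) := by rw [this]; nlinarith [ih.1, ih.2]
      exact ⟨le_trans ih.1 h2, h2, by show - v (i + 2) ≤ _; linarith [ih.1]⟩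
  have W : ∀ i : ℕ, 0 < w (i + 1) ∧ w i ≤ w (i + 1) := by
    intro i
    induction i with
    | zero => exact ⟨hw1', hw1a.2⟩
    | succ i ih =>
      have := hwrec i
      have h2 : w (i + 1) ≤ w (i + 2) := by rw [this]; nlinarith [ih.1, ih.2]
      exact ⟨lt_of_lt_of_le ih.1 h2, h2⟩
  have Ws : ∀ i : ℕ, w (i + 1) < w (i + 2) := by
    intro i
    rw [hwrec i]; nlinarith [W i]
  have VW : ∀ i : ℕ, v (i + 1) ≤ w (i + 2) := by
    intro i
    induction i with
    | zero => exact hvw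
    | succ i ih =>
      have h1 : v (i + 2) ≤ (s + 1) * v (i + 1) := by
        rw [hvrec i]; linarith [(V i).2.2]
      have h2 : w (i + 1 + 2) = t * w (i + 2) - w (i + 1) := hwrec (i + 1)
      have h3 := Ws i
      have h4 : 0 < w (i + 2) := (W (i + 1)).1
      have h5 : (s + 1) * v (i + 1) ≤ (s + 1) * w (i + 2) := by
        apply mul_le_mul_of_nonneg_left ih; linarith
      have h6 : (s + 2) * w (i + 2) ≤ t * w (i + 2) :=
        mul_le_mul_of_nonneg_right hst h4.le
      show v (i + 2) ≤ w (i + 1 + 2)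
      linarith
  have Wm : Monotone w := monotone_nat_of_le_succ (fun i => (W i).2)
  intro j k hjk hk
  rcases j with _ | j
  · calc v 0 ≤ v 1 := hv1a.2
      _ ≤ w 2 := hvw
      _ < w 3 := Ws 1
      _ ≤ w k := Wm hk
  · calc v (j + 1) ≤ w (j + 2) := VW j
      _ < w (j + 3) := Ws (j + 1)
      _ ≤ w k := Wm hjk

/-- congruence for even indices -/
theorem aux_even_s19 (a c s ε : ℤ) (hs2 : a * c + 4 = s ^ 2) (v : ℕ → ℤ)
    (hv0 : v 0 = 2 * ε) (hv1 : v 1 = s * ε + c)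
    (hvrec : ∀ i : ℕ, v (i + 2) = s * v (i + 1) - v i) (m : ℕ) :
    ∃ q : ℤ, v (2 * m) = 2 * ε + c * (ε * a * m ^ 2 + s * m) + c ^ 2 * q := by
  have step : ∀ i, v (i + 4) = (a * c + 2) * v (i + 2) - v i := by
    intro i
    linear_combination hvrec (i + 2) + s * hvrec (i + 1) + hvrec i - v (i + 2) * hs2
  have H : ∀ m : ℕ, (∃ q : ℤ, v (2 * m) = 2 * ε + c * (ε * a * m ^ 2 + s * m) + c ^ 2 * q) ∧
      (∃ q : ℤ, v (2 * (m + 1)) = 2 * ε + c * (ε * a * (m + 1) ^ 2 + s * (m + 1)) + c ^ 2 * q) := by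
    intro m
    induction m with
    | zero =>
      refine ⟨⟨0, by simp [hv0]⟩, ⟨0, ?_⟩⟩
      have := hvrec 0
      simp only [zero_add] at this
      simp only [zero_add, mul_one]
      rw [this, hv1, hv0]; push_cast
      linear_combination -ε * hs2
    | succ m ih =>
      refine ⟨by simpa using ih.2, ?_⟩
      obtain ⟨⟨p, hp⟩, ⟨q, hq⟩⟩ := ih
      have := step (2 * m)
      rw [show 2 * m + 4 = 2 * (m + 1 + 1) by ring, show 2 * m + 2 = 2 * (m + 1) by ring,
        hp, hq] at this
      refine ⟨a * (ε * a * (m + 1) ^ 2 + s * (m + 1)) + (a * c + 2) * q - p, ?_⟩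
      rw [this]; push_cast; ring
  exact (H m).1

/-- congruence for odd indices -/
theorem aux_odd (a c s z x : ℤ) (hs2 : a * c + 4 = s ^ 2) (v : ℕ → ℤ)
    (hv0 : v 0 = z) (hv1 : 2 * v 1 = s * z + c * x)
    (hvrec : ∀ i : ℕ, v (i + 2) = s * v (i + 1) - v i) (m : ℕ) :
    ∃ q : ℤ, 4 * v (2 * m + 1) =
      2 * s * z + c * (a * s * z * (m * (m + 1)) + 2 * x * (2 * m + 1)) + c ^ 2 * q := by
  have step : ∀ i, v (i + 4) = (a * c + 2) * v (i + 2) - v i := by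
    intro i
    linear_combination hvrec (i + 2) + s * hvrec (i + 1) + hvrec i - v (i + 2) * hs2
  have H : ∀ m : ℕ, (∃ q : ℤ, 4 * v (2 * m + 1) =
      2 * s * z + c * (a * s * z * (m * (m + 1)) + 2 * x * (2 * m + 1)) + c ^ 2 * q) ∧
      (∃ q : ℤ, 4 * v (2 * (m + 1) + 1) =
      2 * s * z + c * (a * s * z * ((m + 1) * (m + 2)) + 2 * x * (2 * m + 3)) + c ^ 2 * q) := by
    intro m
    induction m with
    | zero =>
      refine ⟨⟨0, by simp; linear_combination 2 * hv1⟩, ⟨2 * a * x, ?_⟩⟩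
      have h0 := hvrec 0
      have h1 := hvrec 1
      simp only [zero_add] at h0
      simp only [zero_add, mul_one]
      rw [show 2 + 1 = 1 + 2 by rfl, h1, show 1 + 1 = 2 by rfl, h0, hv0]; push_cast
      linear_combination (2 * a * c + 6) * hv1 - 4 * v 1 * hs2
    | succ m ih =>
      refine ⟨?_, ?_⟩
      · obtain ⟨q, hq⟩ := ih.2
        exact ⟨q, by rw [hq]; push_cast; ring⟩
      obtain ⟨⟨p, hp⟩, ⟨q, hq⟩⟩ := ih
      have := step (2 * m + 1)
      rw [show 2 * m + 1 + 4 = 2 * (m + 1 + 1) + 1 by ring,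
        show 2 * m + 1 + 2 = 2 * (m + 1) + 1 by ring] at this
      refine ⟨a * (a * s * z * ((m + 1) * (m + 2)) + 2 * x * (2 * m + 3)) + (a * c + 2) * q - p, ?_⟩
      rw [this]; push_cast
      linear_combination (a * c + 2) * hq - hp
  exact (H m).1

/-- bounds for a signed root -/
theorem aux_rho (a b c ρ : ℤ) (ha : 7000 ≤ a) (h7 : 7 * a ≤ b)
    (h1 : ρ ≤ b) (h2 : -b ≤ ρ) (he : a ≤ b + 2 * ρ)
    (hc : c = (a * b + 3) * ((a * b + 3) * (a + b + 2 * ρ) - 4 * ρ)) :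
    a ^ 3 * b ^ 2 ≤ c ∧ c ≤ 5 * a ^ 2 * b ^ 3 ∧
      a ^ 2 * b ≤ ((a * b + 4) * (a + b + 2 * ρ) - 4 * ρ) - a - b ∧
      ((a * b + 4) * (a + b + 2 * ρ) - 4 * ρ) ≤ 5 * a * b ^ 2 := by
  obtain ⟨e, hee⟩ : ∃ e, e = a + b + 2 * ρ := ⟨_, rfl⟩
  rw [← hee] at hc ⊢
  have e1 : 2 * a ≤ e := by linarith
  have e2 : e ≤ 4 * b := by linarith
  obtain ⟨P, hP⟩ : ∃ P, P = a * b := ⟨_, rfl⟩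
  rw [← hP] at hc ⊢
  have hb : 49000 ≤ b := by linarith
  have hP1 : 7000 * b ≤ P := by rw [hP]; exact mul_le_mul_of_nonneg_right ha (by linarith)
  have hP0 : 0 < P := by linarith
  have k1 : P * (2 * a) ≤ P * e := mul_le_mul_of_nonneg_left e1 hP0.le
  have k2 : P * e ≤ P * (4 * b) := mul_le_mul_of_nonneg_left e2 hP0.le
  have k3 : 7000 * P ≤ a * P := mul_le_mul_of_nonneg_right ha hP0.le
  have k4 : 49000 * P ≤ b * P := mul_le_mul_of_nonneg_right hb hP0.le
  have g1 : a * P ≤ (P + 3) * e - 4 * ρ := by linarith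
  have g2 : (P + 3) * e - 4 * ρ ≤ 4 * b * (P + 4) := by linarith
  refine ⟨?_, ?_, ?_, ?_⟩
  · calc a ^ 3 * b ^ 2 = P * (a * P) := by rw [hP]; ring
      _ ≤ (P + 3) * (a * P) := by
        apply mul_le_mul_of_nonneg_right (by linarith); linarith
      _ ≤ (P + 3) * ((P + 3) * e - 4 * ρ) := mul_le_mul_of_nonneg_left g1 (by linarith)
      _ = c := hc.symm
  · calc c = (P + 3) * ((P + 3) * e - 4 * ρ) := hc
      _ ≤ (P + 3) * (4 * b * (P + 4)) := mul_le_mul_of_nonneg_left g2 (by linarith)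
      _ = b * (4 * ((P + 3) * (P + 4))) := by ring
      _ ≤ b * (5 * P ^ 2) := by
        apply mul_le_mul_of_nonneg_left _ (by linarith)
        nlinarith
      _ = 5 * a ^ 2 * b ^ 3 := by rw [hP]; ring
  · have : a ^ 2 * b = a * P := by rw [hP]; ring
    rw [this]; linarith
  · have : 5 * a * b ^ 2 = 5 * (b * P) := by rw [hP]; ring
    rw [this]; linarith

/-- size facts -/
theorem aux_size (k a r b c s t : ℤ)
    (hk : k ∈ ({7, 8, 10, 11, 12, 13} : Set ℤ)) (ha : 0 < a) (hr : 0 < r)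
    (hr2 : k * a ^ 2 + 4 = r ^ 2) (hb : b = k * a) (hb5 : 10 ^ 5 < b)
    (hc : c = (a ^ 2 * b ^ 2 + 6 * a * b + 9) * (a + b + 2 * r) - 4 * r * (a * b + 3) ∨
          c = (a ^ 2 * b ^ 2 + 6 * a * b + 9) * (a + b - 2 * r) + 4 * r * (a * b + 3))
    (hs : 0 < s) (hs2 : a * c + 4 = s ^ 2) (ht : 0 < t) (ht2 : b * c + 4 = t ^ 2) :
    7000 ≤ a ∧ 7 * a ≤ b ∧ b ≤ 13 * a ∧ r ^ 2 = a * b + 4 ∧ r ≤ b ∧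
    a ^ 3 * b ^ 2 ≤ c ∧ c ≤ 5 * a ^ 2 * b ^ 3 ∧
    ∃ d : ℤ, r * s * t = a * b * c + 2 * c + 2 * (a + b - d) ∧
      a ^ 2 * b ≤ d - a - b ∧ d ≤ 5 * a * b ^ 2 := by
  have hk7 : 7 ≤ k ∧ k ≤ 13 := by
    simp only [Set.mem_insert_iff, Set.mem_singleton_iff] at hk; omega
  have h7 : 7 * a ≤ b := by rw [hb]; nlinarith
  have h13 : b ≤ 13 * a := by rw [hb]; nlinarith
  have ha7 : 7000 ≤ a := by linarith
  have hrr : r ^ 2 = a * b + 4 := by rw [← hr2, hb]; ring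
  have hab : 49000 * a ≤ a * b := by
    rw [mul_comm]; exact mul_le_mul_of_nonneg_left (by linarith) (by linarith)
  have haa : 7 * (a * a) ≤ a * b := by nlinarith
  have hrb : r ≤ b := by
    apply le_of_sq_le_sq_aux _ _ (by linarith)
    nlinarith
  have hra : 2 * a ≤ r := by
    apply le_of_sq_le_sq_aux _ _ (by linarith)
    nlinarith
  have he : a ≤ b - 2 * r := by
    have : 2 * r ≤ b - a := by
      apply le_of_sq_le_sq_aux _ _ (by linarith)
      have : 0 ≤ b * (b - 7 * a) := mul_nonneg (by linarith) (by linarith)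
      nlinarith
    linarith
  have hQ : 0 < a * b := by positivity
  refine ⟨ha7, h7, h13, hrr, hrb, ?_⟩
  have sqeq : ∀ x y : ℤ, 0 < x → 0 < y → x ^ 2 = y ^ 2 → x = y := by
    intro x y hx hy h
    exact (pow_left_inj₀ hx.le hy.le (by norm_num)).mp h
  rcases hc with hc | hc
  · obtain ⟨q1, q2, q3, q4⟩ := aux_rho a b c r ha7 h7 hrb (by linarith) (by linarith)
      (by rw [hc]; ring)
    refine ⟨q1, q2, _, ?_, q3, q4⟩
    have es : s = r * (a * b + 1) + a * (a * b + 3) := by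
      apply sqeq _ _ hs (by positivity)
      rw [← hs2, hc]
      linear_combination (-(a * b + 1) ^ 2) * hrr
    have et : t = r * (a * b + 1) + b * (a * b + 3) := by
      apply sqeq _ _ ht (by positivity)
      rw [← ht2, hc]
      linear_combination (-(a * b + 1) ^ 2) * hrr
    rw [es, et, hc]
    linear_combination (r * (a * b + 1) ^ 2 + (a + b) * (a * b + 1) * (a * b + 3)) * hrr
  · obtain ⟨q1, q2, q3, q4⟩ := aux_rho a b c (-r) ha7 h7 (by linarith) (by linarith) (by linarith)
      (by rw [hc]; ring)
    refine ⟨q1, q2, _, ?_, q3, q4⟩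
    have es : s = r * (a * b + 1) - a * (a * b + 3) := by
      apply sqeq _ _ hs
      · nlinarith
      rw [← hs2, hc]
      linear_combination (-(a * b + 1) ^ 2) * hrr
    have et : t = b * (a * b + 3) - r * (a * b + 1) := by
      apply sqeq _ _ ht
      · nlinarith
      rw [← ht2, hc]
      linear_combination (-(a * b + 1) ^ 2) * hrr
    rw [es, et, hc]
    linear_combination (-r * (a * b + 1) ^ 2 + (a + b) * (a * b + 1) * (a * b + 3)) * hrr

theorem aux_c (a b c s t : ℤ) (ha7 : 7000 ≤ a) (h7 : 7 * a ≤ b)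
    (hc1 : a ^ 3 * b ^ 2 ≤ c) (hs : 0 < s) (hs2 : a * c + 4 = s ^ 2) (ht : 0 < t)
    (ht2 : b * c + 4 = t ^ 2) :
    10 ^ 6 * b ≤ c ∧ a * b * (a * b) * 7000 ≤ c ∧ 4 * t ≤ c ∧ s + 2 ≤ t ∧ 7000 ≤ s := by
  have hb : 49000 ≤ b := by linarith
  have hP : 49000 * 7000 ≤ a * b := by nlinarith
  have hPb : 7000 * b ≤ a * b := mul_le_mul_of_nonneg_right ha7 (by linarith)
  have q : a * b * (a * b) * 7000 ≤ c := by
    calc a * b * (a * b) * 7000 ≤ a * b * (a * b) * a := by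
          apply mul_le_mul_of_nonneg_left ha7; positivity
      _ = a ^ 3 * b ^ 2 := by ring
      _ ≤ c := hc1
  have q2 : 10 ^ 6 * b ≤ c := by nlinarith
  have hc0 : 0 < c := by linarith
  have q3 : 4 * t ≤ c := by
    apply le_of_sq_le_sq_aux _ _ hc0.le
    nlinarith
  have hac : 7000 * c ≤ a * c := mul_le_mul_of_nonneg_right ha7 hc0.le
  have q5 : 7000 ≤ s := by
    apply le_of_sq_le_sq_aux _ _ hs.le
    nlinarith
  refine ⟨q2, q, q3, ?_, q5⟩
  have hbc : 7 * (a * c) ≤ b * c := by nlinarith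
  apply le_of_sq_le_sq_aux _ _ ht.le
  nlinarith

theorem aux_part1 (a b c s t ε m n : ℤ) (ha7 : 7000 ≤ a) (h7 : 7 * a ≤ b)
    (hcb : 10 ^ 6 * b ≤ c) (hs : 0 < s) (hs2 : a * c + 4 = s ^ 2) (ht : 0 < t)
    (ht2 : b * c + 4 = t ^ 2) (hε : ε = 1 ∨ ε = -1) (hn : 2 < n) (hnm : n ≤ m)
    (hdiv : c ∣ (ε * a * m ^ 2 + s * m) - (ε * b * n ^ 2 + t * n))
    (hm : 1000000 * (b * m ^ 2) ≤ 245025 * c) : False := by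
  have hb : 49000 ≤ b := by linarith
  have hc0 : 0 < c := by linarith
  have m0 : 0 < m := by linarith
  have m2 : 0 < m ^ 2 := by positivity
  have hn2 : n ^ 2 ≤ m ^ 2 := by nlinarith
  have bm : 49000 * m ^ 2 ≤ b * m ^ 2 := mul_le_mul_of_nonneg_right hb m2.le
  have am : 7 * (a * m ^ 2) ≤ b * m ^ 2 := by nlinarith
  have am0 : 0 < a * m ^ 2 := by positivity
  have bn : b * n ^ 2 ≤ b * m ^ 2 := mul_le_mul_of_nonneg_left hn2 (by linarith)
  have bn0 : 0 < b * n ^ 2 := by positivity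
  have mc : 4 * m ^ 2 ≤ c := by linarith
  have cc : c * 10 ^ 6 ≤ c * c := mul_le_mul_of_nonneg_left (by linarith) hc0.le
  have bmc : 1000000 * (b * m ^ 2) * c ≤ 245025 * c * c := mul_le_mul_of_nonneg_right hm hc0.le
  have amc : 7 * (a * m ^ 2) * c ≤ b * m ^ 2 * c := mul_le_mul_of_nonneg_right am hc0.le
  have bnc : b * n ^ 2 * c ≤ b * m ^ 2 * c := mul_le_mul_of_nonneg_right bn hc0.le
  have tn : 1000 * (t * n) ≤ 496 * c := by
    apply le_of_sq_le_sq_aux _ _ (by linarith)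
    have : (1000 * (t * n)) ^ 2 = 1000000 * (b * n ^ 2 * c + 4 * n ^ 2) := by
      linear_combination (-1000000 * n ^ 2) * ht2
    rw [this]; nlinarith
  have sm : 1000 * (s * m) ≤ 190 * c := by
    apply le_of_sq_le_sq_aux _ _ (by linarith)
    have : (1000 * (s * m)) ^ 2 = 1000000 * (a * m ^ 2 * c + 4 * m ^ 2) := by
      linear_combination (-1000000 * m ^ 2) * hs2
    rw [this]; nlinarith
  have tn0 : 0 < t * n := by positivity
  have sm0 : 0 < s * m := mul_pos hs (by linarith)
  have hz : (ε * a * m ^ 2 + s * m) - (ε * b * n ^ 2 + t * n) = 0 := by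
    apply Int.eq_zero_of_abs_lt_dvd hdiv
    rw [abs_lt]
    rcases hε with rfl | rfl <;> constructor <;> linarith
  have hε2 : ε * ε = 1 := by rcases hε with rfl | rfl <;> rfl
  have key : (a * m ^ 2 - b * n ^ 2) * (ε * (t * n + s * m) + c) = 4 * (n ^ 2 - m ^ 2) := by
    linear_combination (t * n + s * m) * hz + n ^ 2 * (-ht2) + m ^ 2 * hs2
  have fac : 300 * c ≤ 1000 * (ε * (t * n + s * m) + c) := by
    rcases hε with rfl | rfl <;> linarith
  generalize hF : ε * (t * n + s * m) + c = F at *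
  rcases lt_trichotomy (a * m ^ 2 - b * n ^ 2) 0 with h | h | h
  · have : (a * m ^ 2 - b * n ^ 2) * F ≤ (-1) * F := by
      apply mul_le_mul_of_nonneg_right <;> linarith
    nlinarith
  · rw [h] at key
    have : n ^ 2 = m ^ 2 := by linarith
    rw [this] at h
    nlinarith
  · have : 1 * F ≤ (a * m ^ 2 - b * n ^ 2) * F := by
      apply mul_le_mul_of_nonneg_right <;> linarith
    linarith

theorem aux_part2 (a b c r s t ε m n d : ℤ) (ha7 : 7000 ≤ a) (h7 : 7 * a ≤ b) (h13 : b ≤ 13 * a)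
    (hcP : a * b * (a * b) * 7000 ≤ c) (hc2 : c ≤ 5 * a ^ 2 * b ^ 3)
    (hs2 : a * c + 4 = s ^ 2)
    (ht2 : b * c + 4 = t ^ 2) (hε : ε = 1 ∨ ε = -1) (hn : 2 < n) (hnm : n ≤ m)
    (hd : r * s * t = a * b * c + 2 * c + 2 * (a + b - d))
    (hd1 : a ^ 2 * b ≤ d - a - b) (hd2 : d ≤ 5 * a * b ^ 2)
    (hdiv : c ∣ (ε * s * t * a * (m * (m + 1)) + 2 * r * (2 * m + 1)) -
      (ε * s * t * b * (n * (n + 1)) + 2 * r * (2 * n + 1)))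
    (hm : 256 * (b ^ 2 * m ^ 4) ≤ c) : False := by
  have hb : 49000 ≤ b := by linarith
  have hP : 0 < a * b := by positivity
  have ma : m ≤ a := by
    by_contra hlt
    push Not at hlt
    have : a ^ 4 ≤ m ^ 4 := pow_le_pow_left₀ (by linarith) hlt.le 4
    have h1 : 256 * (b ^ 2 * a ^ 4) ≤ 256 * (b ^ 2 * m ^ 4) := by gcongr
    have h2 : 256 * (b ^ 2 * a ^ 4) ≤ 5 * a ^ 2 * b ^ 3 := by linarith
    have h3 : (a ^ 2 * b ^ 2) * (256 * a ^ 2) ≤ (a ^ 2 * b ^ 2) * (5 * b) := by linarith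
    have h4 := le_of_mul_le_mul_left h3 (by positivity)
    nlinarith
  have hmm : m * (m + 1) ≤ 2 * m ^ 2 := by nlinarith
  have hnn : n * (n + 1) ≤ m * (m + 1) := by nlinarith
  obtain ⟨M, hM⟩ : ∃ M, M = m * (m + 1) := ⟨_, rfl⟩
  obtain ⟨N, hN⟩ : ∃ N, N = n * (n + 1) := ⟨_, rfl⟩
  rw [← hM] at hdiv hmm hnn
  rw [← hN] at hdiv hnn
  have N0 : 0 < N := by rw [hN]; positivity
  have M0 : 0 < M := by linarith
  have X : c ∣ 16 * ε * (a * M - b * N) - 8 * (a + b - d) * (n - m) := by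
    obtain ⟨q, hq⟩ := hdiv
    refine ⟨s * t * q - ε * (a * M - b * N) * (a * b * c + 4 * a + 4 * b)
      + 4 * (n - m) * (a * b + 2), ?_⟩
    linear_combination (s * t) * hq - 4 * (n - m) * (-hd)
      + ε * (a * M - b * N) * (t ^ 2 * hs2 + (a * c + 4) * ht2)
  have bM : b * M ≤ 2 * (b * m ^ 2) := by nlinarith
  have aM : a * M ≤ b * M := mul_le_mul_of_nonneg_right (by linarith) M0.le
  have bN : b * N ≤ b * M := mul_le_mul_of_nonneg_left hnn (by linarith)
  have aM0 : 0 < a * M := by positivity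
  have bN0 : 0 < b * N := by positivity
  have m2a : m ^ 2 ≤ a ^ 2 := pow_le_pow_left₀ (by linarith) ma 2
  have bMa : b * m ^ 2 ≤ a * b * (a * b) := by
    have : b * m ^ 2 ≤ b * a ^ 2 := mul_le_mul_of_nonneg_left m2a (by linarith)
    have h2 : b * a ^ 2 * 1 ≤ b * a ^ 2 * b := mul_le_mul_of_nonneg_left (by linarith) (by positivity)
    linarith
  have d0 : 0 < d - a - b := lt_of_lt_of_le (by positivity) hd1
  have dm : (d - a - b) * (m - n) ≤ 5 * (a * b * (a * b)) := by
    calc (d - a - b) * (m - n) ≤ (5 * a * b ^ 2) * a := by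
          apply mul_le_mul <;> first | linarith | positivity
      _ = _ := by ring
  have dm0 : 0 ≤ (d - a - b) * (m - n) := mul_nonneg d0.le (by linarith)
  have hPP : 0 < a * b * (a * b) := by positivity
  have hz : 16 * ε * (a * M - b * N) - 8 * (a + b - d) * (n - m) = 0 := by
    apply Int.eq_zero_of_abs_lt_dvd X
    rw [abs_lt]
    rcases hε with rfl | rfl <;> constructor <;> linarith
  rcases eq_or_lt_of_le hnm with h | h
  · subst h
    have : M = N := by rw [hM, hN]
    subst this
    have : a * M = b * M := by rcases hε with rfl | rfl <;> linarith
    nlinarith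
  · have h1 : (d - a - b) * 1 ≤ (d - a - b) * (m - n) :=
      mul_le_mul_of_nonneg_left (by linarith) d0.le
    have h2 : d - a - b ≤ 4 * (b * m ^ 2) := by
      rcases hε with rfl | rfl <;> linarith
    have h3 : a ^ 2 * b ≤ 4 * (b * m ^ 2) := by linarith
    have h4 : (a ^ 2 * b) ^ 2 ≤ (4 * (b * m ^ 2)) ^ 2 := pow_le_pow_left₀ (by positivity) h3 2
    have h5 : (a ^ 2 * b ^ 2) * (16 * a ^ 2) ≤ (a ^ 2 * b ^ 2) * (5 * b) := by linarith
    have h6 := le_of_mul_le_mul_left h5 (by positivity)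
    nlinarith

theorem aux_rt (a b c : ℤ) (ha7 : 7000 ≤ a) (h7 : 7 * a ≤ b)
    (hcP : a * b * (a * b) * 7000 ≤ c) (hc0 : 0 < c) : (a * b + 4) * (b * c + 4) ≤ c ^ 2 := by
  have hb0 : 0 < b := by linarith
  have h2 : 7000 * b ≤ a * b := mul_le_mul_of_nonneg_right ha7 hb0.le
  have h3 : 1 ≤ c := hc0
  generalize a * b = P at *
  have h4 : b * c ≤ P * c := mul_le_mul_of_nonneg_right (by linarith) hc0.le
  have h5 : 4 * 1 ≤ P * c := mul_le_mul (by linarith) h3 (by norm_num) (by linarith)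
  have h6 : (P + 4) * (b * c + 4) ≤ (2 * P) * (2 * (P * c)) := by
    apply mul_le_mul
    · linarith
    · linarith
    · positivity
    · linarith
  have h7 : P * P * 7000 * c ≤ c * c := mul_le_mul_of_nonneg_right hcP hc0.le
  have h8 : 0 ≤ P * P * c := mul_nonneg (mul_self_nonneg P) hc0.le
  linarith

set_option maxHeartbeats 1000000 in
theorem lower_bound_m_c3
    (k a r b c s t : ℤ)
    (hk : k ∈ ({7, 8, 10, 11, 12, 13} : Set ℤ)) (ha : 0 < a) (hr : 0 < r)
    (hr2 : k * a ^ 2 + 4 = r ^ 2) (hb : b = k * a) (hb5 : 10 ^ 5 < b)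
    (hc : c = (a ^ 2 * b ^ 2 + 6 * a * b + 9) * (a + b + 2 * r) - 4 * r * (a * b + 3) ∨
          c = (a ^ 2 * b ^ 2 + 6 * a * b + 9) * (a + b - 2 * r) + 4 * r * (a * b + 3))
    (hs : 0 < s) (hs2 : a * c + 4 = s ^ 2) (ht : 0 < t) (ht2 : b * c + 4 = t ^ 2)
    (z₀ x₀ z₁ y₁ : ℤ)
    (v w : ℕ → ℤ)
    (hv0 : v 0 = z₀) (hv1 : 2 * v 1 = s * z₀ + c * x₀)
    (hvrec : ∀ i : ℕ, v (i + 2) = s * v (i + 1) - v i)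
    (hw0 : w 0 = z₁) (hw1 : 2 * w 1 = t * z₁ + c * y₁)
    (hwrec : ∀ i : ℕ, w (i + 2) = t * w (i + 1) - w i) :
    ((z₀ = z₁ ∧ (z₀ = 2 ∨ z₀ = -2) ∧ x₀ = 2 ∧ y₁ = 2) →
      ∀ m n : ℕ, 2 < n → v (2 * m) = w (2 * n) →
        (m : ℝ) > 0.495 * Real.sqrt (c : ℝ) / Real.sqrt (b : ℝ)) ∧
    ((∃ ε : ℤ, (ε = 1 ∨ ε = -1) ∧ z₀ = ε * t ∧ z₁ = ε * s) ∧ x₀ = r ∧ y₁ = r →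
      ∀ m n : ℕ, 2 < n → v (2 * m + 1) = w (2 * n + 1) →
        (m : ℝ) ^ 2 > 0.0625 * Real.sqrt (c : ℝ) / (b : ℝ)) := by
  obtain ⟨ha7, h7, h13, hrr, hrb, hc1, hc2, d, hd, hd1, hd2⟩ :=
    aux_size k a r b c s t hk ha hr hr2 hb hb5 hc hs hs2 ht ht2
  obtain ⟨hcb, hcP, hct, hst, hs7⟩ := aux_c a b c s t ha7 h7 hc1 hs hs2 ht ht2
  have hb0 : 0 < b := by linarith
  have hc0 : 0 < c := by linarith
  have hbR : (0 : ℝ) < b := by exact_mod_cast hb0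
  have hcR : (0 : ℝ) < c := by exact_mod_cast hc0
  constructor
  · rintro ⟨hz, hz0, hx, hy⟩ m n hn hvw
    obtain ⟨ε, hε, hzε⟩ : ∃ ε : ℤ, (ε = 1 ∨ ε = -1) ∧ z₀ = 2 * ε := by
      rcases hz0 with h | h
      · exact ⟨1, Or.inl rfl, by rw [h]; norm_num⟩
      · exact ⟨-1, Or.inr rfl, by rw [h]; norm_num⟩
    have V0 : v 0 = 2 * ε := by rw [hv0, hzε]
    have W0 : w 0 = 2 * ε := by rw [hw0, ← hz, hzε]
    have V1 : v 1 = s * ε + c := by rw [hzε, hx] at hv1; linarith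
    have W1 : w 1 = t * ε + c := by rw [← hz, hzε, hy] at hw1; linarith
    have hnm : n ≤ m := by
      by_contra hlt
      push Not at hlt
      refine absurd hvw (ne_of_lt ?_)
      apply aux_growth_s19 s t v w (by linarith) hst hvrec hwrec _ _ _ _ _ _ (by omega) (by omega)
      · rw [V0, V1, abs_le]; rcases hε with rfl | rfl <;> constructor <;> linarith
      · rw [W0, W1, abs_le]; rcases hε with rfl | rfl <;> constructor <;> linarith
      · rw [W1]; rcases hε with rfl | rfl <;> linarith
      · have := hwrec 0
        simp only [zero_add] at this
        rw [this, W0, W1, V1]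
        have k1 : 7000 * c ≤ t * c := mul_le_mul_of_nonneg_right (by linarith) hc0.le
        have k2 : t * (4 * t) ≤ t * c := mul_le_mul_of_nonneg_left hct ht.le
        have k3 : 0 < t * t := by positivity
        rcases hε with rfl | rfl <;> linarith
    obtain ⟨p, hp⟩ := aux_even_s19 a c s ε hs2 v V0 V1 hvrec m
    obtain ⟨q, hq⟩ := aux_even_s19 b c t ε ht2 w W0 W1 hwrec n
    by_contra hcon
    push Not at hcon
    apply aux_part1 a b c s t ε m n ha7 h7 hcb hs hs2 ht ht2 hε (by exact_mod_cast hn)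
      (by exact_mod_cast hnm)
    · refine ⟨q - p, ?_⟩
      apply mul_left_cancel₀ hc0.ne'
      linear_combination hvw - hp + hq
    · have h1 : (m : ℝ) * √(b : ℝ) ≤ 0.495 * √(c : ℝ) := by
        rwa [le_div_iff₀ (Real.sqrt_pos.mpr hbR)] at hcon
      have h2 := pow_le_pow_left₀ (by positivity) h1 2
      rw [mul_pow, mul_pow, Real.sq_sqrt hbR.le, Real.sq_sqrt hcR.le] at h2
      have h3 : (1000000 : ℝ) * ((b : ℝ) * (m : ℝ) ^ 2) ≤ 245025 * c := by
        norm_num at h2 ⊢; linarith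
      exact_mod_cast h3
  · rintro ⟨⟨ε, hε, hz0, hz1⟩, hx, hy⟩ m n hn hvw
    have V0 : v 0 = ε * t := by rw [hv0, hz0]
    have W0 : w 0 = ε * s := by rw [hw0, hz1]
    have V1 : 2 * v 1 = ε * (s * t) + c * r := by rw [hz0, hx] at hv1; linarith
    have W1 : 2 * w 1 = ε * (s * t) + c * r := by rw [hz1, hy] at hw1; linarith
    have VW : v 1 = w 1 := by linarith
    have d0 : 0 < d - a - b := lt_of_lt_of_le (by positivity) hd1
    have rt : r * t ≤ c := by
      apply le_of_sq_le_sq_aux _ _ hc0.le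
      rw [mul_pow, hrr, ← ht2]
      exact aux_rt a b c ha7 h7 hcP hc0
    have cr : 2 * t ≤ c * r - s * t := by
      have : r * (2 * t) ≤ r * (c * r - s * t) := by
        have : r * (c * r - s * t) = 2 * (c + d - a - b) := by
          linear_combination c * hrr - hd
        linarith
      exact le_of_mul_le_mul_left this hr
    have st0 : 0 < s * t := by positivity
    have v1 : t ≤ v 1 := by
      rcases hε with rfl | rfl <;> linarith
    have hnm : n ≤ m := by
      by_contra hlt
      push Not at hlt
      refine absurd hvw (ne_of_lt ?_)
      apply aux_growth_s19 s t v w (by linarith) hst hvrec hwrec _ _ _ _ _ _ (by omega) (by omega)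
      · rw [V0, abs_le]; rcases hε with rfl | rfl <;> constructor <;> linarith
      · rw [W0, ← VW, abs_le]; rcases hε with rfl | rfl <;> constructor <;> linarith
      · linarith
      · have := hwrec 0
        simp only [zero_add] at this
        rw [this, W0, ← VW]
        have k1 : 7000 * v 1 ≤ t * v 1 := mul_le_mul_of_nonneg_right (by linarith) (by linarith)
        rcases hε with rfl | rfl <;> linarith
    obtain ⟨p, hp⟩ := aux_odd a c s z₀ x₀ hs2 v hv0 hv1 hvrec m
    obtain ⟨q, hq⟩ := aux_odd b c t z₁ y₁ ht2 w hw0 hw1 hwrec n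
    rw [hz0, hx] at hp
    rw [hz1, hy] at hq
    by_contra hcon
    push Not at hcon
    apply aux_part2 a b c r s t ε m n d ha7 h7 h13 hcP hc2 hs2 ht2 hε (by exact_mod_cast hn)
      (by exact_mod_cast hnm) hd hd1 hd2
    · refine ⟨q - p, ?_⟩
      apply mul_left_cancel₀ hc0.ne'
      linear_combination 4 * hvw - hp + hq
    · have h1 : (m : ℝ) ^ 2 * b ≤ 0.0625 * √(c : ℝ) := by
        rwa [le_div_iff₀ hbR] at hcon
      have h2 := pow_le_pow_left₀ (by positivity) h1 2
      rw [mul_pow, mul_pow, Real.sq_sqrt hcR.le] at h2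
      have h3 : (256 : ℝ) * ((b : ℝ) ^ 2 * (m : ℝ) ^ 4) ≤ c := by
        norm_num at h2 ⊢; nlinarith
      exact_mod_cast h3
end
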